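/- arXiv:2003.09247 — 3 statements merged into one kernel-verified Lean document; each statement's English description precedes it below -/
import Mathlib

section
/- For every large enough integer n with 3 dividing n, in the unbiased Waiter-Client game on the edge set of K_n whose winning sets are the triangle factors of K_n, Waiter cannot win within fewer than (13/12)·n rounds; that is, τ_WC(F_{n,K₃-fac}, 1) ≥ (13/12)·n. Equivalently, Client has a strategy guaranteeing that whenever his claimed edges contain a triangle factor of K_n, he has claimed at least (13/12)·n edges. -/
open Finset

/-- `WaiterWins board b win t Cl W` means: starting from the position where Client owns the
elements of `Cl` and Waiter owns the elements of `W`, Waiter can force that within the next `t`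
rounds of the `b`-biased Waiter-Client game on the board `board` a position is reached in which
the predicate `win` holds of (Client's elements, Waiter's elements).  In each round Waiter offers
`b+1` previously unclaimed board elements (or all remaining unclaimed elements, if fewer than
`b+1` remain); Client claims exactly one of them, the rest go to Waiter. -/
def WaiterWins {X : Type*} [DecidableEq X] (board : Finset X) (b : ℕ)
    (win : Finset X → Finset X → Prop) :
    ℕ → Finset X → Finset X → Prop
  | 0, Cl, W => win Cl W
  | (t+1), Cl, W => win Cl W ∨
      ∃ O : Finset X, O.Nonempty ∧ O ⊆ board \ (Cl ∪ W) ∧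
        O.card = min (b + 1) ((board \ (Cl ∪ W)).card) ∧
        ∀ x ∈ O, WaiterWins board b win t (insert x Cl) (W ∪ O.erase x)

/-- `tauWC board F b` : the smallest number of rounds within which Waiter can force Client's
elements to contain some member of the winning family `F`, in the `b`-biased Waiter-Client game
on the board `board`. -/
noncomputable def tauWC {X : Type*} [DecidableEq X] (board : Finset X)
    (F : Set (Finset X)) (b : ℕ) : ℕ :=
  sInf {t | WaiterWins board b (fun Cl _ => ∃ A ∈ F, A ⊆ Cl) t ∅ ∅}

/-- The edge set of the complete graph on `Fin n`. -/
def Kedges (n : ℕ) : Finset (Sym2 (Fin n)) :=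
  Finset.univ.filter (fun e => ¬ e.IsDiag)

/-- The family of edge sets of `H`-factors of `K_n`, where `H` is the graph on `Fin k` with
edge set `E`: vertex-disjoint unions of copies of `H` covering all `n` vertices
(each of the `n/k` copies is given by an embedding `g i`, and the copies partition `Fin n`). -/
def factorFamily (k n : ℕ) (E : Set (Sym2 (Fin k))) : Set (Finset (Sym2 (Fin n))) :=
  {F | ∃ g : Fin (n / k) → Fin k → Fin n,
    (∀ v : Fin n, ∃! p : Fin (n / k) × Fin k, g p.1 p.2 = v) ∧
    (F : Set (Sym2 (Fin n))) = ⋃ i : Fin (n / k), Sym2.map (g i) '' E}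


namespace WCT

def isoV {n : ℕ} (Cl : Finset (Sym2 (Fin n))) (v : Fin n) : Prop :=
  ∃ a b, v ≠ a ∧ v ≠ b ∧ a ≠ b ∧ s(v,a) ∈ Cl ∧ s(v,b) ∈ Cl ∧ s(a,b) ∈ Cl ∧
    (∀ u, s(v,u) ∈ Cl → u = a ∨ u = b) ∧ (∀ u, s(a,u) ∈ Cl → u = v ∨ u = b) ∧
    (∀ u, s(b,u) ∈ Cl → u = v ∨ u = a)

def cen {n : ℕ} (Cl W : Finset (Sym2 (Fin n))) (z : Fin n) : Prop :=
  ∃ x y, s(z,x) ∈ Cl ∧ s(z,y) ∈ Cl ∧ x ≠ y ∧ s(x,y) ∈ W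

open Classical in
noncomputable def A {n : ℕ} (Cl : Finset (Sym2 (Fin n))) : Finset (Fin n) := univ.filter (isoV Cl)
open Classical in
noncomputable def Z {n : ℕ} (Cl W : Finset (Sym2 (Fin n))) : Finset (Fin n) :=
  univ.filter (cen Cl W)

lemma newiso {n : ℕ} (Cl : Finset (Sym2 (Fin n))) (g : Sym2 (Fin n)) (v : Fin n)
    (h1 : isoV (insert g Cl) v) (h2 : ¬ isoV Cl v) :
    ∃ p q c, g = s(p,q) ∧ p ≠ q ∧ c ≠ p ∧ c ≠ q ∧ s(c,p) ∈ insert g Cl ∧ s(c,q) ∈ insert g Cl ∧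
      (∀ u, s(p,u) ∈ insert g Cl → u = q ∨ u = c) ∧ (∀ u, s(q,u) ∈ insert g Cl → u = p ∨ u = c) ∧
      (∀ u, s(c,u) ∈ insert g Cl → u = p ∨ u = q) ∧ (v = p ∨ v = q ∨ v = c) := by
  obtain ⟨a, b, hva, hvb, hab, e1, e2, e3, c1, c2, c3⟩ := h1
  by_cases g1 : g = s(v,a)
  · refine ⟨v, a, b, g1, hva, hvb.symm, hab.symm, ?_, ?_, c1, c2, c3, by simp⟩
    · rwa [Sym2.eq_swap]
    · rwa [Sym2.eq_swap]
  by_cases g2 : g = s(v,b)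
  · refine ⟨v, b, a, g2, hvb, hva.symm, hab, ?_, ?_, fun u hu => (c1 u hu).symm, c3, c2, by simp⟩
    · rwa [Sym2.eq_swap]
    · exact e3
  by_cases g3 : g = s(a,b)
  · refine ⟨a, b, v, g3, hab, hva, hvb, e1, e2, fun u hu => (c2 u hu).symm,
      fun u hu => (c3 u hu).symm, c1, by simp⟩
  exfalso
  apply h2
  rw [Finset.mem_insert] at e1 e2 e3
  refine ⟨a, b, hva, hvb, hab, ?_, ?_, ?_, fun u hu => c1 u (Finset.mem_insert_of_mem hu),
    fun u hu => c2 u (Finset.mem_insert_of_mem hu), fun u hu => c3 u (Finset.mem_insert_of_mem hu)⟩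
  · exact e1.resolve_left (fun h => g1 h.symm)
  · exact e2.resolve_left (fun h => g2 h.symm)
  · exact e3.resolve_left (fun h => g3 h.symm)

lemma A_insert {n : ℕ} (Cl : Finset (Sym2 (Fin n))) (g : Sym2 (Fin n)) :
    (A (insert g Cl)).card ≤ (A Cl).card + 3 := by
  classical
  by_cases h : ∃ v, isoV (insert g Cl) v ∧ ¬ isoV Cl v
  · obtain ⟨v, h1, h2⟩ := h
    obtain ⟨p, q, c, hg, hpq, hcp, hcq, e1, e2, c1, c2, c3, -⟩ := newiso Cl g v h1 h2
    have hsub : A (insert g Cl) ⊆ A Cl ∪ {p, q, c} := by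
      intro w hw
      simp only [A, mem_filter, mem_univ, true_and, mem_union, mem_insert, mem_singleton] at hw ⊢
      by_cases hw2 : isoV Cl w
      · exact Or.inl hw2
      right
      obtain ⟨p', q', c', hg', hpq', hcp', hcq', e1', e2', c1', c2', c3', hw3⟩ :=
        newiso Cl g w hw hw2
      have hs : s(p,q) = s(p',q') := by rw [← hg, ← hg']
      rw [Sym2.eq_iff] at hs
      have hcc : c' = c := by
        rcases hs with ⟨rfl, rfl⟩ | ⟨rfl, rfl⟩
        · rw [Sym2.eq_swap] at e1'
          exact (c1 c' e1').resolve_left hcq'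
        · rw [Sym2.eq_swap] at e1'
          exact (c2 c' e1').resolve_left hcq'
      rcases hs with ⟨rfl, rfl⟩ | ⟨rfl, rfl⟩ <;> subst hcc <;> tauto
    calc _ ≤ _ := card_le_card hsub
      _ ≤ _ := card_union_le _ _
      _ ≤ _ := by gcongr; exact card_le_three
  · push Not at h
    have : A (insert g Cl) ⊆ A Cl := by
      intro w hw
      simp only [A, mem_filter, mem_univ, true_and] at hw ⊢
      exact h w hw
    have := card_le_card this
    omega

lemma Z_mono {n : ℕ} {Cl Cl' W W' : Finset (Sym2 (Fin n))} (h : Cl ⊆ Cl') (h' : W ⊆ W') :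
    Z Cl W ⊆ Z Cl' W' := by
  intro z hz
  simp only [Z, mem_filter, mem_univ, true_and] at hz ⊢
  obtain ⟨x, y, h1, h2, h3, h4⟩ := hz
  exact ⟨x, y, h h1, h h2, h3, h' h4⟩

lemma choice {n : ℕ} (Cl W : Finset (Sym2 (Fin n))) (hI : (A Cl).card ≤ 3 * (Z Cl W).card)
    (e f : Sym2 (Fin n)) (heW : e ∉ W) :
    (A (insert e Cl)).card ≤ 3 * (Z (insert e Cl) (W ∪ {f})).card ∨
    (A (insert f Cl)).card ≤ 3 * (Z (insert f Cl) (W ∪ {e})).card := by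
  classical
  by_cases h : ∃ v, isoV (insert e Cl) v ∧ ¬ isoV Cl v
  · right
    obtain ⟨v, h1, h2⟩ := h
    obtain ⟨p, q, c, hg, hpq, hcp, hcq, e1, e2, c1, c2, c3, -⟩ := newiso Cl e v h1 h2
    have e1' : s(c,p) ∈ Cl := by
      refine (mem_insert.1 e1).resolve_left ?_
      rw [hg, Sym2.eq_iff]; grind
    have e2' : s(c,q) ∈ Cl := by
      refine (mem_insert.1 e2).resolve_left ?_
      rw [hg, Sym2.eq_iff]; grind
    have hc : c ∉ Z Cl W := by
      simp only [Z, mem_filter, mem_univ, true_and]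
      rintro ⟨x, y, h1, h2, h3, h4⟩
      have hx := c3 x (mem_insert_of_mem h1)
      have hy := c3 y (mem_insert_of_mem h2)
      apply heW
      rcases hx with rfl | rfl <;> rcases hy with rfl | rfl
      · exact absurd rfl h3
      · rwa [hg]
      · rwa [hg, Sym2.eq_swap]
      · exact absurd rfl h3
    have hsub : insert c (Z Cl W) ⊆ Z (insert f Cl) (W ∪ {e}) := by
      rw [insert_subset_iff]
      refine ⟨?_, Z_mono (subset_insert _ _) subset_union_left⟩
      simp only [Z, mem_filter, mem_univ, true_and]
      exact ⟨p, q, mem_insert_of_mem e1', mem_insert_of_mem e2', hpq, by simp [hg]⟩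
    have := card_le_card hsub
    rw [card_insert_of_notMem hc] at this
    have := A_insert Cl f
    omega
  · left
    push Not at h
    have : A (insert e Cl) ⊆ A Cl := by
      intro w hw
      simp only [A, mem_filter, mem_univ, true_and] at hw ⊢
      exact h w hw
    have := card_le_card this
    have := card_le_card (Z_mono (Cl := Cl) (W := W) (subset_insert e Cl)
      (subset_union_left (s₂ := {f})))
    omega

lemma final {n : ℕ} (hn : 3 ∣ n) (Cl W : Finset (Sym2 (Fin n)))
    (hI : (A Cl).card ≤ 3 * (Z Cl W).card)
    (hd : Disjoint Cl W) (hK : Cl ⊆ Kedges n)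
    (hwin : ∃ F ∈ factorFamily 3 n (⊤ : SimpleGraph (Fin 3)).edgeSet, F ⊆ Cl) :
    13 * n ≤ 12 * Cl.card := by
  classical
  obtain ⟨F, ⟨g, hg, hF⟩, hFC⟩ := hwin
  have hadj : ∀ i j k, j ≠ k → s(g i j, g i k) ∈ Cl := by
    intro i j k hjk
    apply hFC
    rw [← Finset.mem_coe, hF]
    simp only [Set.mem_iUnion]
    exact ⟨i, s(j,k), by simpa using hjk, rfl⟩
  have hinj : ∀ i j i' j', g i j = g i' j' → i = i' ∧ j = j' := by
    intro i j i' j' h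
    have := (hg (g i j)).unique (y₁ := (i,j)) (y₂ := (i',j')) rfl h.symm
    simpa using this
  set G := SimpleGraph.fromEdgeSet (Cl : Set (Sym2 (Fin n))) with hG
  have hGadj : ∀ a b, G.Adj a b ↔ s(a,b) ∈ Cl ∧ a ≠ b := by
    intro a b; simp [hG]
  have hE : G.edgeFinset.card ≤ Cl.card := by
    apply card_le_card
    intro e he
    rw [SimpleGraph.mem_edgeFinset] at he
    rw [hG, SimpleGraph.edgeSet_fromEdgeSet] at he
    exact he.1
  choose π hπ using fun v => (hg v).exists
  have hnb : ∀ v : Fin n, ∃ a b, (π a).1 = (π v).1 ∧ (π b).1 = (π v).1 ∧ v ≠ a ∧ v ≠ b ∧ a ≠ b ∧ s(v,a) ∈ Cl ∧ s(v,b) ∈ Cl ∧ s(a,b) ∈ Cl := by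
    intro v
    have hp := hπ v
    generalize hpv : π v = pv at hp ⊢
    obtain ⟨i, j⟩ := pv
    have hpi : ∀ k, (π (g i k)).1 = i := fun k => (hinj _ _ _ _ (hπ (g i k))).1
    simp only at hp
    have hne : ∀ j k, j ≠ k → g i j ≠ g i k := fun j k h h' => h (hinj _ _ _ _ h').2
    clear hpv
    subst hp
    have h3 : ∀ j : Fin 3, ∃ k l : Fin 3, j ≠ k ∧ j ≠ l ∧ k ≠ l := by decide
    obtain ⟨k, l, h1, h2, h3⟩ := h3 j
    exact ⟨g i k, g i l, hpi _, hpi _, hne _ _ h1, hne _ _ h2, hne _ _ h3, hadj _ _ _ h1, hadj _ _ _ h2,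
      hadj _ _ _ h3⟩
  set B : Finset (Fin n) := univ.filter (fun v => 3 ≤ G.degree v) with hB
  have hdeg2 : ∀ v, 2 ≤ G.degree v := by
    intro v
    obtain ⟨a, b, -, -, h1, h2, h3, h4, h5, h6⟩ := hnb v
    rw [← SimpleGraph.card_neighborFinset_eq_degree]
    have : ({a, b} : Finset (Fin n)) ⊆ G.neighborFinset v := by
      intro x hx
      simp only [mem_insert, mem_singleton] at hx
      rw [SimpleGraph.mem_neighborFinset, hGadj]
      rcases hx with rfl | rfl <;> tauto
    have := card_le_card this
    rwa [card_pair h3] at this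
  -- vertices outside B have only two neighbours
  have hself : ∀ v, v ∉ B → ∀ a b, a ≠ b → v ≠ a → v ≠ b → s(v,a) ∈ Cl → s(v,b) ∈ Cl →
      ∀ u, s(v,u) ∈ Cl → u = a ∨ u = b := by
    intro v hv a b hab hva hvb ha hb u hu
    have huv : u ≠ v := by
      have := hK hu
      simp only [Kedges, mem_filter, mem_univ, true_and, Sym2.mk_isDiag_iff] at this
      exact fun h => this h.symm
    by_contra hcon
    push Not at hcon
    apply hv
    simp only [hB, mem_filter, mem_univ, true_and]
    rw [← SimpleGraph.card_neighborFinset_eq_degree]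
    have : ({a, b, u} : Finset (Fin n)) ⊆ G.neighborFinset v := by
      intro x hx
      simp only [mem_insert, mem_singleton] at hx
      rw [SimpleGraph.mem_neighborFinset, hGadj]
      rcases hx with rfl | rfl | rfl <;> tauto
    have := card_le_card this
    rwa [card_eq_three.2 ⟨a, b, u, hab, hcon.1.symm, hcon.2.symm, rfl⟩] at this
  have hZB : Z Cl W ⊆ B := by
    intro z hz
    by_contra hzB
    simp only [Z, mem_filter, mem_univ, true_and] at hz
    obtain ⟨x, y, hx, hy, hxy, hW⟩ := hz
    obtain ⟨a, b, -, -, h1, h2, h3, h4, h5, h6⟩ := hnb z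
    have hx' := hself z hzB a b h3 h1 h2 h4 h5 x hx
    have hy' := hself z hzB a b h3 h1 h2 h4 h5 y hy
    have : s(x,y) ∈ Cl := by
      rcases hx' with rfl | rfl <;> rcases hy' with rfl | rfl
      · exact absurd rfl hxy
      · exact h6
      · rwa [Sym2.eq_swap]
      · exact absurd rfl hxy
    exact Finset.disjoint_left.1 hd this hW
  have hcov : (univ : Finset (Fin n)) ⊆ A Cl ∪ B.biUnion (fun z => univ.image (g (π z).1)) := by
    intro v _
    rw [mem_union, mem_biUnion]
    obtain ⟨a, b, p1, p2, h1, h2, h3, h4, h5, h6⟩ := hnb v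
    by_cases hv : v ∈ B
    · exact Or.inr ⟨v, hv, mem_image.2 ⟨(π v).2, mem_univ _, hπ v⟩⟩
    by_cases ha : a ∈ B
    · exact Or.inr ⟨a, ha, mem_image.2 ⟨(π v).2, mem_univ _, by rw [p1]; exact hπ v⟩⟩
    by_cases hb : b ∈ B
    · exact Or.inr ⟨b, hb, mem_image.2 ⟨(π v).2, mem_univ _, by rw [p2]; exact hπ v⟩⟩
    left
    simp only [A, mem_filter, mem_univ, true_and]
    have h4' := h4
    have h5' := h5
    have h6' := h6
    rw [Sym2.eq_swap] at h4' h5' h6'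
    exact ⟨a, b, h1, h2, h3, h4, h5, h6, hself v hv a b h3 h1 h2 h4 h5,
      hself a ha v b h2 h1.symm h3 h4' h6, hself b hb v a h1 h2.symm h3.symm h5' h6'⟩
  have hc1 := (card_le_card hcov).trans (card_union_le _ _)
  have hc2 : (B.biUnion (fun z => univ.image (g (π z).1))).card ≤ B.card * 3 := by
    apply card_biUnion_le_card_mul
    intro z _
    exact card_image_le.trans (by simp)
  have hc3 := card_le_card hZB
  have hsum := G.sum_degrees_eq_twice_card_edges
  have hsum2 : ∑ v : Fin n, (2 + if v ∈ B then 1 else 0) ≤ ∑ v, G.degree v := by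
    apply sum_le_sum
    intro v _
    split_ifs with h
    · simpa [hB] using h
    · exact hdeg2 v
  rw [sum_add_distrib] at hsum2
  simp only [sum_const, card_univ, Fintype.card_fin, smul_eq_mul, sum_ite_mem, univ_inter,
    mul_one] at hsum2 hc1
  have hE2 : 2 * n + B.card ≤ 2 * Cl.card := by
    calc 2 * n + B.card ≤ ∑ v, G.degree v := by omega
      _ = _ := hsum
      _ ≤ 2 * Cl.card := by
        refine Nat.mul_le_mul_left _ ?_
        convert hE
  omega

lemma card_Kedges (n : ℕ) : (Kedges n).card = n.choose 2 := by
  have h := SimpleGraph.card_edgeFinset_top_eq_card_choose_two (V := Fin n)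
  rw [Fintype.card_fin] at h
  rw [← h]
  congr 1
  ext e
  induction e with | _ a b => simp [Kedges]

lemma lower {n : ℕ} (hn : 3 ∣ n) (hn' : 100 ≤ n) (t : ℕ) : ∀ (Cl W : Finset (Sym2 (Fin n))),
    (A Cl).card ≤ 3 * (Z Cl W).card → Disjoint Cl W → Cl ⊆ Kedges n → W.card ≤ Cl.card →
    WaiterWins (Kedges n) 1
      (fun Cl _ => ∃ F ∈ factorFamily 3 n (⊤ : SimpleGraph (Fin 3)).edgeSet, F ⊆ Cl) t Cl W →
    13 * n ≤ 12 * (Cl.card + t) := by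
  induction t with
  | zero =>
    intro Cl W hI hd hK _ hw
    exact final hn Cl W hI hd hK hw
  | succ t ih =>
    intro Cl W hI hd hK hWC hw
    rcases hw with hw | ⟨O, hO, hOs, hOc, hw⟩
    · have := final hn Cl W hI hd hK hw
      omega
    by_cases hone : (Kedges n \ (Cl ∪ W)).card ≤ 1
    · have h1 : (Kedges n).card ≤ (Kedges n \ (Cl ∪ W)).card + (Cl ∪ W).card := by
        have := le_card_sdiff (Cl ∪ W) (Kedges n)
        omega
      have h2 := card_union_le Cl W
      rw [card_Kedges] at h1
      have h3 : n * 40 ≤ n.choose 2 := by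
        rw [Nat.choose_two_right, Nat.le_div_iff_mul_le (by norm_num)]
        have : 80 ≤ n - 1 := by omega
        calc n * 40 * 2 = n * 80 := by ring
          _ ≤ _ := Nat.mul_le_mul_left _ this
      omega
    have hc2 : O.card = 2 := by omega
    obtain ⟨e, f, hef, rfl⟩ := card_eq_two.1 hc2
    have he := hOs (mem_insert_self e {f})
    have hf := hOs (mem_insert_of_mem (a := f) (b := e) (mem_singleton_self f))
    simp only [mem_sdiff, mem_union, not_or] at he hf
    have hx1 : ({e, f} : Finset (Sym2 (Fin n))).erase e = {f} := by
      rw [erase_insert (by simpa using hef)]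
    have hx2 : ({e, f} : Finset (Sym2 (Fin n))).erase f = {e} := by
      rw [pair_comm, erase_insert (by simpa using hef.symm)]
    have key : ∀ e f : Sym2 (Fin n), e ≠ f → e ∈ Kedges n → e ∉ Cl → e ∉ W → f ∉ Cl → 
        (A (insert e Cl)).card ≤ 3 * (Z (insert e Cl) (W ∪ {f})).card →
        WaiterWins (Kedges n) 1
          (fun Cl _ => ∃ F ∈ factorFamily 3 n (⊤ : SimpleGraph (Fin 3)).edgeSet, F ⊆ Cl) t
          (insert e Cl) (W ∪ {f}) → 13 * n ≤ 12 * (Cl.card + (t + 1)) := by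
      intro e f hef heK heC heW hfC hA hw
      have hcc := card_insert_of_notMem heC
      have := ih (insert e Cl) (W ∪ {f}) hA ?_ ?_ ?_ hw
      · omega
      · rw [Finset.disjoint_left] at hd ⊢
        intro x hx hx2
        simp only [mem_insert, mem_union, mem_singleton] at hx hx2
        rcases hx with rfl | hx <;> rcases hx2 with hx2 | hx2
        · exact heW hx2
        · exact hef hx2
        · exact hd hx hx2
        · exact hfC (hx2 ▸ hx)
      · rw [insert_subset_iff]; exact ⟨heK, hK⟩
      · have := card_union_le W {f}
        rw [card_singleton] at this
        omega
    rcases choice Cl W hI e f he.2.2 with h | h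
    · have hw' := hw e (by simp)
      rw [hx1] at hw'
      exact key e f hef he.1 he.2.1 he.2.2 hf.2.1 h hw'
    · have hw' := hw f (by simp)
      rw [hx2] at hw'
      exact key f e hef.symm hf.1 hf.2.1 hf.2.2 he.2.1 h hw'

end WCT


namespace WCT

inductive Fc {n : ℕ} (P : Finset (Sym2 (Fin n)) → Finset (Sym2 (Fin n)) → Prop) :
    Finset (Sym2 (Fin n)) → Finset (Sym2 (Fin n)) → Prop
  | now (Cl W) : P Cl W → Fc P Cl W
  | step (Cl W) (e f : Sym2 (Fin n)) : e ≠ f → e ∈ Kedges n → f ∈ Kedges n →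
      e ∉ Cl ∪ W → f ∉ Cl ∪ W → Fc P (insert e Cl) (W ∪ {f}) → Fc P (insert f Cl) (W ∪ {e}) →
      Fc P Cl W

lemma Fc.bind {n : ℕ} {P Q : Finset (Sym2 (Fin n)) → Finset (Sym2 (Fin n)) → Prop}
    {Cl W : Finset (Sym2 (Fin n))}
    (h : Fc Q Cl W) (h2 : ∀ Cl W, Q Cl W → Fc P Cl W) : Fc P Cl W := by
  induction h with
  | now Cl W h => exact h2 _ _ h
  | step Cl W e f hef he hf he' hf' _ _ ih1 ih2 => exact Fc.step Cl W e f hef he hf he' hf' ih1 ih2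

lemma Fc.mono {n : ℕ} {P Q : Finset (Sym2 (Fin n)) → Finset (Sym2 (Fin n)) → Prop}
    {Cl W : Finset (Sym2 (Fin n))}
    (h : Fc Q Cl W) (h2 : ∀ Cl W, Q Cl W → P Cl W) : Fc P Cl W :=
  h.bind (fun Cl W h => Fc.now _ _ (h2 Cl W h))

lemma ww_mono {n : ℕ} {P : Finset (Sym2 (Fin n)) → Finset (Sym2 (Fin n)) → Prop} {t : ℕ} :
    ∀ {Cl W}, WaiterWins (Kedges n) 1 P t Cl W → WaiterWins (Kedges n) 1 P (t+1) Cl W := by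
  induction t with
  | zero => intro Cl W h; exact Or.inl h
  | succ t ih =>
    intro Cl W h
    rcases h with h | ⟨O, h1, h2, h3, h4⟩
    · exact Or.inl h
    · exact Or.inr ⟨O, h1, h2, h3, fun x hx => ih (h4 x hx)⟩

lemma ww_mono' {n : ℕ} {P : Finset (Sym2 (Fin n)) → Finset (Sym2 (Fin n)) → Prop} {t t' : ℕ}
    (htt : t ≤ t') {Cl W} (h : WaiterWins (Kedges n) 1 P t Cl W) :
    WaiterWins (Kedges n) 1 P t' Cl W := by
  induction htt with
  | refl => exact h
  | step _ ih => exact ww_mono ih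

lemma Fc.ww {n : ℕ} {P : Finset (Sym2 (Fin n)) → Finset (Sym2 (Fin n)) → Prop}
    {Cl W : Finset (Sym2 (Fin n))}
    (h : Fc P Cl W) : ∃ t, WaiterWins (Kedges n) 1 P t Cl W := by
  induction h with
  | now Cl W h => exact ⟨0, h⟩
  | step Cl W e f hef he hf he' hf' _ _ ih1 ih2 =>
    obtain ⟨t1, h1⟩ := ih1
    obtain ⟨t2, h2⟩ := ih2
    refine ⟨max t1 t2 + 1, Or.inr ⟨{e, f}, by simp, ?_, ?_, ?_⟩⟩
    · intro x hx
      simp only [mem_insert, mem_singleton] at hx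
      rw [mem_sdiff]
      rcases hx with rfl | rfl
      · exact ⟨he, he'⟩
      · exact ⟨hf, hf'⟩
    · have hs : ({e, f} : Finset (Sym2 (Fin n))) ⊆ Kedges n \ (Cl ∪ W) := by
        intro x hx
        simp only [mem_insert, mem_singleton] at hx
        rw [mem_sdiff]
        rcases hx with rfl | rfl
        · exact ⟨he, he'⟩
        · exact ⟨hf, hf'⟩
      have := card_le_card hs
      rw [card_pair hef] at this ⊢
      omega
    · intro x hx
      simp only [mem_insert, mem_singleton] at hx
      rcases hx with rfl | rfl
      · rw [erase_insert (by simpa using hef)]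
        exact ww_mono' (le_max_left _ _) h1
      · rw [pair_comm, erase_insert (by simpa using hef.symm)]
        exact ww_mono' (le_max_right _ _) h2

lemma memK {n : ℕ} {a b : Fin n} (h : a ≠ b) : s(a,b) ∈ Kedges n := by
  simpa [Kedges] using h

lemma star {n : ℕ} (v : Fin n) (m : ℕ) : ∀ (U : Finset (Fin n)) (Cl W : Finset (Sym2 (Fin n))),
    2 * m ≤ U.card → v ∉ U → (∀ u ∈ U, s(v,u) ∉ Cl ∪ W) →
    Fc (fun Cl' W' => Cl ⊆ Cl' ∧ (∀ e ∈ Cl' ∪ W', e ∈ Cl ∪ W ∨ ∃ u ∈ U, e = s(v,u)) ∧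
      ∃ U' ⊆ U, U'.card = m ∧ ∀ u ∈ U', s(v,u) ∈ Cl') Cl W := by
  induction m with
  | zero =>
    intro U Cl W _ _ _
    exact Fc.now _ _ ⟨Subset.refl _, fun e he => Or.inl he, ∅, by simp, by simp, by simp⟩
  | succ m ih =>
    intro U Cl W hU hv hfree
    obtain ⟨a, ha, b, hb, hab⟩ := one_lt_card.1 (by omega : 1 < U.card)
    have hva : v ≠ a := fun h => hv (h ▸ ha)
    have hvb : v ≠ b := fun h => hv (h ▸ hb)
    have hne : s(v,a) ≠ s(v,b) := by
      intro h
      rw [Sym2.eq_iff] at h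
      rcases h with h | h
      · exact hab h.2
      · exact hvb h.1
    have key : ∀ a b, a ∈ U → b ∈ U → a ≠ b → 
      Fc (fun Cl' W' => Cl ⊆ Cl' ∧ (∀ e ∈ Cl' ∪ W', e ∈ Cl ∪ W ∨ ∃ u ∈ U, e = s(v,u)) ∧
      ∃ U' ⊆ U, U'.card = m + 1 ∧ ∀ u ∈ U', s(v,u) ∈ Cl') (insert s(v,a) Cl) (W ∪ {s(v,b)}) := by
      intro a b ha hb hab
      have hva : v ≠ a := fun h => hv (h ▸ ha)
      have hvb : v ≠ b := fun h => hv (h ▸ hb)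
      have hcard : ((U.erase a).erase b).card = U.card - 1 - 1 := by
        rw [card_erase_of_mem (by simp [hb, hab.symm]), card_erase_of_mem ha]
      refine (ih ((U.erase a).erase b) (insert s(v,a) Cl) (W ∪ {s(v,b)}) (by omega)
        (by simp [hv]) ?_).mono ?_
      · intro u hu
        simp only [mem_erase] at hu
        have := hfree u hu.2.2
        simp only [mem_union, mem_insert, mem_singleton, not_or] at this ⊢
        refine ⟨⟨?_, this.1⟩, this.2, ?_⟩
        · intro h
          rw [Sym2.eq_iff] at h
          rcases h with h | h
          · exact hu.2.1 h.2
          · exact hva h.1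
        · intro h
          rw [Sym2.eq_iff] at h
          rcases h with h | h
          · exact hu.1 h.2
          · exact hvb h.1
      · rintro Cl' W' ⟨h1, h2, U', h3, h4, h5⟩
        refine ⟨(subset_insert _ _).trans h1, ?_, insert a U', ?_, ?_, ?_⟩
        · intro e he
          rcases h2 e he with h | ⟨u, hu, h⟩
          · simp only [mem_union, mem_insert, mem_singleton] at h ⊢
            rcases h with (h | h) | (h | h)
            · exact Or.inr ⟨a, ha, h⟩
            · exact Or.inl (Or.inl h)
            · exact Or.inl (Or.inr h)
            · exact Or.inr ⟨b, hb, h⟩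
          · exact Or.inr ⟨u, (erase_subset _ _ (erase_subset _ _ hu)), h⟩
        · rw [insert_subset_iff]
          exact ⟨ha, h3.trans ((erase_subset _ _).trans (erase_subset _ _))⟩
        · rw [card_insert_of_notMem, h4]
          intro h
          have := h3 h
          simp at this
        · intro u hu
          rw [mem_insert] at hu
          rcases hu with rfl | hu
          · exact h1 (mem_insert_self _ _)
          · exact h5 u hu
    exact Fc.step Cl W s(v,a) s(v,b) hne (memK hva) (memK hvb) (hfree a ha) (hfree b hb)
      (key a b ha hb hab) (key b a hb ha hab.symm)

lemma clique {n : ℕ} (k : ℕ) : ∀ (M : Finset (Fin n)) (Cl W : Finset (Sym2 (Fin n))),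
    2 ^ k ≤ M.card + 1 → (∀ u ∈ M, ∀ v ∈ M, u ≠ v → s(u,v) ∉ Cl ∪ W) →
    Fc (fun Cl' W' => Cl ⊆ Cl' ∧
      (∀ e ∈ Cl' ∪ W', e ∈ Cl ∪ W ∨ ∃ u ∈ M, ∃ v ∈ M, e = s(u,v)) ∧
      ∃ Q ⊆ M, Q.card = k ∧ ∀ u ∈ Q, ∀ v ∈ Q, u ≠ v → s(u,v) ∈ Cl') Cl W := by
  induction k with
  | zero =>
    intro M Cl W _ _
    exact Fc.now _ _ ⟨Subset.refl _, fun e he => Or.inl he, ∅, by simp, by simp, by simp⟩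
  | succ k ih =>
    intro M Cl W hM hfree
    have hpos : 0 < 2 ^ k := by positivity
    rw [pow_succ] at hM
    obtain ⟨v, hv⟩ : M.Nonempty := by
      rw [← card_pos]; omega
    have hc := card_erase_of_mem hv
    refine (star v (2 ^ k - 1) (M.erase v) Cl W (by omega) (by simp) ?_).bind ?_
    · intro u hu
      rw [mem_erase] at hu
      exact hfree v hv u hu.2 hu.1.symm
    · rintro Cl1 W1 ⟨h1, h2, U, h3, h4, h5⟩
      refine (ih U Cl1 W1 (by omega) ?_).mono ?_
      · intro a ha b hb hab hmem
        have ha' := mem_erase.1 (h3 ha)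
        have hb' := mem_erase.1 (h3 hb)
        rcases h2 _ hmem with h | ⟨u, hu, h⟩
        · exact hfree a ha'.2 b hb'.2 hab h
        · rw [Sym2.eq_iff] at h
          rcases h with h | h
          · exact ha'.1 h.1
          · exact hb'.1 h.2
      · rintro Cl2 W2 ⟨g1, g2, Q, g3, g4, g5⟩
        refine ⟨h1.trans g1, ?_, insert v Q, ?_, ?_, ?_⟩
        · intro e he
          rcases g2 e he with h | ⟨a, ha, b, hb, h⟩
          · rcases h2 e h with h | ⟨u, hu, h⟩
            · exact Or.inl h
            · exact Or.inr ⟨v, hv, u, (mem_erase.1 hu).2, h⟩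
          · exact Or.inr ⟨a, (mem_erase.1 (h3 ha)).2, b, (mem_erase.1 (h3 hb)).2, h⟩
        · rw [insert_subset_iff]
          exact ⟨hv, g3.trans (h3.trans (erase_subset _ _))⟩
        · rw [card_insert_of_notMem, g4]
          intro h
          exact (mem_erase.1 (h3 (g3 h))).1 rfl
        · intro a ha b hb hab
          rw [mem_insert] at ha hb
          rcases ha with rfl | ha <;> rcases hb with rfl | hb
          · exact absurd rfl hab
          · exact g1 (h5 b (g3 hb))
          · rw [Sym2.eq_swap]; exact g1 (h5 a (g3 ha))
          · exact g5 a ha b hb hab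

lemma absorb {n : ℕ} (φ : Fin n → Finset (Fin n)) (L : Finset (Fin n)) :
    ∀ (Cl W : Finset (Sym2 (Fin n))),
    (∀ v ∈ L, 4 ≤ (φ v).card) → (∀ v ∈ L, ∀ w ∈ L, v ∉ φ w) →
    (∀ v ∈ L, ∀ u ∈ φ v, s(v,u) ∉ Cl ∪ W) →
    Fc (fun Cl' _ => Cl ⊆ Cl' ∧ ∀ v ∈ L, ∃ a ∈ φ v, ∃ b ∈ φ v, a ≠ b ∧ s(v,a) ∈ Cl' ∧ s(v,b) ∈ Cl')
      Cl W := by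
  induction L using Finset.induction_on with
  | empty => 
    intro Cl W _ _ _
    exact Fc.now _ _ ⟨Subset.refl _, by simp⟩
  | insert v L hvL ih =>
    intro Cl W h1 h2 h3
    have hv : v ∈ insert v L := mem_insert_self _ _
    refine (star v 2 (φ v) Cl W (h1 v hv) (h2 v hv v hv) (h3 v hv)).bind ?_
    rintro Cl1 W1 ⟨g1, g2, U, g3, g4, g5⟩
    refine (ih Cl1 W1 (fun w hw => h1 w (mem_insert_of_mem hw))
      (fun w hw x hx => h2 w (mem_insert_of_mem hw) x (mem_insert_of_mem hx)) ?_).mono ?_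
    · intro w hw u hu hmem
      rcases g2 _ hmem with h | ⟨x, hx, h⟩
      · exact h3 w (mem_insert_of_mem hw) u hu h
      · rw [Sym2.eq_iff] at h
        rcases h with ⟨rfl, h⟩ | ⟨rfl, rfl⟩
        · exact hvL hw
        · exact h2 _ (mem_insert_of_mem hw) _ hv hx
    · rintro Cl2 W2 ⟨k1, k2⟩
      refine ⟨g1.trans k1, ?_⟩
      intro w hw
      rw [mem_insert] at hw
      rcases hw with rfl | hw
      · obtain ⟨a, b, hab, rfl⟩ := card_eq_two.1 g4
        exact ⟨a, g3 (by simp), b, g3 (by simp), hab, k1 (g5 a (by simp)), k1 (g5 b (by simp))⟩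
      · exact k2 w hw

/-- `S` is tiled by triangles of `Cl`. -/
def Tiled {n : ℕ} (Cl : Finset (Sym2 (Fin n))) (S : Finset (Fin n)) : Prop :=
  ∃ (k : ℕ) (g : Fin k × Fin 3 → Fin n), Function.Injective g ∧
    (∀ v, v ∈ S ↔ ∃ p, g p = v) ∧ ∀ i j j', j ≠ j' → s(g (i,j), g (i,j')) ∈ Cl

lemma Tiled.empty {n : ℕ} (Cl : Finset (Sym2 (Fin n))) : Tiled Cl ∅ :=
  ⟨0, fun p => p.1.elim0, fun p => p.1.elim0, by simp, fun i => i.elim0⟩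

lemma Tiled.tri {n : ℕ} {Cl : Finset (Sym2 (Fin n))} {S : Finset (Fin n)} (h : S.card = 3)
    (hC : ∀ u ∈ S, ∀ v ∈ S, u ≠ v → s(u,v) ∈ Cl) : Tiled Cl S := by
  let e := S.equivFinOfCardEq h
  have hinj : ∀ j j', (e.symm j : Fin n) = e.symm j' → j = j' := by
    intro j j' hj
    exact e.symm.injective (Subtype.ext hj)
  refine ⟨1, fun p => (e.symm p.2 : Fin n), ?_, ?_, ?_⟩
  · rintro ⟨i, j⟩ ⟨i', j'⟩ hj
    have := hinj _ _ hj
    subst this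
    simp [Subsingleton.elim i i']
  · intro v
    constructor
    · intro hv
      exact ⟨(0, e ⟨v, hv⟩), by simp⟩
    · rintro ⟨p, rfl⟩
      exact (e.symm p.2).2
  · intro i j j' hjj
    exact hC _ (e.symm j).2 _ (e.symm j').2 (fun h => hjj (hinj _ _ h))

lemma Tiled.union {n : ℕ} {Cl : Finset (Sym2 (Fin n))} {S T : Finset (Fin n)} (hS : Tiled Cl S)
    (hT : Tiled Cl T) (hd : Disjoint S T) : Tiled Cl (S ∪ T) := by
  obtain ⟨k, g, g1, g2, g3⟩ := hS
  obtain ⟨l, h, h1, h2, h3⟩ := hT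
  rw [Finset.disjoint_left] at hd
  have hne : ∀ p q, g p ≠ h q := by
    intro p q e
    exact hd ((g2 _).2 ⟨p, rfl⟩) ((h2 _).2 ⟨q, e.symm⟩)
  let f : (Fin k ⊕ Fin l) × Fin 3 → Fin n := fun p => Sum.elim (fun i => g (i, p.2)) (fun i => h (i, p.2)) p.1
  have hf : Function.Injective f := by
    rintro ⟨i | i, j⟩ ⟨i' | i', j'⟩ hh
    · have := g1 hh; simp_all
    · exact absurd hh (hne _ _)
    · exact absurd hh.symm (hne _ _)
    · have := h1 hh; simp_all
  refine ⟨k + l, fun p => f (finSumFinEquiv.symm p.1, p.2), ?_, ?_, ?_⟩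
  · rintro ⟨i, j⟩ ⟨i', j'⟩ hh
    have := hf hh
    simpa using this
  · intro v
    rw [mem_union, g2, h2]
    constructor
    · rintro (⟨⟨i, j⟩, rfl⟩ | ⟨⟨i, j⟩, rfl⟩)
      · exact ⟨(finSumFinEquiv (Sum.inl i), j), by simp [f]⟩
      · exact ⟨(finSumFinEquiv (Sum.inr i), j), by simp [f]⟩
    · rintro ⟨⟨i, j⟩, rfl⟩
      obtain ⟨i, rfl⟩ := finSumFinEquiv.surjective i
      rcases i with i | i
      · exact Or.inl ⟨(i, j), by simp [f]⟩
      · exact Or.inr ⟨(i, j), by simp [f]⟩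
  · intro i j j' hjj
    obtain ⟨i, rfl⟩ := finSumFinEquiv.surjective i
    simp only [Equiv.symm_apply_apply]
    rcases i with i | i
    · exact g3 i j j' hjj
    · exact h3 i j j' hjj

lemma Tiled.biUnion {n : ℕ} {Cl : Finset (Sym2 (Fin n))} {ι : Type} [DecidableEq ι] (I : Finset ι) 
    (S : ι → Finset (Fin n)) (hS : ∀ i ∈ I, Tiled Cl (S i))
    (hd : ∀ i ∈ I, ∀ j ∈ I, i ≠ j → Disjoint (S i) (S j)) : Tiled Cl (I.biUnion S) := by
  induction I using Finset.induction_on with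
  | empty => exact Tiled.empty Cl
  | insert i I hi ih =>
    rw [biUnion_insert]
    refine (hS i (by simp)).union (ih (fun j hj => hS j (mem_insert_of_mem hj))
      (fun j hj k hk => hd j (mem_insert_of_mem hj) k (mem_insert_of_mem hk))) ?_
    rw [disjoint_biUnion_right]
    intro j hj
    exact hd i (by simp) j (mem_insert_of_mem hj) (fun h => hi (h ▸ hj))

lemma Tiled.win {n : ℕ} {Cl : Finset (Sym2 (Fin n))} (h : Tiled Cl univ) :
    ∃ F ∈ factorFamily 3 n (⊤ : SimpleGraph (Fin 3)).edgeSet, F ⊆ Cl := by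
  classical
  obtain ⟨k, g, g1, g2, g3⟩ := h
  have hk : k = n / 3 := by
    have hb : Function.Bijective g := ⟨g1, fun v => (g2 v).1 (mem_univ _)⟩
    have := Fintype.card_of_bijective hb
    simp at this
    omega
  subst hk
  refine ⟨univ.filter (fun e => e ∈ ⋃ i : Fin (n / 3),
    Sym2.map (fun j => g (i,j)) '' (⊤ : SimpleGraph (Fin 3)).edgeSet),
    ⟨fun i j => g (i,j), ?_, by
      rw [coe_filter]; ext; simp only [mem_univ, true_and, Set.mem_ofPred_eq]⟩, ?_⟩
  · intro v
    obtain ⟨p, hp⟩ := (g2 v).1 (mem_univ _)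
    exact ⟨p, hp, fun q hq => g1 (hq.trans hp.symm)⟩
  · intro e he
    simp only [mem_filter, mem_univ, true_and, Set.mem_iUnion] at he
    obtain ⟨i, e', he', rfl⟩ := he
    induction e' with | _ a b =>
    exact g3 i a b (by simpa using he')

end WCT


namespace WCT

def nb {n : ℕ} (T : Finset (Sym2 (Fin n))) (v : Fin n) : Finset (Fin n) :=
  univ.filter (fun u => s(v,u) ∈ T)

lemma mem_nb {n : ℕ} {T : Finset (Sym2 (Fin n))} {v u : Fin n} : u ∈ nb T v ↔ s(v,u) ∈ T := by
  simp [nb]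

lemma indep {n : ℕ} (T : Finset (Sym2 (Fin n))) (D m : ℕ) : ∀ (A : Finset (Fin n)),
    (∀ v ∈ A, (nb T v).card ≤ D) → m * (D + 1) ≤ A.card →
    ∃ M ⊆ A, M.card = m ∧ ∀ u ∈ M, ∀ v ∈ M, u ≠ v → s(u,v) ∉ T := by
  induction m with
  | zero => intro A _ _; exact ⟨∅, by simp, by simp, by simp⟩
  | succ m ih =>
    intro A hA hc
    rw [add_mul] at hc
    obtain ⟨v, hv⟩ : A.Nonempty := by
      rw [← card_pos]; omega
    have h1 := card_erase_of_mem hv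
    have h2 := le_card_sdiff (nb T v) (A.erase v)
    have h3 := hA v hv
    obtain ⟨M, hM, hMc, hMi⟩ := ih (A.erase v \ nb T v)
      (fun w hw => hA w (mem_erase.1 (mem_sdiff.1 hw).1).2) (by omega)
    have hvM : ∀ u ∈ M, u ≠ v ∧ u ∈ A ∧ s(v,u) ∉ T := by
      intro u hu
      have := mem_sdiff.1 (hM hu)
      rw [mem_erase, mem_nb] at this
      exact ⟨this.1.1, this.1.2, this.2⟩
    refine ⟨insert v M, ?_, ?_, ?_⟩
    · rw [insert_subset_iff]; exact ⟨hv, fun u hu => (hvM u hu).2.1⟩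
    · rw [card_insert_of_notMem (fun h => (hvM v h).1 rfl), hMc]
    · intro a ha b hb hab
      rw [mem_insert] at ha hb
      rcases ha with rfl | ha <;> rcases hb with rfl | hb
      · exact absurd rfl hab
      · exact (hvM b hb).2.2
      · rw [Sym2.eq_swap]; exact (hvM a ha).2.2
      · exact hMi a ha b hb hab

def Inv {n : ℕ} (k : ℕ) (Cl W : Finset (Sym2 (Fin n))) : Prop :=
  ∃ 𝒬 : Finset (Finset (Fin n)), 𝒬.card = k ∧ (∀ Q ∈ 𝒬, Q.card = 5) ∧
    (∀ Q ∈ 𝒬, ∀ Q' ∈ 𝒬, Q ≠ Q' → Disjoint Q Q') ∧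
    (∀ Q ∈ 𝒬, ∀ u ∈ Q, ∀ v ∈ Q, u ≠ v → s(u,v) ∈ Cl) ∧
    (∀ v, (nb (Cl ∪ W) v).card ≤ 2000) ∧ ∑ v, (nb (Cl ∪ W) v).card ≤ 961 * k

lemma card_bU {n : ℕ} (𝒬 : Finset (Finset (Fin n))) (h5 : ∀ Q ∈ 𝒬, Q.card = 5)
    (hd : ∀ Q ∈ 𝒬, ∀ Q' ∈ 𝒬, Q ≠ Q' → Disjoint Q Q') : (𝒬.biUnion id).card = 5 * 𝒬.card := by
  rw [card_biUnion (t := id) (fun Q hQ Q' hQ' h => hd Q hQ Q' hQ' h)]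
  simp only [id]
  rw [sum_congr rfl h5]
  simp [mul_comm]

lemma arith_big (n k s h d : ℕ) (hn : 1000000 ≤ n) (hk : 6 * k < n) (hs : s = n - 5 * k)
    (hh : h * 1961 ≤ 961 * k) (hd : s - h ≤ d) : 60791 ≤ d := by
  have h2 : 2 * h ≤ k := by nlinarith
  omega

lemma Inv_step {n : ℕ} (hn : 1000000 ≤ n) (k : ℕ) (hk : 6 * k < n) (Cl W : Finset (Sym2 (Fin n)))
    (h : Inv k Cl W) : Fc (Inv (k + 1)) Cl W := by
  obtain ⟨𝒬, hc, h5, hd, hC, hD, hS⟩ := h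
  have hU := card_bU 𝒬 h5 hd
  set T := Cl ∪ W with hT
  set S := univ \ 𝒬.biUnion id with hSdef
  have hScard : S.card = n - 5 * k := by
    rw [hSdef, card_sdiff_of_subset (subset_univ _), hU, hc]; simp
  set H := univ.filter (fun v => 1961 ≤ (nb T v).card) with hH
  have hHc : H.card * 1961 ≤ 961 * k := by
    calc H.card * 1961 = ∑ v ∈ H, 1961 := by rw [sum_const, smul_eq_mul]
      _ ≤ ∑ v ∈ H, (nb T v).card := sum_le_sum (fun v hv => (mem_filter.1 hv).2)
      _ ≤ ∑ v, (nb T v).card := sum_le_sum_of_subset (subset_univ _)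
      _ ≤ _ := hS
  have hlow := le_card_sdiff H S
  obtain ⟨M, hM, hMc, hMi⟩ := indep T 1960 31 (S \ H) (by
    intro v hv
    have := (mem_sdiff.1 hv).2
    simp only [hH, mem_filter, mem_univ, true_and] at this
    omega) (le_trans (by norm_num) (arith_big n k S.card H.card _ hn hk hScard hHc hlow))
  refine (clique 5 M Cl W (by rw [hMc]; norm_num) hMi).mono ?_
  rintro Cl' W' ⟨h1, h2, Q, hQM, hQc, hQ⟩
  have hQd : ∀ Q' ∈ 𝒬, Disjoint Q Q' := by
    intro Q' hQ'
    rw [Finset.disjoint_left]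
    intro x hx hx'
    have := (mem_sdiff.1 (hM (hQM hx))).1
    rw [hSdef, mem_sdiff] at this
    exact this.2 (mem_biUnion.2 ⟨Q', hQ', hx'⟩)
  have hnb : ∀ v, (nb (Cl' ∪ W') v).card ≤ (nb T v).card + if v ∈ M then 31 else 0 := by
    intro v
    split_ifs with hv
    · have : nb (Cl' ∪ W') v ⊆ nb T v ∪ M := by
        intro u hu
        rw [mem_nb] at hu
        rw [mem_union, mem_nb]
        rcases h2 _ hu with h | ⟨a, ha, b, hb, h⟩
        · exact Or.inl h
        · right
          rw [Sym2.eq_iff] at h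
          rcases h with ⟨_, rfl⟩ | ⟨_, rfl⟩ <;> assumption
      have := (card_le_card this).trans (card_union_le _ _)
      omega
    · have : nb (Cl' ∪ W') v ⊆ nb T v := by
        intro u hu
        rw [mem_nb] at hu
        rw [mem_nb]
        rcases h2 _ hu with h | ⟨a, ha, b, hb, h⟩
        · exact h
        · exfalso
          rw [Sym2.eq_iff] at h
          rcases h with ⟨rfl, _⟩ | ⟨rfl, _⟩ <;> exact hv (by assumption)
      simpa using card_le_card this
  have hQn : Q ∉ 𝒬 := by
    intro hh
    have := hQd Q hh
    rw [disjoint_self] at this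
    rw [this] at hQc
    simp at hQc
  refine ⟨insert Q 𝒬, ?_, ?_, ?_, ?_, ?_, ?_⟩
  · rw [card_insert_of_notMem hQn, hc]
  · intro R hR
    rw [mem_insert] at hR
    rcases hR with rfl | hR
    · exact hQc
    · exact h5 R hR
  · intro R hR R' hR' hne
    rw [mem_insert] at hR hR'
    rcases hR with rfl | hR <;> rcases hR' with rfl | hR'
    · exact absurd rfl hne
    · exact hQd _ hR'
    · exact (hQd _ hR).symm
    · exact hd R hR R' hR' hne
  · intro R hR u hu v hv huv
    rw [mem_insert] at hR
    rcases hR with rfl | hR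
    · exact hQ u hu v hv huv
    · exact h1 (hC R hR u hu v hv huv)
  · intro v
    have h := hnb v
    split_ifs at h with hv
    · have := (mem_sdiff.1 (hM hv)).2
      simp only [hH, mem_filter, mem_univ, true_and] at this
      omega
    · have := hD v
      omega
  · calc _ ≤ ∑ v, ((nb T v).card + if v ∈ M then 31 else 0) := sum_le_sum (fun v _ => hnb v)
      _ = ∑ v, (nb T v).card + M.card * 31 := by
        rw [sum_add_distrib]; simp
      _ ≤ _ := by rw [hMc]; omega

lemma Inv_reach {n : ℕ} (hn : 1000000 ≤ n) (k : ℕ) (hk : 6 * k < n + 6) :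
    Fc (n := n) (Inv k) ∅ ∅ := by
  induction k with
  | zero =>
    refine Fc.now _ _ ⟨∅, by simp, by simp, by simp, by simp, ?_, ?_⟩
    · intro v; simp [nb]
    · simp [nb]
  | succ k ih =>
    exact (ih (by omega)).bind (fun Cl W h => Inv_step hn k (by omega) Cl W h)

lemma hall {n : ℕ} (T : Finset (Sym2 (Fin n))) (L : Finset (Fin n)) (𝒬 : Finset (Finset (Fin n)))
    (h5 : ∀ Q ∈ 𝒬, Q.card = 5) (hd : ∀ Q ∈ 𝒬, ∀ Q' ∈ 𝒬, Q ≠ Q' → Disjoint Q Q')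
    (hD : ∀ v, (nb T v).card ≤ 2000) (hL : L.card = 𝒬.card) (hbig : 12001 ≤ L.card) :
    ∃ φ : Fin n → Finset (Fin n), (∀ v ∈ L, φ v ∈ 𝒬 ∧ ∀ u ∈ φ v, s(v,u) ∉ T) ∧
      (∀ v ∈ L, ∀ w ∈ L, φ v = φ w → v = w) ∧ ∀ Q ∈ 𝒬, ∃ v ∈ L, φ v = Q := by
  classical
  let t : L → Finset (Finset (Fin n)) := fun v => 𝒬.filter (fun Q => ∀ u ∈ Q, s(v.1,u) ∉ T)
  have hall : ∀ A : Finset L, A.card ≤ (A.biUnion t).card := by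
    intro A
    rcases A.eq_empty_or_nonempty with rfl | ⟨v, hv⟩
    · simp
    have ht : 𝒬.card ≤ (t v).card + 2000 := by
      have hbad : (𝒬.filter (fun Q => ¬ ∀ u ∈ Q, s(v.1,u) ∉ T)).card ≤ (nb T v.1).card := by
        have hch : ∀ Q ∈ 𝒬.filter (fun Q => ¬ ∀ u ∈ Q, s(v.1,u) ∉ T), ∃ u ∈ Q, s(v.1,u) ∈ T := by
          intro Q hQ
          have := (mem_filter.1 hQ).2
          push Not at this
          exact this
        have : Nonempty (Fin n) := ⟨v.1⟩
        choose! f hf using hch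
        apply card_le_card_of_injOn f
        · intro Q hQ
          rw [mem_coe, mem_nb]
          exact (hf Q hQ).2
        · intro Q hQ Q' hQ' hff
          by_contra hne
          have := hd Q (mem_filter.1 hQ).1 Q' (mem_filter.1 hQ').1 hne
          exact Finset.disjoint_left.1 this (hf Q hQ).1 (hff ▸ (hf Q' hQ').1)
      have := card_filter_add_card_filter_not (s := 𝒬) (fun Q => ∀ u ∈ Q, s(v.1,u) ∉ T)
      have := hD v.1
      simp only [t]
      omega
    have hsub := card_le_card (subset_biUnion_of_mem t hv)
    by_cases hsm : A.card + 2000 ≤ 𝒬.card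
    · omega
    have hAL : A.card ≤ L.card := by
      have := card_le_univ A
      simpa using this
    have : 𝒬 ⊆ A.biUnion t := by
      intro Q hQ
      by_contra hcon
      have hA : A.map (Function.Embedding.subtype _) ⊆ Q.biUnion (nb T) := by
        intro w hw
        rw [mem_map] at hw
        obtain ⟨w, hwA, rfl⟩ := hw
        rw [mem_biUnion]
        by_contra hno
        apply hcon
        rw [mem_biUnion]
        refine ⟨w, hwA, mem_filter.2 ⟨hQ, ?_⟩⟩
        intro u hu hmem
        apply hno
        refine ⟨u, hu, ?_⟩
        rw [mem_nb, Sym2.eq_swap]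
        exact hmem
      have h1 := card_le_card hA
      rw [card_map] at h1
      have h2 := card_biUnion_le_card_mul Q (nb T) 2000 (fun u _ => hD u)
      rw [h5 Q hQ] at h2
      omega
    have := card_le_card this
    omega
  obtain ⟨f, hf, hft⟩ := (Finset.all_card_le_biUnion_card_iff_exists_injective t).1 hall
  have hft' : ∀ v, f v ∈ 𝒬 ∧ ∀ u ∈ f v, s(v.1,u) ∉ T := fun v => mem_filter.1 (hft v)
  have himg : univ.image f = 𝒬 := by
    apply eq_of_subset_of_card_le
    · intro Q hQ
      obtain ⟨v, -, rfl⟩ := mem_image.1 hQ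
      exact (hft' v).1
    · rw [card_image_of_injective _ hf]
      simp [hL]
  refine ⟨fun v => if h : v ∈ L then f ⟨v, h⟩ else ∅, ?_, ?_, ?_⟩
  · intro v hv
    simp only [hv, dite_true]
    exact hft' ⟨v, hv⟩
  · intro v hv w hw h
    simp only [hv, hw, dite_true] at h
    have := hf h
    simpa using this
  · intro Q hQ
    rw [← himg] at hQ
    obtain ⟨v, -, rfl⟩ := mem_image.1 hQ
    exact ⟨v.1, v.2, by simp⟩

lemma finish {n : ℕ} (Cl W : Finset (Sym2 (Fin n))) (S : Finset (Fin n))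
    (hS : Tiled Cl S) (𝒬 : Finset (Finset (Fin n)))
    (h5 : ∀ Q ∈ 𝒬, Q.card = 5) (hd : ∀ Q ∈ 𝒬, ∀ Q' ∈ 𝒬, Q ≠ Q' → Disjoint Q Q')
    (hC : ∀ Q ∈ 𝒬, ∀ u ∈ Q, ∀ v ∈ Q, u ≠ v → s(u,v) ∈ Cl)
    (hSQ : ∀ Q ∈ 𝒬, Disjoint S Q)
    (hD : ∀ v, (nb (Cl ∪ W) v).card ≤ 2000) (hn : S.card + 6 * 𝒬.card = n) (hbig : 12001 ≤ 𝒬.card) :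
    Fc (fun Cl _ => ∃ F ∈ factorFamily 3 n (⊤ : SimpleGraph (Fin 3)).edgeSet, F ⊆ Cl) Cl W := by
  classical
  have hU := card_bU 𝒬 h5 hd
  have hSU : Disjoint S (𝒬.biUnion id) := by
    rw [disjoint_biUnion_right]; exact hSQ
  set L := univ \ (S ∪ 𝒬.biUnion id) with hL
  have hLc : L.card = 𝒬.card := by
    rw [hL, card_sdiff_of_subset (subset_univ _), card_union_of_disjoint hSU, hU]
    simp; omega
  have hL1 : ∀ v ∈ L, v ∉ S ∧ ∀ Q ∈ 𝒬, v ∉ Q := by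
    intro v hv
    rw [hL, mem_sdiff, mem_union, mem_biUnion] at hv
    push Not at hv
    exact hv.2
  obtain ⟨φ, hφ1, hφ2, hφ3⟩ := hall (Cl ∪ W) L 𝒬 h5 hd hD hLc (by omega)
  refine (absorb φ L Cl W (fun v hv => by rw [h5 _ (hφ1 v hv).1]; norm_num)
    (fun v hv w hw => (hL1 v hv).2 _ (hφ1 w hw).1) (fun v hv => (hφ1 v hv).2)).mono ?_
  rintro Cl' - ⟨hCl, hab⟩
  apply Tiled.win
  have hS' : Tiled Cl' S := by
    obtain ⟨k, g, g1, g2, g3⟩ := hS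
    exact ⟨k, g, g1, g2, fun i j j' h => hCl (g3 i j j' h)⟩
  have hT : Tiled Cl' (L.biUnion (fun v => insert v (φ v))) := by
    apply Tiled.biUnion
    · intro v hv
      obtain ⟨a, ha, b, hb, hne, e1, e2⟩ := hab v hv
      have hvQ := (hL1 v hv).2 _ (hφ1 v hv).1
      have hva : v ≠ a := fun h => hvQ (h ▸ ha)
      have hvb : v ≠ b := fun h => hvQ (h ▸ hb)
      have hq := hC _ (hφ1 v hv).1
      have heq : insert v (φ v) = {v, a, b} ∪ ((φ v).erase a).erase b := by
        ext x
        simp only [mem_insert, mem_union, mem_erase, mem_singleton]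
        by_cases hxa : x = a
        · subst hxa; simp [ha]
        by_cases hxb : x = b
        · subst hxb; simp [hb]
        simp [hxa, hxb]
      rw [heq]
      apply Tiled.union
      · apply Tiled.tri (card_eq_three.2 ⟨v, a, b, hva, hvb, hne, rfl⟩)
        intro x hx y hy hxy
        have e3 := hCl (hq a ha b hb hne)
        have e1' := e1
        have e2' := e2
        have e3' := e3
        rw [Sym2.eq_swap] at e1' e2' e3'
        simp only [mem_insert, mem_singleton] at hx hy
        rcases hx with rfl | rfl | rfl <;> rcases hy with rfl | rfl | rfl <;>
          first | exact absurd rfl hxy | assumption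
      · apply Tiled.tri
        · rw [card_erase_of_mem (by simp [hb, hne.symm]), card_erase_of_mem ha, h5 _ (hφ1 v hv).1]
        · intro x hx y hy hxy
          simp only [mem_erase] at hx hy
          exact hCl (hq x hx.2.2 y hy.2.2 hxy)
      · rw [Finset.disjoint_left]
        intro x hx hx'
        simp only [mem_insert, mem_singleton, mem_erase] at hx hx'
        rcases hx with rfl | rfl | rfl
        · exact hvQ hx'.2.2
        · exact hx'.2.1 rfl
        · exact hx'.1 rfl
    · intro v hv w hw hvw
      have h1 := hd _ (hφ1 v hv).1 _ (hφ1 w hw).1 (fun h => hvw (hφ2 v hv w hw h))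
      rw [Finset.disjoint_left] at h1 ⊢
      intro x hx hx'
      rw [mem_insert] at hx hx'
      rcases hx with rfl | hx <;> rcases hx' with rfl | hx'
      · exact hvw rfl
      · exact (hL1 _ hv).2 _ (hφ1 w hw).1 hx'
      · exact (hL1 _ hw).2 _ (hφ1 v hv).1 hx
      · exact h1 hx hx'
  have huniv : (univ : Finset (Fin n)) = S ∪ L.biUnion (fun v => insert v (φ v)) := by
    symm
    rw [eq_univ_iff_forall]
    intro x
    rw [mem_union, mem_biUnion]
    by_cases hxS : x ∈ S
    · exact Or.inl hxS
    right
    by_cases hxL : x ∈ L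
    · exact ⟨x, hxL, mem_insert_self _ _⟩
    rw [hL, mem_sdiff, mem_union, mem_biUnion] at hxL
    have : ∃ Q ∈ 𝒬, x ∈ Q := by simpa [hxS] using hxL
    obtain ⟨Q, hQ, hx⟩ := this
    obtain ⟨v, hv, rfl⟩ := hφ3 Q hQ
    exact ⟨v, hv, mem_insert_of_mem hx⟩
  rw [huniv]
  refine hS'.union hT ?_
  rw [disjoint_biUnion_right]
  intro v hv
  rw [disjoint_insert_right]
  exact ⟨(hL1 v hv).1, hSQ _ (hφ1 v hv).1⟩

lemma upper {n : ℕ} (hn : 1000000 ≤ n) (h3 : 3 ∣ n) :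
    Fc (fun Cl _ => ∃ F ∈ factorFamily 3 n (⊤ : SimpleGraph (Fin 3)).edgeSet, F ⊆ Cl) ∅ ∅ := by
  refine (Inv_reach hn ((n + 5) / 6) (by omega)).bind ?_
  rintro Cl W ⟨𝒬, hc, h5, hd, hC, hD, -⟩
  by_cases h6 : 6 ∣ n
  · exact finish Cl W ∅ (Tiled.empty Cl) 𝒬 h5 hd hC (by simp) hD (by simp; omega) (by omega)
  · obtain ⟨Q, hQ⟩ : 𝒬.Nonempty := by rw [← card_pos]; omega
    obtain ⟨S, hSQ, hS⟩ := exists_subset_card_eq (by rw [h5 Q hQ]; norm_num : 3 ≤ Q.card)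
    have he := card_erase_of_mem hQ
    refine finish Cl W S (Tiled.tri hS (fun u hu v hv => hC Q hQ u (hSQ hu) v (hSQ hv)))
      (𝒬.erase Q) (fun R hR => h5 R (mem_erase.1 hR).2)
      (fun R hR R' hR' => hd R (mem_erase.1 hR).2 R' (mem_erase.1 hR').2)
      (fun R hR => hC R (mem_erase.1 hR).2) ?_ hD (by omega) (by omega)
    intro R hR
    rw [mem_erase] at hR
    exact (hd Q hQ R hR.2 hR.1.symm).mono_left hSQ

end WCT

/-- For every large enough `n` divisible by `3`, in the unbiased Waiter-Client triangle factor
game on `K_n`, Waiter cannot win within fewer than `(13/12)·n` rounds: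
`τ_WC(F_{n,K₃-fac}, 1) ≥ (13/12)·n`. -/
theorem WC_triangle_factor_lower :
    ∃ n₀ : ℕ, ∀ n : ℕ, n₀ ≤ n → 3 ∣ n →
      (13 : ℝ) / 12 * n ≤
        (tauWC (Kedges n) (factorFamily 3 n (⊤ : SimpleGraph (Fin 3)).edgeSet) 1 : ℝ) := by
  refine ⟨1000000, fun n hn h3 => ?_⟩
  have hmem := Nat.sInf_mem (s := {t | WaiterWins (Kedges n) 1 (fun Cl _ => ∃ A ∈
    factorFamily 3 n (⊤ : SimpleGraph (Fin 3)).edgeSet, A ⊆ Cl) t ∅ ∅}) (WCT.upper hn h3).ww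
  have hA : (WCT.A (∅ : Finset (Sym2 (Fin n)))).card ≤ 3 * (WCT.Z (∅ : Finset (Sym2 (Fin n))) ∅).card := by
    have : WCT.A (∅ : Finset (Sym2 (Fin n))) = ∅ := by
      ext v; simp [WCT.A, WCT.isoV]
    simp [this]
  have := WCT.lower h3 (by omega) _ ∅ ∅ hA (by simp) (by simp) (by simp) hmem
  rw [card_empty, zero_add] at this
  have h' : (13 : ℝ) * n ≤
      12 * (tauWC (Kedges n) (factorFamily 3 n (⊤ : SimpleGraph (Fin 3)).edgeSet) 1 : ℝ) := by
    exact_mod_cast this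
  linarith
end

section
/- For every ε > 0 and every large enough integer n with 3 dividing n, in the unbiased Waiter-Client game on the edge set of K_n whose winning sets are the triangle factors of K_n, Waiter has a strategy to win within (7/6 + ε)·n rounds; that is, τ_WC(F_{n,K₃-fac}, 1) ≤ (7/6)·n + o(n). -/
open Finset

/-- Pair game. -/
def Forces {X : Type*} [DecidableEq X] (B : Finset X) (P : Finset X → Finset X → Prop) :
    ℕ → Finset X → Finset X → Prop
  | 0, C, W => P C W
  | (t+1), C, W => P C W ∨ ∃ e f, e ≠ f ∧ (e ∈ B ∧ e ∉ C ∧ e ∉ W) ∧ (f ∈ B ∧ f ∉ C ∧ f ∉ W) ∧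
      Forces B P t (insert e C) (insert f W) ∧ Forces B P t (insert f C) (insert e W)

section ForcesLemmas
variable {X : Type*} [DecidableEq X]

theorem Forces.of {B : Finset X} {P : Finset X → Finset X → Prop} {t : ℕ} {C W : Finset X}
    (h : P C W) : Forces B P t C W := by
  cases t with
  | zero => exact h
  | succ t => exact Or.inl h

theorem Forces.step {B : Finset X} {P : Finset X → Finset X → Prop} {t : ℕ} {C W : Finset X}
    (e f : X) (hef : e ≠ f) (he : e ∈ B ∧ e ∉ C ∧ e ∉ W) (hf : f ∈ B ∧ f ∉ C ∧ f ∉ W)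
    (h1 : Forces B P t (insert e C) (insert f W)) (h2 : Forces B P t (insert f C) (insert e W)) :
    Forces B P (t+1) C W := Or.inr ⟨e, f, hef, he, hf, h1, h2⟩

theorem Forces.succ {B : Finset X} {P : Finset X → Finset X → Prop} {t : ℕ} {C W : Finset X}
    (h : Forces B P t C W) : Forces B P (t+1) C W := by
  induction t generalizing C W with
  | zero => exact Or.inl h
  | succ t ih =>
    rcases h with h | ⟨e, f, hef, he, hf, h1, h2⟩
    · exact Or.inl h
    · exact Or.inr ⟨e, f, hef, he, hf, ih h1, ih h2⟩

theorem Forces.le {B : Finset X} {P : Finset X → Finset X → Prop} {t t' : ℕ} {C W : Finset X}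
    (h : Forces B P t C W) (htt : t ≤ t') : Forces B P t' C W := by
  induction htt with
  | refl => exact h
  | step _ ih => exact ih.succ

theorem Forces.bind {B : Finset X} {P Q : Finset X → Finset X → Prop} {t s : ℕ} {C W : Finset X}
    (h : Forces B P t C W) (hPQ : ∀ C' W', P C' W' → Forces B Q s C' W') :
    Forces B Q (t+s) C W := by
  induction t generalizing C W with
  | zero => simpa using hPQ _ _ h
  | succ t ih =>
    rcases h with h | ⟨e, f, hef, he, hf, h1, h2⟩
    · exact (hPQ _ _ h).le (by omega)
    · rw [show t + 1 + s = (t + s) + 1 by ring]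
      exact Or.inr ⟨e, f, hef, he, hf, ih h1, ih h2⟩

theorem Forces.mono {B : Finset X} {P Q : Finset X → Finset X → Prop} {t : ℕ} {C W : Finset X}
    (h : Forces B P t C W) (hPQ : ∀ C' W', P C' W' → Q C' W') :
    Forces B Q t C W := h.bind (s := 0) hPQ

theorem Forces.ext {B B' : Finset X} {P : Finset X → Finset X → Prop} {t : ℕ} {C W : Finset X}
    (hB : B' ⊆ B) (h : Forces B' P t C W) :
    Forces B (fun C' W' => P C' W' ∧ C ⊆ C' ∧ W ⊆ W' ∧ C' ⊆ C ∪ B' ∧ W' ⊆ W ∪ B') t C W := by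
  induction t generalizing C W with
  | zero => exact ⟨h, by grind⟩
  | succ t ih =>
    rcases h with h | ⟨e, f, hef, he, hf, h1, h2⟩
    · exact Or.inl ⟨h, by grind⟩
    · refine Or.inr ⟨e, f, hef, ⟨hB he.1, he.2⟩, ⟨hB hf.1, hf.2⟩, (ih h1).mono ?_, (ih h2).mono ?_⟩
      · rintro C' W' ⟨h, a, b, c, d⟩
        exact ⟨h, by grind, by grind, by grind, by grind⟩
      · rintro C' W' ⟨h, a, b, c, d⟩
        exact ⟨h, by grind, by grind, by grind, by grind⟩

theorem Forces.transfer {Y : Type*} [DecidableEq Y] (φ : X → Y) (hφ : Function.Injective φ)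
    {B0 : Finset X} {B C0 W0 : Finset Y} (hB : ∀ e ∈ B0, φ e ∈ B ∧ φ e ∉ C0 ∧ φ e ∉ W0)
    {P : Finset X → Finset X → Prop} {t : ℕ} {C W : Finset X}
    (h : Forces B0 P t C W) :
    Forces B (fun C' W' => ∃ C1 W1, C' = C0 ∪ C1.image φ ∧ W' = W0 ∪ W1.image φ ∧ P C1 W1) t
      (C0 ∪ C.image φ) (W0 ∪ W.image φ) := by
  induction t generalizing C W with
  | zero => exact ⟨C, W, rfl, rfl, h⟩
  | succ t ih =>
    rcases h with h | ⟨e, f, hef, he, hf, h1, h2⟩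
    · exact Or.inl ⟨C, W, rfl, rfl, h⟩
    · have key : ∀ x, x ∈ B0 → x ∉ C → x ∉ W →
          φ x ∈ B ∧ φ x ∉ C0 ∪ C.image φ ∧ φ x ∉ W0 ∪ W.image φ := by
        intro x hx hc hw
        obtain ⟨a, b, c⟩ := hB x hx
        simp only [Finset.mem_union, Finset.mem_image, not_or]
        refine ⟨a, ⟨b, ?_⟩, c, ?_⟩
        · rintro ⟨y, hy, hxy⟩; exact hc (hφ hxy ▸ hy)
        · rintro ⟨y, hy, hxy⟩; exact hw (hφ hxy ▸ hy)
      refine Forces.step (φ e) (φ f) (fun h => hef (hφ h)) (key e he.1 he.2.1 he.2.2)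
        (key f hf.1 hf.2.1 hf.2.2) ?_ ?_
      · simpa [Finset.image_insert, Finset.union_insert] using ih h1
      · simpa [Finset.image_insert, Finset.union_insert] using ih h2

theorem Forces.waiterWins {B : Finset X} {P : Finset X → Finset X → Prop} {t : ℕ} {C W : Finset X}
    (h : Forces B P t C W) : WaiterWins B 1 P t C W := by
  induction t generalizing C W with
  | zero => exact h
  | succ t ih =>
    rcases h with h | ⟨e, f, hef, he, hf, h1, h2⟩
    · exact Or.inl h
    · have hs : ({e, f} : Finset X) ⊆ B \ (C ∪ W) := by
        intro x hx; simp only [Finset.mem_insert, Finset.mem_singleton] at hx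
        rcases hx with rfl | rfl <;> simp [he, hf]
      have hc : ({e, f} : Finset X).card = 2 := Finset.card_pair hef
      refine Or.inr ⟨{e, f}, ⟨e, by simp⟩, hs, ?_, ?_⟩
      · have := Finset.card_le_card hs
        omega
      · intro x hx; simp only [Finset.mem_insert, Finset.mem_singleton] at hx
        rcases hx with rfl | rfl
        · have : W ∪ ({x, f} : Finset X).erase x = insert f W := by
            ext y; simp; grind
          rw [this]; exact ih h1
        · have : W ∪ ({e, x} : Finset X).erase x = insert e W := by
            ext y; simp; grind
          rw [this]; exact ih h2
end ForcesLemmas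

section Gadget

/-- Two disjoint triangles. -/
def TwoTri {V : Type*} (C : Finset (Sym2 V)) : Prop :=
  ∃ a b c d e f : V, [a, b, c, d, e, f].Nodup ∧ s(a, b) ∈ C ∧ s(a, c) ∈ C ∧ s(b, c) ∈ C ∧
    s(d, e) ∈ C ∧ s(d, f) ∈ C ∧ s(e, f) ∈ C

theorem gadget_A (B C W : Finset (Sym2 (Fin 12))) (a b c u v w z1 z2 : Fin 12)
    (hn : [a, b, c, u, v, w, z1, z2].Nodup)
    (hab : s(a, b) ∈ C) (hac : s(a, c) ∈ C) (hbc : s(b, c) ∈ C)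
    (huv : s(u, v) ∈ C) (huw : s(u, w) ∈ C)
    (hz : ∀ z, z = z1 ∨ z = z2 → ∀ y, y = u ∨ y = v ∨ y = w →
      s(z, y) ∈ B ∧ s(z, y) ∉ C ∧ s(z, y) ∉ W) :
    Forces B (fun C' _ => TwoTri C') 2 C W := by
  have key : ∀ z z', (z = z1 ∨ z = z2) → (z' = z1 ∨ z' = z2) → z ≠ z' →
      Forces B (fun C' _ => TwoTri C') 1 (insert s(z, u) C) (insert s(z', u) W) := by
    intro z z' h1 h2 hzz
    have hnd : [a, b, c, u, v, w, z].Nodup := by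
      simp only [List.nodup_cons, List.mem_cons, List.not_mem_nil] at hn ⊢; grind
    have e1 := hz z h1 v (by simp)
    have e2 := hz z h1 w (by simp)
    simp only [List.nodup_cons, List.mem_cons, List.not_mem_nil] at hnd
    refine Forces.step s(z, v) s(z, w) ?_ ?_ ?_ (Forces.of ?_) (Forces.of ?_)
    · simp only [ne_eq, Sym2.eq_iff]; grind
    · simp only [Finset.mem_insert, Sym2.eq_iff]; grind
    · simp only [Finset.mem_insert, Sym2.eq_iff]; grind
    · refine ⟨a, b, c, z, u, v, ?_, ?_⟩
      · simp only [List.nodup_cons, List.mem_cons, List.not_mem_nil]; grind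
      · simp [*]
    · refine ⟨a, b, c, z, u, w, ?_, ?_⟩
      · simp only [List.nodup_cons, List.mem_cons, List.not_mem_nil]; grind
      · simp [*]
  have hzz : z1 ≠ z2 := by
    simp only [List.nodup_cons, List.mem_cons, List.not_mem_nil] at hn; grind
  refine Forces.step s(z1, u) s(z2, u) ?_ (hz _ (by simp) _ (by simp)) (hz _ (by simp) _ (by simp))
    (key _ _ (by simp) (by simp) hzz) (key _ _ (by simp) (by simp) hzz.symm)
  simp only [List.nodup_cons, List.mem_cons, List.not_mem_nil] at hn
  simp only [ne_eq, Sym2.eq_iff]; grind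

theorem gadget_B (B C W : Finset (Sym2 (Fin 12))) (a b c u v w z1 z2 : Fin 12)
    (hn : [a, b, c, u, v, w, z1, z2].Nodup)
    (hab : s(a, b) ∈ C) (hac : s(a, c) ∈ C) 
    (huv : s(u, v) ∈ C) (huw : s(u, w) ∈ C)
    (h1 : s(b, c) ∈ B ∧ s(b, c) ∉ C ∧ s(b, c) ∉ W)
    (h2 : s(v, w) ∈ B ∧ s(v, w) ∉ C ∧ s(v, w) ∉ W)
    (hz : ∀ z ∈ [z1, z2], ∀ y ∈ [a, b, c, u, v, w],
      s(z, y) ∈ B ∧ s(z, y) ∉ C ∧ s(z, y) ∉ W) :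
    Forces B (fun C' _ => TwoTri C') 3 C W := by
  have hn' := hn
  simp only [List.nodup_cons, List.mem_cons, List.not_mem_nil] at hn' hz
  refine Forces.step s(b, c) s(v, w) ?_ h1 h2 ?_ ?_
  · simp only [ne_eq, Sym2.eq_iff]; grind
  · refine gadget_A _ _ _ a b c u v w z1 z2 hn (by simp [*]) (by simp [*]) (by simp [*])
      (by simp [*]) (by simp [*]) ?_
    intro z h y hy
    have := hz z (by grind) y (by grind)
    simp only [Finset.mem_insert, Sym2.eq_iff]; grind
  · refine gadget_A _ _ _ u v w a b c z1 z2 ?_ (by simp [*]) (by simp [*]) (by simp [*])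
      (by simp [*]) (by simp [*]) ?_
    · simp only [List.nodup_cons, List.mem_cons, List.not_mem_nil]; grind
    intro z h y hy
    have := hz z (by grind) y (by grind)
    simp only [Finset.mem_insert, Sym2.eq_iff]; grind

theorem gadget_C : Forces (Kedges 12) (fun C' _ => TwoTri C') 7 ∅ ∅ := by
  refine Forces.step s(0, 1) s(0, 2) (by decide) (by decide) (by decide) ?_ ?_ <;>
  refine Forces.step s(0, 3) s(0, 4) (by decide) (by decide) (by decide) ?_ ?_ <;>
  refine Forces.step s(5, 6) s(5, 7) (by decide) (by decide) (by decide) ?_ ?_ <;>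
  refine Forces.step s(5, 8) s(5, 9) (by decide) (by decide) (by decide) ?_ ?_
  all_goals
    first
    | (refine gadget_B _ _ _ 0 1 3 5 6 8 10 11 ?_ ?_ ?_ ?_ ?_ ?_ ?_ ?_ <;> decide)
    | (refine gadget_B _ _ _ 0 1 3 5 6 9 10 11 ?_ ?_ ?_ ?_ ?_ ?_ ?_ ?_ <;> decide)
    | (refine gadget_B _ _ _ 0 1 3 5 7 8 10 11 ?_ ?_ ?_ ?_ ?_ ?_ ?_ ?_ <;> decide)
    | (refine gadget_B _ _ _ 0 1 3 5 7 9 10 11 ?_ ?_ ?_ ?_ ?_ ?_ ?_ ?_ <;> decide)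
    | (refine gadget_B _ _ _ 0 1 4 5 6 8 10 11 ?_ ?_ ?_ ?_ ?_ ?_ ?_ ?_ <;> decide)
    | (refine gadget_B _ _ _ 0 1 4 5 6 9 10 11 ?_ ?_ ?_ ?_ ?_ ?_ ?_ ?_ <;> decide)
    | (refine gadget_B _ _ _ 0 1 4 5 7 8 10 11 ?_ ?_ ?_ ?_ ?_ ?_ ?_ ?_ <;> decide)
    | (refine gadget_B _ _ _ 0 1 4 5 7 9 10 11 ?_ ?_ ?_ ?_ ?_ ?_ ?_ ?_ <;> decide)
    | (refine gadget_B _ _ _ 0 2 3 5 6 8 10 11 ?_ ?_ ?_ ?_ ?_ ?_ ?_ ?_ <;> decide)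
    | (refine gadget_B _ _ _ 0 2 3 5 6 9 10 11 ?_ ?_ ?_ ?_ ?_ ?_ ?_ ?_ <;> decide)
    | (refine gadget_B _ _ _ 0 2 3 5 7 8 10 11 ?_ ?_ ?_ ?_ ?_ ?_ ?_ ?_ <;> decide)
    | (refine gadget_B _ _ _ 0 2 3 5 7 9 10 11 ?_ ?_ ?_ ?_ ?_ ?_ ?_ ?_ <;> decide)
    | (refine gadget_B _ _ _ 0 2 4 5 6 8 10 11 ?_ ?_ ?_ ?_ ?_ ?_ ?_ ?_ <;> decide)
    | (refine gadget_B _ _ _ 0 2 4 5 6 9 10 11 ?_ ?_ ?_ ?_ ?_ ?_ ?_ ?_ <;> decide)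
    | (refine gadget_B _ _ _ 0 2 4 5 7 8 10 11 ?_ ?_ ?_ ?_ ?_ ?_ ?_ ?_ <;> decide)
    | (refine gadget_B _ _ _ 0 2 4 5 7 9 10 11 ?_ ?_ ?_ ?_ ?_ ?_ ?_ ?_ <;> decide)
end Gadget

section Build
variable {V : Type*} [DecidableEq V]

/-- state of the clique building -/
structure St (B : Finset (Sym2 V)) (T A : Finset V) (C W : Finset (Sym2 V)) : Prop where
  disj : Disjoint T A
  cl : ∀ u ∈ T, ∀ v ∈ T, u ≠ v → s(u, v) ∈ C
  ta : ∀ u ∈ T, ∀ a ∈ A, s(u, a) ∈ C ∧ s(u, a) ∉ W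
  cnt : ∀ v ∉ T, (T.filter (fun u => s(u, v) ∈ W)).card ≤ 1
  touch : ∀ a ∈ A, ∀ v, v ∉ T → s(a, v) ∉ C ∧ s(a, v) ∉ W
  board : ∀ a ∈ A, ∀ b ∈ A, a ≠ b → s(a, b) ∈ B

/-- inner state -/
structure In (B : Finset (Sym2 V)) (T : Finset V) (a : V) (N R : Finset V)
    (C W : Finset (Sym2 V)) : Prop where
  aT : a ∉ T
  aN : a ∉ N
  aR : a ∉ R
  dTN : Disjoint T N
  dTR : Disjoint T R
  dNR : Disjoint N R
  cl : ∀ u ∈ insert a T, ∀ v ∈ insert a T, u ≠ v → s(u, v) ∈ C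
  tn : ∀ u ∈ insert a T, ∀ x ∈ N, s(u, x) ∈ C ∧ s(u, x) ∉ W
  tr : ∀ u ∈ T, ∀ x ∈ R, s(u, x) ∈ C ∧ s(u, x) ∉ W
  cnt : ∀ v ∉ insert a T, ((insert a T).filter (fun u => s(u, v) ∈ W)).card ≤ 1
  touch : ∀ x ∈ N, ∀ v, v ∉ insert a T → s(x, v) ∉ C ∧ s(x, v) ∉ W
  touchR : ∀ x ∈ R, ∀ v, v ∉ T → s(x, v) ∉ C ∧ s(x, v) ∉ W
  board : ∀ x ∈ insert a (N ∪ R), ∀ y ∈ insert a (N ∪ R), x ≠ y → s(x, y) ∈ B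

theorem In.next {B : Finset (Sym2 V)} {T : Finset V} {a : V} {N R : Finset V}
    {C W : Finset (Sym2 V)} (h : In B T a N R C W) (b c : V) (hb : b ∈ R) (hc : c ∈ R)
    (hbc : b ≠ c) :
    In B T a (insert b N) ((R.erase b).erase c) (insert s(a, b) C) (insert s(a, c) W) := by
  obtain ⟨aT, aN, aR, dTN, dTR, dNR, cl, tn, tr, cnt, touch, touchR, board⟩ := h
  rw [Finset.disjoint_left] at dTN dTR dNR
  refine ⟨aT, ?_, ?_, ?_, ?_, ?_, ?_, ?_, ?_, ?_, ?_, ?_, ?_⟩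
  · grind
  · grind
  · rw [Finset.disjoint_left]; grind
  · rw [Finset.disjoint_left]; grind
  · rw [Finset.disjoint_left]; grind
  · intro u hu v hv huv; exact Finset.mem_insert_of_mem (cl u hu v hv huv)
  · intro u hu x hx
    simp only [Finset.mem_insert, Sym2.eq_iff] at *
    rcases hx with rfl | hx
    · rcases hu with rfl | hu
      · have := touchR x hb u aT
        rw [Sym2.eq_swap] at this
        grind
      · have := tr u hu x hb
        grind
    · have := tn u hu x hx
      grind
  · intro u hu x hx
    simp only [Finset.mem_insert, Sym2.eq_iff, Finset.mem_erase] at *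
    have := tr u hu x (by grind)
    grind
  · intro v hv
    by_cases hvc : v = c
    · subst hvc
      have : (insert a T).filter (fun u => s(u, v) ∈ insert s(a, v) W) ⊆ {a} := by
        intro u hu
        simp only [Finset.mem_filter, Finset.mem_insert, Sym2.eq_iff, Finset.mem_singleton] at *
        rcases hu.1 with h | h
        · exact h
        · have := tr u h v hc
          grind
      exact (Finset.card_le_card this).trans (by simp)
    · refine le_trans (Finset.card_le_card ?_) (cnt v hv)
      intro u hu
      simp only [Finset.mem_filter, Finset.mem_insert, Sym2.eq_iff] at *
      grind
  · intro x hx v hv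
    simp only [Finset.mem_insert, Sym2.eq_iff] at *
    rcases hx with rfl | hx
    · have := touchR x hb v (by grind)
      grind
    · have := touch x hx v (by grind)
      grind
  · intro x hx v hv
    simp only [Finset.mem_insert, Finset.mem_erase, Sym2.eq_iff] at *
    have := touchR x (by grind) v (by grind)
    grind
  · intro x hx y hy hxy
    exact board x (by grind) y (by grind) hxy

theorem In.run {B : Finset (Sym2 V)} {T : Finset V} {a : V} (m : ℕ) : ∀ {N R : Finset V}
    {C W : Finset (Sym2 V)}, In B T a N R C W → R.card = 2 * m →
    Forces B (fun C' W' => ∃ N', N'.card = N.card + m ∧ N' ⊆ N ∪ R ∧ In B T a N' ∅ C' W') m C W := by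
  induction m with
  | zero =>
    intro N R C W h hR
    have : R = ∅ := by simpa using hR
    subst this
    exact Forces.of ⟨N, by simp, by simp, h⟩
  | succ m ih =>
    intro N R C W h hR
    obtain ⟨b, hb, c, hc, hbc⟩ := Finset.one_lt_card.mp (show 1 < R.card by omega)
    have hd := Finset.disjoint_left.mp h.dNR
    have hun : ∀ x ∈ R, s(a, x) ∈ B ∧ s(a, x) ∉ C ∧ s(a, x) ∉ W := by
      intro x hx
      have h1 := h.touchR x hx a h.aT
      have h2 := h.board a (by simp) x (by simp [hx]) (fun h' => h.aR (h' ▸ hx))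
      rw [Sym2.eq_swap] at h1
      exact ⟨h2, h1⟩
    have hcard : ∀ b c, b ∈ R → c ∈ R → b ≠ c → ((R.erase b).erase c).card = 2 * m := by
      intro b c hb hc hbc
      rw [Finset.card_erase_of_mem (by simp [hc, hbc.symm]), Finset.card_erase_of_mem hb]
      omega
    refine Forces.step s(a, b) s(a, c) (by simp only [ne_eq, Sym2.eq_iff]; grind) (hun b hb)
      (hun c hc) ?_ ?_
    · refine (ih (h.next b c hb hc hbc) (hcard b c hb hc hbc)).mono ?_
      rintro C' W' ⟨N', h1, h3, h2⟩
      rw [Finset.card_insert_of_notMem (fun h' => hd h' hb)] at h1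
      exact ⟨N', by omega, by grind, h2⟩
    · refine (ih (h.next c b hc hb hbc.symm) (hcard c b hc hb hbc.symm)).mono ?_
      rintro C' W' ⟨N', h1, h3, h2⟩
      rw [Finset.card_insert_of_notMem (fun h' => hd h' hc)] at h1
      exact ⟨N', by omega, by grind, h2⟩

/-- number of rounds -/
def rr : ℕ → ℕ
  | 0 => 0
  | (j+1) => (2 ^ j - 1) + rr j

theorem St.run {B : Finset (Sym2 V)} (j : ℕ) : ∀ {T A : Finset V} {C W : Finset (Sym2 V)},
    St B T A C W → A.card = 2 ^ j - 1 →
    Forces B (fun C' W' => ∃ T', T'.card = T.card + j ∧ T' ⊆ T ∪ A ∧ St B T' ∅ C' W') (rr j) C W := by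
  induction j with
  | zero =>
    intro T A C W h hA
    have : A = ∅ := by simpa using hA
    subst this
    exact Forces.of ⟨T, by simp, by simp, h⟩
  | succ j ih =>
    intro T A C W h hA
    have hpos : 0 < 2 ^ j := by positivity
    rw [pow_succ] at hA
    obtain ⟨a, ha⟩ := Finset.card_pos.mp (show 0 < A.card by omega)
    obtain ⟨dTA, cl, ta, cnt, touch, board⟩ := h
    have dTA' := Finset.disjoint_left.mp dTA
    have aT : a ∉ T := fun h => dTA' h ha
    have hin : In B T a ∅ (A.erase a) C W := by
      refine ⟨aT, by simp, by simp, by simp, ?_, by simp, ?_, by simp, ?_, ?_, by simp, ?_, ?_⟩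
      · rw [Finset.disjoint_left]; grind
      · intro u hu v hv huv
        rw [Finset.mem_insert] at hu hv
        rcases hu with rfl | hu <;> rcases hv with rfl | hv
        · exact absurd rfl huv
        · rw [Sym2.eq_swap]; exact (ta v hv _ ha).1
        · exact (ta u hu _ ha).1
        · exact cl u hu v hv huv
      · intro u hu x hx; exact ta u hu x (Finset.mem_of_mem_erase hx)
      · intro v hv
        rw [Finset.mem_insert, not_or] at hv
        rw [Finset.filter_insert, if_neg (touch a ha v hv.2).2]
        exact cnt v hv.2
      · intro x hx v hv; exact touch x (Finset.mem_of_mem_erase hx) v hv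
      · intro x hx y hy; exact board x (by grind) y (by grind)
    have h1 := hin.run (2 ^ j - 1) (by rw [Finset.card_erase_of_mem ha]; omega)
    have h1' : Forces B (fun C' W' => ∃ N', N'.card = 2 ^ j - 1 ∧ N' ⊆ A ∧ In B T a N' ∅ C' W')
        (2 ^ j - 1) C W := by
      refine h1.mono ?_
      rintro C' W' ⟨N', h1, h2, h3⟩
      exact ⟨N', by simpa using h1, by grind, h3⟩
    refine h1'.bind ?_
    rintro C' W' ⟨N, hN, hNA, hi⟩
    have hst : St B (insert a T) N C' W' := by
      refine ⟨?_, hi.cl, hi.tn, hi.cnt, hi.touch, ?_⟩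
      · rw [Finset.disjoint_left]
        have := Finset.disjoint_left.mp hi.dTN
        have := hi.aN
        grind
      · intro x hx y hy; exact hi.board x (by grind) y (by grind)
    refine (ih hst hN).mono ?_
    rintro C'' W'' ⟨T', h1, h2, h3⟩
    rw [Finset.card_insert_of_notMem aT] at h1
    refine ⟨T', by omega, by grind, h3⟩
end Build

section Final
variable {n : ℕ}

theorem clean_set (D : Finset (Sym2 (Fin n))) (N d : ℕ) (hD : 2 * D.card < N * d) (k : ℕ) :
    ∀ P : Finset (Fin n), N + k * (d + 1) ≤ P.card →
      ∃ A ⊆ P, A.card = k ∧ ∀ a ∈ A, ∀ b ∈ A, a ≠ b → s(a, b) ∉ D := by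
  induction k with
  | zero => intro P _; exact ⟨∅, by simp, by simp, by simp⟩
  | succ k ih =>
    intro P hP
    have hex : ∃ v ∈ P, (D.filter (fun e => v ∈ e)).card < d := by
      by_contra! hcon
      have h1 : P.card * d ≤ ∑ v ∈ P, (D.filter (fun e => v ∈ e)).card := by
        rw [← smul_eq_mul]; exact Finset.card_nsmul_le_sum _ _ _ hcon
      have h2 : ∑ v ∈ P, (D.filter (fun e => v ∈ e)).card =
          ∑ e ∈ D, (P.filter (fun v => v ∈ e)).card :=
        Finset.sum_card_bipartiteAbove_eq_sum_card_bipartiteBelow (fun v e => v ∈ e)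
      have h3 : ∑ e ∈ D, (P.filter (fun v => v ∈ e)).card ≤ D.card • 2 := by
        apply Finset.sum_le_card_nsmul
        intro e _
        induction e with
        | h x y =>
          refine (Finset.card_le_card (t := {x, y}) ?_).trans Finset.card_le_two
          intro v hv; simpa using (Finset.mem_filter.mp hv).2
      have h4 : N * d ≤ P.card * d := Nat.mul_le_mul_right _ (by nlinarith)
      rw [smul_eq_mul] at h3
      omega
    obtain ⟨v, hv, hd⟩ := hex
    have hsub : P \ insert v (P.filter (fun u => s(v, u) ∈ D)) ⊆ P := Finset.sdiff_subset
    have hc : (P.filter (fun u => s(v, u) ∈ D)).card ≤ (D.filter (fun e => v ∈ e)).card := by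
      apply Finset.card_le_card_of_injOn (fun u => s(v, u))
      · intro u hu
        simp only [Finset.coe_filter, Set.mem_ofPred_eq] at hu ⊢
        exact ⟨hu.2, by simp⟩
      · intro u _ u' _ h
        simp only [Sym2.eq_iff] at h
        grind
    have hc2 : P.card ≤ (P \ insert v (P.filter (fun u => s(v, u) ∈ D))).card + (d + 1) := by
      have h1 := Finset.le_card_sdiff (insert v (P.filter (fun u => s(v, u) ∈ D))) P
      have h2 := Finset.card_insert_le v (P.filter (fun u => s(v, u) ∈ D))
      omega
    obtain ⟨A, hA, hAc, hAd⟩ := ih (P \ insert v (P.filter (fun u => s(v, u) ∈ D))) (by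
      have : (k + 1) * (d + 1) = k * (d + 1) + (d + 1) := by ring
      omega)
    have hvA : v ∉ A := fun h => by have := hA h; simp at this
    have hva : ∀ a ∈ A, s(v, a) ∉ D := by
      intro a ha; have := hA ha; simp at this; tauto
    refine ⟨insert v A, ?_, ?_, ?_⟩
    · intro x hx
      rcases Finset.mem_insert.mp hx with rfl | hx
      · exact hv
      · exact hsub (hA hx)
    · rw [Finset.card_insert_of_notMem hvA, hAc]
    · intro a ha b hb hab
      rcases Finset.mem_insert.mp ha with ha' | ha' <;>
        rcases Finset.mem_insert.mp hb with hb' | hb'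
      · exact absurd (ha'.trans hb'.symm) hab
      · rw [ha']; exact hva b hb'
      · rw [hb', Sym2.eq_swap]; exact hva a ha'
      · exact hAd a ha' b hb' hab

/-- `S` is tiled by triangles of `C`. -/
inductive Tiled (C : Finset (Sym2 (Fin n))) : Finset (Fin n) → Prop
  | nil : Tiled C ∅
  | cons (T S : Finset (Fin n)) : T.card = 3 → (∀ a ∈ T, ∀ b ∈ T, a ≠ b → s(a, b) ∈ C) →
      Disjoint T S → Tiled C S → Tiled C (T ∪ S)

theorem Tiled.mono {C C' : Finset (Sym2 (Fin n))} (hC : C ⊆ C') {S : Finset (Fin n)}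
    (h : Tiled C S) : Tiled C' S := by
  induction h with
  | nil => exact .nil
  | cons T S h1 h2 h3 _ ih => exact .cons T S h1 (fun a ha b hb hab => hC (h2 a ha b hb hab)) h3 ih

theorem Tiled.fun_exists {C : Finset (Sym2 (Fin n))} {S : Finset (Fin n)} (h : Tiled C S) :
    ∃ m, S.card = 3 * m ∧ ∃ g : Fin m → Fin 3 → Fin n,
      (∀ v ∈ S, ∃ p : Fin m × Fin 3, g p.1 p.2 = v) ∧
      (∀ i a b, a ≠ b → s(g i a, g i b) ∈ C) := by
  induction h with
  | nil => exact ⟨0, by simp, Fin.elim0, by simp, fun i => i.elim0⟩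
  | cons T S h1 h2 h3 _ ih =>
    obtain ⟨m, hm, g, hg1, hg2⟩ := ih
    refine ⟨m + 1, ?_, Fin.cons (fun j => T.orderEmbOfFin h1 j) g, ?_, ?_⟩
    · rw [Finset.card_union_of_disjoint h3]; omega
    · intro v hv
      rcases Finset.mem_union.mp hv with hv | hv
      · have : v ∈ Set.range (T.orderEmbOfFin h1) := by
          rw [Finset.range_orderEmbOfFin]; exact hv
        obtain ⟨j, hj⟩ := this
        exact ⟨(0, j), by simpa using hj⟩
      · obtain ⟨p, hp⟩ := hg1 v hv
        exact ⟨(p.1.succ, p.2), by simpa using hp⟩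
    · intro i a b hab
      refine Fin.cases ?_ (fun i => ?_) i
      · simp only [Fin.cons_zero]
        exact h2 _ (Finset.orderEmbOfFin_mem _ _ _) _ (Finset.orderEmbOfFin_mem _ _ _)
          (by simpa using hab)
      · simp only [Fin.cons_succ]; exact hg2 i a b hab

theorem Tiled.win {C : Finset (Sym2 (Fin n))} (h : Tiled C Finset.univ) :
    ∃ A ∈ factorFamily 3 n (⊤ : SimpleGraph (Fin 3)).edgeSet, A ⊆ C := by
  obtain ⟨m, hm, g, hg1, hg2⟩ := h.fun_exists
  rw [Finset.card_univ, Fintype.card_fin] at hm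
  have hm' : m = n / 3 := by omega
  subst hm'
  have hsurj : Function.Surjective (fun p : Fin (n/3) × Fin 3 => g p.1 p.2) :=
    fun v => hg1 v (Finset.mem_univ v)
  have hbij : Function.Bijective (fun p : Fin (n/3) × Fin 3 => g p.1 p.2) := by
    rw [Fintype.bijective_iff_surjective_and_card]
    refine ⟨hsurj, ?_⟩
    simp; omega
  refine ⟨(Set.toFinite (⋃ i : Fin (n / 3), Sym2.map (g i) '' (⊤ : SimpleGraph (Fin 3)).edgeSet)).toFinset,
    ⟨g, ?_, by simp⟩, ?_⟩
  · intro v; exact hbij.existsUnique v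
  · intro e he
    simp only [Set.Finite.mem_toFinset, Set.mem_iUnion, Set.mem_image] at he
    obtain ⟨i, e, he, rfl⟩ := he
    induction e with
    | h a b =>
      rw [SimpleGraph.mem_edgeSet, SimpleGraph.top_adj] at he
      simpa using hg2 i a b he

/-- chain of absorbers -/
inductive Chain (C W : Finset (Sym2 (Fin n))) (P : Finset (Fin n)) : ℕ → Finset (Fin n) → Prop
  | nil : Chain C W P 0 ∅
  | cons (i : ℕ) (K U : Finset (Fin n)) : K.card = 5 → Disjoint K U →
      (∀ a ∈ K, ∀ b ∈ K, a ≠ b → s(a, b) ∈ C) →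
      (∀ v ∈ P, (K.filter (fun u => s(u, v) ∈ W)).card ≤ 1) →
      Chain C W P i U → Chain C W P (i+1) (K ∪ U)

theorem Chain.mono {C W C' W' : Finset (Sym2 (Fin n))} {P P' : Finset (Fin n)} {i : ℕ}
    {U : Finset (Fin n)} (h : Chain C W P i U) (hC : C ⊆ C') (hP : P' ⊆ P)
    (hW : ∀ u ∈ U, ∀ v ∈ P', s(u, v) ∈ W' → s(u, v) ∈ W) : Chain C' W' P' i U := by
  induction h with
  | nil => exact .nil
  | cons i K U h1 h2 h3 h4 _ ih =>
    refine .cons i K U h1 h2 (fun a ha b hb hab => hC (h3 a ha b hb hab)) ?_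
      (ih (fun u hu => hW u (Finset.mem_union_right _ hu)))
    intro v hv
    refine le_trans (Finset.card_le_card ?_) (h4 v (hP hv))
    intro u hu
    rw [Finset.mem_filter] at hu ⊢
    exact ⟨hu.1, hW u (Finset.mem_union_left _ hu.1) v hv hu.2⟩

/-- main state -/
def Main (i p c : ℕ) (C W : Finset (Sym2 (Fin n))) : Prop :=
  ∃ S P U : Finset (Fin n), Tiled C S ∧ Chain C W P i U ∧ Disjoint S P ∧ Disjoint S U ∧
    Disjoint P U ∧ (∀ v, v ∈ S ∨ v ∈ P ∨ v ∈ U) ∧ P.card = p ∧ (C ∪ W).card ≤ c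

/-- building state -/
def Bld (i p c f : ℕ) (C W : Finset (Sym2 (Fin n))) : Prop :=
  ∃ P U F : Finset (Fin n), Chain C W P i U ∧
    Disjoint P U ∧ (∀ v, v ∈ P ∨ v ∈ U) ∧ P.card = p ∧ (C ∪ W).card ≤ c ∧
    F ⊆ P ∧ f ≤ F.card ∧ ∀ x ∈ F, ∀ v, s(x, v) ∉ C ∧ s(x, v) ∉ W

theorem Bld.main {i p c f : ℕ} {C W : Finset (Sym2 (Fin n))} (h : Bld i p c f C W) :
    Main i p c C W := by
  obtain ⟨P, U, F, h1, h2, h3, h4, h5, _⟩ := h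
  exact ⟨∅, P, U, .nil, h1, by simp, by simp, h2, fun v => Or.inr (h3 v), h4, h5⟩

theorem card_aux {C W C' W' : Finset (Sym2 (Fin n))} {A : Finset (Fin n)} {c : ℕ}
    (h : (C ∪ W).card ≤ c) (hC : C' ⊆ C ∪ (Kedges n ∩ A.sym2)) (hW : W' ⊆ W ∪ (Kedges n ∩ A.sym2)) :
    (C' ∪ W').card ≤ c + (A.card + 1).choose 2 := by
  have h1 : C' ∪ W' ⊆ (C ∪ W) ∪ A.sym2 := by grind
  have := Finset.card_le_card h1
  have h2 := Finset.card_union_le (C ∪ W) A.sym2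
  rw [Finset.card_sym2] at h2
  omega

theorem mem_K {a b : Fin n} : s(a, b) ∈ Kedges n ↔ a ≠ b := by simp [Kedges]

theorem Bld.step {i p c f : ℕ} {C W : Finset (Sym2 (Fin n))} (h : Bld i (p + 5) c (f + 31) C W) :
    Forces (Kedges n) (Bld (i+1) p (c + 496) f) 26 C W := by
  obtain ⟨P, U, F, hch, dPU, cov, hp, hc, hFP, hF, hfr⟩ := h
  obtain ⟨A, hAF, hA⟩ := Finset.exists_subset_card_eq (show 31 ≤ F.card by omega)
  have hst : St (Kedges n ∩ A.sym2) ∅ A C W := by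
    refine ⟨by simp, by simp, by simp, by simp, ?_, ?_⟩
    · intro a ha v _; exact hfr a (hAF ha) v
    · intro a ha b hb hab
      rw [Finset.mem_inter, mem_K, Finset.mk_mem_sym2_iff]
      exact ⟨hab, ha, hb⟩
  have h1 := (hst.run 5 (by simpa using hA)).ext (B := Kedges n) Finset.inter_subset_left
  refine Forces.mono (h1.le (by decide)) ?_
  rintro C' W' ⟨⟨K, hK, hKA, hst⟩, hCC, hWW, hC', hW'⟩
  simp only [Finset.card_empty, Finset.empty_union, zero_add] at hK hKA
  have hKP : K ⊆ P := hKA.trans (hAF.trans hFP)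
  rw [Finset.disjoint_left] at dPU
  have hnew : ∀ u v, s(u, v) ∈ W' → s(u, v) ∈ W ∨ (u ∈ A ∧ v ∈ A) := by
    intro u v h
    have := hW' h
    rw [Finset.mem_union, Finset.mem_inter, Finset.mk_mem_sym2_iff] at this
    tauto
  have hnewC : ∀ u v, s(u, v) ∈ C' → s(u, v) ∈ C ∨ (u ∈ A ∧ v ∈ A) := by
    intro u v h
    have := hC' h
    rw [Finset.mem_union, Finset.mem_inter, Finset.mk_mem_sym2_iff] at this
    tauto
  refine ⟨P \ K, K ∪ U, F \ A, ?_, ?_, ?_, ?_, ?_, ?_, ?_, ?_⟩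
  · refine .cons i K U hK ?_ hst.cl ?_ (hch.mono hCC Finset.sdiff_subset ?_)
    · rw [Finset.disjoint_left]; intro x hx; exact dPU (hKP hx)
    · intro v hv; exact hst.cnt v (Finset.mem_sdiff.mp hv).2
    · intro u hu v hv h
      rcases hnew u v h with h | h
      · exact h
      · exact absurd hu (dPU (hFP (hAF h.1)))
  · rw [Finset.disjoint_left]; grind
  · intro v; have := cov v; grind
  · rw [Finset.card_sdiff_of_subset hKP]; omega
  · have := card_aux hc hC' hW'
    rw [hA] at this; exact this
  · grind
  · have := Finset.card_sdiff_of_subset hAF; omega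
  · intro x hx v
    rw [Finset.mem_sdiff] at hx
    have := hfr x hx.1 v
    exact ⟨fun h => by have := hnewC x v h; tauto, fun h => by have := hnew x v h; tauto⟩

theorem Bld.run (j : ℕ) : ∀ {i p c f : ℕ} {C W : Finset (Sym2 (Fin n))},
    Bld i (p + 5 * j) c (f + 31 * j) C W →
    Forces (Kedges n) (Bld (i + j) p (c + 496 * j) f) (26 * j) C W := by
  induction j with
  | zero => intro i p c f C W h; exact Forces.of h
  | succ j ih =>
    intro i p c f C W h
    have h1 : Bld i ((p + 5 * j) + 5) c ((f + 31 * j) + 31) C W := by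
      convert h using 1 <;> ring
    refine (h1.step.bind (fun C' W' h' => ih h')).le (by omega) |>.mono ?_
    intro C' W' h'
    convert h' using 1 <;> ring

theorem Main.gadget {i p c : ℕ} {C W : Finset (Sym2 (Fin n))} {N d : ℕ} (h : Main i p c C W)
    (hN : 2 * c < N * d) (hp : N + 12 * (d + 1) ≤ p) (r : ℕ) (hr : r = 3 ∨ r = 6) :
    Forces (Kedges n) (Main i (p - r) (c + 78)) 7 C W := by
  obtain ⟨S, P, U, hS, hch, dSP, dSU, dPU, cov, hP, hc⟩ := h
  obtain ⟨A, hAP, hA, hcl⟩ := clean_set (C ∪ W) N d (by omega) 12 P (by omega)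
  have hfA : ∀ x, A.orderEmbOfFin hA x ∈ A := fun x => Finset.orderEmbOfFin_mem _ _ _
  set f : Fin 12 → Fin n := fun x => A.orderEmbOfFin hA x with hf
  have hinj : Function.Injective f := (A.orderEmbOfFin hA).injective
  have h0 := gadget_C.transfer (Sym2.map f) (Sym2.map.injective hinj)
    (B := Kedges n ∩ A.sym2) (C0 := C) (W0 := W) (by
      intro e he
      induction e with
      | h x y =>
        have hxy : f x ≠ f y := fun h => mem_K.mp he (hinj h)
        have := hcl _ (hfA x) _ (hfA y) hxy
        rw [Finset.mem_union, not_or] at this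
        rw [Sym2.map_mk]
        refine ⟨?_, this⟩
        simp only [Finset.mem_inter, Finset.mk_mem_sym2_iff]
        exact ⟨mem_K.mpr hxy, hfA x, hfA y⟩)
  simp only [Finset.image_empty, Finset.union_empty] at h0
  refine (h0.ext (B := Kedges n) Finset.inter_subset_left).mono ?_
  rintro C' W' ⟨⟨C1, W1, rfl, rfl, x1, x2, x3, x4, x5, x6, hnd, e1, e2, e3, e4, e5, e6⟩, hCC, hWW, hC', hW'⟩
  set C' := C ∪ C1.image (Sym2.map f)
  set W' := W ∪ W1.image (Sym2.map f)
  rw [Finset.disjoint_left] at dSP dSU dPU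
  have hE : ∀ x y, s(x, y) ∈ C1 → s(f x, f y) ∈ C' := by
    intro x y h
    exact Finset.mem_union_right _ (Finset.mem_image.mpr ⟨_, h, by simp⟩)
  have hE' : ∀ x y, s(x, y) ∈ C1 → s(f y, f x) ∈ C' := by
    intro x y h
    rw [Sym2.eq_swap]; exact hE x y h
  have hnew : ∀ u v, s(u, v) ∈ W' → s(u, v) ∈ W ∨ (u ∈ A ∧ v ∈ A) := by
    intro u v h
    have := hW' h
    rw [Finset.mem_union, Finset.mem_inter, Finset.mk_mem_sym2_iff] at this
    tauto
  have tri : ∀ x y z, x ≠ y → x ≠ z → y ≠ z → s(x, y) ∈ C1 → s(x, z) ∈ C1 → s(y, z) ∈ C1 →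
      ∃ T ⊆ P, T = {f x, f y, f z} ∧ T.card = 3 ∧ (∀ a ∈ T, ∀ b ∈ T, a ≠ b → s(a, b) ∈ C') := by
    intro x y z hxy hxz hyz h1 h2 h3
    refine ⟨{f x, f y, f z}, ?_, rfl, ?_, ?_⟩
    · intro a ha
      simp only [Finset.mem_insert, Finset.mem_singleton] at ha
      rcases ha with rfl | rfl | rfl <;> exact hAP (hfA _)
    · rw [Finset.card_eq_three]
      exact ⟨_, _, _, fun h => hxy (hinj h), fun h => hxz (hinj h), fun h => hyz (hinj h), rfl⟩
    · intro a ha b hb hab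
      simp only [Finset.mem_insert, Finset.mem_singleton] at ha hb
      rcases ha with rfl | rfl | rfl <;> rcases hb with rfl | rfl | rfl <;>
        first
        | exact absurd rfl hab
        | exact hE _ _ (by assumption)
        | exact hE' _ _ (by assumption)
  simp only [List.nodup_cons, List.mem_cons, List.not_mem_nil, or_false, not_or] at hnd
  obtain ⟨T1, hT1P, hT1, hc1, hcl1⟩ := tri x1 x2 x3 (by tauto) (by tauto) (by tauto) e1 e2 e3
  obtain ⟨T2, hT2P, hT2, hc2, hcl2⟩ := tri x4 x5 x6 (by tauto) (by tauto) (by tauto) e4 e5 e6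
  have dT : Disjoint T1 T2 := by
    rw [Finset.disjoint_left]
    intro a h1 h2
    rw [hT1] at h1; rw [hT2] at h2
    simp only [Finset.mem_insert, Finset.mem_singleton] at h1 h2
    rcases h1 with rfl | rfl | rfl <;> rcases h2 with h2 | h2 | h2 <;>
      (have := hinj h2; tauto)
  have hcard := card_aux hc hC' hW'
  rw [hA] at hcard
  have hS' : Tiled C' S := hS.mono hCC
  have hmk : ∀ R ⊆ P, R.card = r → Tiled C' (R ∪ S) → Main i (p - r) (c + 78) C' W' := by
    intro R hR hRr hT
    refine ⟨R ∪ S, P \ R, U, hT, hch.mono hCC Finset.sdiff_subset ?_, ?_, ?_, ?_, ?_, ?_, hcard⟩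
    · intro u hu v hv h
      rcases hnew u v h with h | h
      · exact h
      · exact absurd hu (dPU (hAP h.1))
    · rw [Finset.disjoint_left]; grind
    · rw [Finset.disjoint_left]; grind
    · rw [Finset.disjoint_left]; grind
    · intro v; have := cov v; grind
    · rw [Finset.card_sdiff_of_subset hR]; omega
  have hd1 : Disjoint T1 S := by rw [Finset.disjoint_left]; grind
  have hd2 : Disjoint T2 (T1 ∪ S) := by
    rw [Finset.disjoint_left] at dT ⊢; grind
  have ht1 : Tiled C' (T1 ∪ S) := .cons T1 S hc1 hcl1 hd1 hS'
  rcases hr with rfl | rfl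
  · exact hmk T1 hT1P hc1 ht1
  · refine hmk (T2 ∪ T1) (Finset.union_subset hT2P hT1P) ?_ ?_
    · rw [Finset.card_union_of_disjoint dT.symm]; omega
    · rw [Finset.union_assoc]; exact .cons T2 _ hc2 hcl2 hd2 ht1

theorem Main.run {i q N d : ℕ} (hq : N + 12 * (d + 1) ≤ q) (j : ℕ) :
    ∀ {c : ℕ} {C W : Finset (Sym2 (Fin n))}, Main i (q + 6 * j) c C W →
    2 * (c + 78 * j) < N * d →
    Forces (Kedges n) (Main i q (c + 78 * j)) (7 * j) C W := by
  induction j with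
  | zero => intro c C W h _; exact Forces.of h
  | succ j ih =>
    intro c C W h hN
    have h1 := h.gadget (N := N) (d := d) (by omega) (by omega) 6 (Or.inr rfl)
    have h2 : Forces (Kedges n) (Main i (q + 6 * j) (c + 78)) 7 C W := by
      have he : q + 6 * j = q + 6 * (j + 1) - 6 := by omega
      rw [he]; exact h1
    refine ((h2.bind (fun C' W' h' => ih h' (by omega))).le (by omega)).mono ?_
    intro C' W' h'
    convert h' using 1; ring

theorem pair_step {B C W : Finset (Sym2 (Fin n))} {u1 u2 v : Fin n} (h12 : u1 ≠ u2)
    (b1 : s(u1, v) ∈ B) (b2 : s(u2, v) ∈ B)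
    (w1 : s(u1, v) ∉ W) (w2 : s(u2, v) ∉ W) :
    Forces B (fun C' W' => C ⊆ C' ∧ (∃ x, (x = u1 ∨ x = u2) ∧ s(x, v) ∈ C') ∧
      ∀ y, y ≠ u1 → y ≠ u2 → s(y, v) ∉ W → s(y, v) ∉ W') 1 C W := by
  by_cases c1 : s(u1, v) ∈ C
  · exact Forces.of ⟨subset_rfl, ⟨u1, by simp, c1⟩, fun _ _ _ h => h⟩
  by_cases c2 : s(u2, v) ∈ C
  · exact Forces.of ⟨subset_rfl, ⟨u2, by simp, c2⟩, fun _ _ _ h => h⟩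
  refine Forces.step s(u1, v) s(u2, v) ?_ ⟨b1, c1, w1⟩ ⟨b2, c2, w2⟩ (Forces.of ?_) (Forces.of ?_)
  · simp only [ne_eq, Sym2.eq_iff]; grind
  · refine ⟨Finset.subset_insert _ _, ⟨u1, by simp, by simp⟩, ?_⟩
    intro y h1 h2 h
    rw [Finset.mem_insert, not_or]
    exact ⟨by simp only [Sym2.eq_iff]; grind, h⟩
  · refine ⟨Finset.subset_insert _ _, ⟨u2, by simp, by simp⟩, ?_⟩
    intro y h1 h2 h
    rw [Finset.mem_insert, not_or]
    exact ⟨by simp only [Sym2.eq_iff]; grind, h⟩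

theorem Main.absorb {i c : ℕ} {C W : Finset (Sym2 (Fin n))} (h : Main (i+1) (i+1) c C W) :
    Forces (Kedges n) (fun C' W' => ∃ c', Main i i c' C' W') 2 C W := by
  obtain ⟨S, P, U', hS, hch, dSP, dSU, dPU, cov, hP, hc⟩ := h
  cases hch with
  | cons _ K U hK dKU hcl hcnt hch =>
  obtain ⟨v, hv⟩ := Finset.card_pos.mp (show 0 < P.card by omega)
  rw [Finset.disjoint_left] at dSP dSU dPU
  have hvK : v ∉ K := fun h => dPU hv (Finset.mem_union_left _ h)
  have h4 : 4 ≤ (K.filter (fun u => s(u, v) ∉ W)).card := by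
    have h1 := hcnt v hv
    have h2 := Finset.card_filter_add_card_filter_not (s := K) (fun u => s(u, v) ∈ W)
    omega
  obtain ⟨Q, hQ, hQ4⟩ := Finset.exists_subset_card_eq h4
  obtain ⟨u1, u2, u3, u4, h12, h13, h14, h23, h24, h34, rfl⟩ := Finset.card_eq_four.mp hQ4
  have hm : ∀ u ∈ ({u1, u2, u3, u4} : Finset (Fin n)), u ∈ K ∧ s(u, v) ∉ W := by
    intro u hu; simpa using hQ hu
  obtain ⟨k1, w1⟩ := hm u1 (by simp)
  obtain ⟨k2, w2⟩ := hm u2 (by simp)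
  obtain ⟨k3, w3⟩ := hm u3 (by simp)
  obtain ⟨k4, w4⟩ := hm u4 (by simp)
  have hb : ∀ u ∈ K, s(u, v) ∈ Kedges n ∩ (insert v K).sym2 := by
    intro u hu
    rw [Finset.mem_inter, mem_K, Finset.mk_mem_sym2_iff]
    exact ⟨fun h => hvK (h ▸ hu), by simp [hu], by simp⟩
  have hf : Forces (Kedges n ∩ (insert v K).sym2) (fun C' W' => ∃ x ∈ K, ∃ y ∈ K, x ≠ y ∧
      s(x, v) ∈ C' ∧ s(y, v) ∈ C') 2 C W := by
    refine (pair_step (C := C) h12 (hb _ k1) (hb _ k2) w1 w2).bind (s := 1) ?_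
    rintro C' W' ⟨hCC, ⟨x, hx, hxC⟩, hW⟩
    refine (pair_step (C := C') h34 (hb _ k3) (hb _ k4) (hW _ h13.symm h23.symm w3)
      (hW _ h14.symm h24.symm w4)).mono ?_
    rintro C'' W'' ⟨hCC', ⟨y, hy, hyC⟩, -⟩
    exact ⟨x, by grind, y, by grind, by grind, hCC' hxC, hyC⟩
  refine (hf.ext (B := Kedges n) Finset.inter_subset_left).mono ?_
  rintro C' W' ⟨⟨x, hx, y, hy, hxy, hxC, hyC⟩, hCC, hWW, hC', hW'⟩
  have hnew : ∀ a b, s(a, b) ∈ W' → s(a, b) ∈ W ∨ (a ∈ insert v K ∧ b ∈ insert v K) := by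
    intro a b h
    have := hW' h
    rw [Finset.mem_union, Finset.mem_inter, Finset.mk_mem_sym2_iff] at this
    tauto
  have hxv : x ≠ v := fun h => hvK (h ▸ hx)
  have hyv : y ≠ v := fun h => hvK (h ▸ hy)
  have hvS : v ∉ S := fun h => dSP h hv
  have hKS : ∀ a ∈ K, a ∉ S := fun a ha h => dSU h (Finset.mem_union_left _ ha)
  have hKP : ∀ a ∈ K, a ∉ P := fun a ha h => dPU h (Finset.mem_union_left _ ha)
  rw [Finset.disjoint_left] at dKU
  clear hf hb hm hQ hQ4 h4 hcnt k1 k2 k3 k4 w1 w2 w3 w4 h12 h13 h14 h23 h24 h34 u1 u2 u3 u4 hC' hW'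
  refine ⟨(C' ∪ W').card, ({x, y, v} : Finset (Fin n)) ∪ ((K.erase x).erase y ∪ S), P.erase v, U,
    ?_, hch.mono hCC (Finset.erase_subset _ _) ?_, ?_, ?_, ?_, ?_, ?_, le_rfl⟩
  · refine .cons _ _ ?_ ?_ ?_ (.cons _ _ ?_ ?_ ?_ (hS.mono hCC))
    · rw [Finset.card_eq_three]; exact ⟨_, _, _, hxy, hxv, hyv, rfl⟩
    · have hxyC := hCC (hcl x hx y hy hxy)
      have h1 := hxyC; have h2 := hxC; have h3 := hyC
      rw [Sym2.eq_swap] at h1 h2 h3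
      intro a ha b hb hab
      simp only [Finset.mem_insert, Finset.mem_singleton] at ha hb
      rcases ha with rfl | rfl | rfl <;> rcases hb with rfl | rfl | rfl <;>
        first
        | exact absurd rfl hab
        | assumption
    · clear hcl hxC hyC hnew; rw [Finset.disjoint_left]; grind
    · rw [Finset.card_erase_of_mem (by simp [hy, hxy.symm]), Finset.card_erase_of_mem hx]; omega
    · intro a ha b hb hab
      exact hCC (hcl a (by grind) b (by grind) hab)
    · clear hcl hxC hyC hnew; rw [Finset.disjoint_left]; grind
  · intro u hu w hw h
    rcases hnew u w h with h | h
    · exact h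
    · have := hKP w; clear hcl hxC hyC hnew; grind
  · clear hcl hxC hyC hnew; rw [Finset.disjoint_left]; grind
  · clear hcl hxC hyC hnew; rw [Finset.disjoint_left]; grind
  · clear hcl hxC hyC hnew; rw [Finset.disjoint_left]; grind
  · intro w; have := cov w; clear hcl hxC hyC hnew; grind
  · rw [Finset.card_erase_of_mem hv]; omega

theorem Main.finish (i : ℕ) : ∀ {c : ℕ} {C W : Finset (Sym2 (Fin n))}, Main i i c C W →
    Forces (Kedges n)
      (fun C' _ => ∃ A ∈ factorFamily 3 n (⊤ : SimpleGraph (Fin 3)).edgeSet, A ⊆ C')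
      (2 * i) C W := by
  induction i with
  | zero =>
    rintro c C W ⟨S, P, U, hS, hch, dSP, dSU, dPU, cov, hP, hc⟩
    apply Forces.of
    apply Tiled.win
    cases hch
    have : S = Finset.univ := by
      rw [Finset.card_eq_zero] at hP; subst hP
      ext v; simpa using cov v
    rwa [this] at hS
  | succ i ih =>
    intro c C W h
    refine (h.absorb.bind (s := 2 * i) ?_).le (by omega)
    rintro C' W' ⟨c', h'⟩
    exact ih h'

theorem total (n s N d j : ℕ) (r : ℕ) (hr : r = 0 ∨ r = 3) (hn : n = 6 * s + 6 * j + r)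
    (hs : 31 * s ≤ n) (hN : N + 12 * (d + 1) ≤ s)
    (hd : 2 * (496 * s + 78 * (j + 1)) < N * d) :
    tauWC (Kedges n) (factorFamily 3 n (⊤ : SimpleGraph (Fin 3)).edgeSet) 1 ≤
      28 * s + 7 * j + 7 := by
  apply Nat.sInf_le
  apply Forces.waiterWins
  have h0 : Bld (n := n) 0 ((n - 5 * s) + 5 * s) 0 ((n - 31 * s) + 31 * s) ∅ ∅ :=
    ⟨Finset.univ, ∅, Finset.univ, .nil, by simp, by simp, by simp; omega, by simp, by simp,
      by simp; omega, by simp⟩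
  have h1 := h0.run
  have h2 : Forces (Kedges n) (Main s (s + 6 * j) (496 * s + 78)) (26 * s + 7) ∅ ∅ := by
    refine h1.bind ?_
    intro C W h
    have h := h.main
    rcases hr with rfl | rfl
    · apply Forces.of
      obtain ⟨S, P, U, hS, hch, dSP, dSU, dPU, cov, hP, hc⟩ := h
      refine ⟨S, P, U, hS, by simpa using hch, dSP, dSU, dPU, cov, by omega, by omega⟩
    · have := h.gadget (N := N) (d := d) (by omega) (by omega) 3 (Or.inl rfl)
      convert this using 2
      all_goals omega
  have h3 := h2.bind (fun C W h => h.run (N := N) (d := d) hN j (by omega))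
  have h4 := h3.bind (fun C W h => h.finish s)
  exact h4.le (by omega)

end Final

/-- For every `ε > 0` and every large enough `n` divisible by `3`, in the unbiased Waiter-Client
triangle factor game on `K_n`, Waiter has a strategy to win within `(7/6 + ε)·n` rounds:
`τ_WC(F_{n,K₃-fac}, 1) ≤ (7/6)·n + o(n)`. -/
theorem WC_triangle_factor_upper :
    ∀ ε : ℝ, 0 < ε → ∃ n₀ : ℕ, ∀ n : ℕ, n₀ ≤ n → 3 ∣ n →
      (tauWC (Kedges n) (factorFamily 3 n (⊤ : SimpleGraph (Fin 3)).edgeSet) 1 : ℝ) ≤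
        ((7 : ℝ) / 6 + ε) * n := by

  intro ε hε
  obtain ⟨q0, hq0⟩ := exists_nat_gt (22 / ε)
  obtain ⟨q, hq31, hqq⟩ : ∃ q : ℕ, 31 ≤ q ∧ q0 ≤ q := ⟨max 31 q0, le_max_left _ _, le_max_right _ _⟩
  obtain ⟨d, hd⟩ : ∃ d, d = 2400 * q + 1 := ⟨_, rfl⟩
  refine ⟨2 * q + 24 * q * (d + 1) + 7 * q, ?_⟩
  intro n hn h3
  obtain ⟨s, hs⟩ : ∃ s, s = n / q := ⟨_, rfl⟩
  have hq : 0 < q := by omega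
  have hsq : q * s ≤ n := by rw [hs]; exact Nat.mul_div_le n q
  have hsq' : n < q * s + q := by
    rw [hs]; have := Nat.lt_mul_div_succ n hq; linarith [this]
  have hn' : 2 * q + 24 * (q * (d + 1)) + 7 * q ≤ n := by linarith
  have h31 : 31 * s ≤ n := (Nat.mul_le_mul_right s hq31).trans hsq
  have hNs : 12 * (d + 1) ≤ s := by
    by_contra hcon
    push Not at hcon
    have := Nat.mul_le_mul_left q hcon.le
    nlinarith
  obtain ⟨N, hN⟩ := Nat.exists_eq_add_of_le hNs
  have hNn : n ≤ 2 * q * N := by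
    subst hN
    nlinarith
  obtain ⟨j, r, hr, hnj⟩ : ∃ j r, (r = 0 ∨ r = 3) ∧ n = 6 * s + 6 * j + r :=
    ⟨(n - 6 * s) / 6, (n - 6 * s) % 6, by omega, by omega⟩
  have hNpos : 0 < N := by
    by_contra h
    have : N = 0 := by omega
    subst this
    omega
  have hNd : 1200 * n < N * d := by
    rw [hd]; nlinarith
  have ht := total n s N d j r hr hnj h31 (by omega) (by omega)
  have ht' : (tauWC (Kedges n) (factorFamily 3 n (⊤ : SimpleGraph (Fin 3)).edgeSet) 1 : ℝ) ≤
      28 * s + 7 * j + 7 := by exact_mod_cast ht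
  have hnR : (n : ℝ) = 6 * s + 6 * j + r := by exact_mod_cast hnj
  have hr0 : (0 : ℝ) ≤ r := by positivity
  have hqR : 22 < ε * q := by
    have h1 : 22 / ε < (q : ℝ) := hq0.trans_le (by exact_mod_cast hqq)
    rw [div_lt_iff₀ hε] at h1; linarith
  have hqp : (0 : ℝ) < q := by exact_mod_cast hq
  have h21 : (q : ℝ) * (21 * s + 7) ≤ 22 * n := by
    have h1 : (q : ℝ) * s ≤ n := by exact_mod_cast hsq
    have h2 : (7 : ℝ) * q ≤ n := by
      have : 7 * q ≤ n := by omega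
      exact_mod_cast this
    linarith
  have hfin : (21 : ℝ) * s + 7 ≤ ε * n := by
    have h5 : (22 : ℝ) * n ≤ (ε * q) * n := by gcongr
    have h6 : (q : ℝ) * (21 * s + 7) ≤ q * (ε * n) := by linarith
    exact le_of_mul_le_mul_left h6 hqp
  linarith
end

section
/- For every large enough integer n, in the unbiased Waiter-Client game on the edge set of K_n, Waiter has a strategy to force Client's graph to contain a Hamilton cycle H within n + 1 rounds such that, at the moment H is completed, the following all hold: (1) every vertex v of K_n satisfies d_W(v) < 10, where d_W(v) is the number of Waiter's edges incident to v; (2) the first edge that Client claimed in the game belongs to E(H); and (3) Client's graph contains a path P of length n/5 such that Waiter has claimed no edge with both endpoints in V(P). -/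
open Finset

/-- `WaiterWinsHist board b win t hist W` means: starting from the position where Client has
claimed the elements in the list `hist` (in this order) and Waiter owns the elements of `W`,
Waiter can force that within the next `t` rounds of the `b`-biased Waiter-Client game on the
board `board` a position is reached in which the predicate `win` holds of (Client's history,
Waiter's elements).  In each round Waiter offers `b+1` previously unclaimed board elements (or
all remaining unclaimed elements, if fewer than `b+1` remain); Client claims exactly one of
them, the rest go to Waiter. -/
def WaiterWinsHist {X : Type*} [DecidableEq X] (board : Finset X) (b : ℕ)
    (win : List X → Finset X → Prop) :
    ℕ → List X → Finset X → Prop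
  | 0, hist, W => win hist W
  | (t+1), hist, W => win hist W ∨
      ∃ O : Finset X, O.Nonempty ∧ O ⊆ board \ (hist.toFinset ∪ W) ∧
        O.card = min (b + 1) ((board \ (hist.toFinset ∪ W)).card) ∧
        ∀ x ∈ O, WaiterWinsHist board b win t (hist ++ [x]) (W ∪ O.erase x)

/-- The target condition of Theorem 2.1 (`WCUHC`): Client's claimed edges (the list `hist`)
contain a Hamilton cycle `H` such that, at this moment, (1) every vertex is incident to fewer
than `10` of Waiter's edges, (2) the first edge Client claimed belongs to `H`, and (3) Client's
graph contains a path of length `n/5` none of whose vertex pairs is joined by a Waiter edge. -/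
def HamWithProperties (n : ℕ) (hist : List (Sym2 (Fin n))) (W : Finset (Sym2 (Fin n))) : Prop :=
  ∃ (u : Fin n) (p : (⊤ : SimpleGraph (Fin n)).Walk u u),
    p.IsHamiltonianCycle ∧ (∀ e ∈ p.edges, e ∈ hist.toFinset) ∧
    -- (1) every vertex has Waiter-degree less than 10
    (∀ v : Fin n, (W.filter (fun e => v ∈ e)).card < 10) ∧
    -- (2) the first edge Client claimed lies on the Hamilton cycle
    (∃ e₀, hist.head? = some e₀ ∧ e₀ ∈ p.edges) ∧
    -- (3) a path of length n/5 in Client's graph with no Waiter edge inside its vertex set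
    (∃ (a b : Fin n) (q : (⊤ : SimpleGraph (Fin n)).Walk a b),
      q.IsPath ∧ q.length = n / 5 ∧ (∀ e ∈ q.edges, e ∈ hist.toFinset) ∧
      ∀ x y : Fin n, x ∈ q.support → y ∈ q.support → s(x, y) ∉ W)

def PathIn {n : ℕ} (x y : Fin n) (A : Finset (Fin n)) (E : Finset (Sym2 (Fin n))) : Prop :=
  ∃ p : (⊤ : SimpleGraph (Fin n)).Walk x y, p.IsPath ∧ (∀ v, v ∈ p.support ↔ v ∈ A) ∧
    (∀ e, e ∈ p.edges ↔ e ∈ E)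

lemma PathIn.nil {n : ℕ} (x : Fin n) : PathIn x x {x} ∅ :=
  ⟨SimpleGraph.Walk.nil, by simp, by simp, by simp⟩

lemma PathIn.reverse {n : ℕ} {x y : Fin n} {A E} (h : PathIn x y A E) : PathIn y x A E := by
  obtain ⟨p, h1, h2, h3⟩ := h
  exact ⟨p.reverse, h1.reverse, by simpa using h2, by simpa using h3⟩

lemma PathIn.join {n : ℕ} {a u w r : Fin n} {A1 E1 A2 E2} (h : PathIn a u A1 E1)
    (h' : PathIn w r A2 E2) (hd : Disjoint A1 A2) :
    PathIn a r (A1 ∪ A2) (insert s(u, w) (E1 ∪ E2)) := by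
  obtain ⟨p, h1, h2, h3⟩ := h
  obtain ⟨q, g1, g2, g3⟩ := h'
  have huw : u ≠ w := by
    rintro rfl
    exact (Finset.disjoint_left.1 hd) ((h2 u).1 p.end_mem_support) ((g2 u).1 q.start_mem_support)
  have adj : (⊤ : SimpleGraph (Fin n)).Adj u w := by simpa using huw
  refine ⟨p.append (SimpleGraph.Walk.cons adj q), ?_, ?_, ?_⟩
  · rw [SimpleGraph.Walk.isPath_def, SimpleGraph.Walk.support_append]
    simp only [SimpleGraph.Walk.support_cons, List.tail_cons]
    rw [List.nodup_append]
    refine ⟨h1.support_nodup, g1.support_nodup, ?_⟩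
    intro x hx y hy hxy
    subst hxy
    exact (Finset.disjoint_left.1 hd) ((h2 x).1 hx) ((g2 x).1 hy)
  · intro v
    rw [SimpleGraph.Walk.support_append]
    simp [h2, g2]
  · intro e
    rw [SimpleGraph.Walk.edges_append]
    simp [h3, g3]
    tauto

lemma PathIn.cons {n : ℕ} {x y r : Fin n} {A E} (h : PathIn x y A E) (hr : r ∉ A) :
    PathIn r y (insert r A) (insert s(x, r) E) := by
  have := (PathIn.nil r).join h (by simpa using hr)
  simpa [Sym2.eq_swap] using this

lemma PathIn.mem_left {n : ℕ} {x y : Fin n} {A E} (h : PathIn x y A E) : x ∈ A := by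
  obtain ⟨p, h1, h2, h3⟩ := h
  exact (h2 _).1 p.start_mem_support

lemma PathIn.mem_right {n : ℕ} {x y : Fin n} {A E} (h : PathIn x y A E) : y ∈ A :=
  h.reverse.mem_left

lemma PathIn.edge_mem {n : ℕ} {x y u v : Fin n} {A E} (h : PathIn x y A E) (he : s(u, v) ∈ E) :
    u ∈ A ∧ v ∈ A := by
  obtain ⟨p, h1, h2, h3⟩ := h
  rw [← h3] at he
  exact ⟨(h2 _).1 (p.fst_mem_support_of_mem_edges he), (h2 _).1 (p.snd_mem_support_of_mem_edges he)⟩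

lemma not_mem_edges_of_two_le {n : ℕ} {x y : Fin n} (p : (⊤ : SimpleGraph (Fin n)).Walk x y)
    (hp : p.IsPath) (hl : 2 ≤ p.length) : s(x, y) ∉ p.edges := by
  cases p with
  | nil => simp
  | @cons _ v _ h q =>
    rw [SimpleGraph.Walk.cons_isPath_iff] at hp
    intro he
    simp only [SimpleGraph.Walk.edges_cons, List.mem_cons] at he
    rcases he with he | he
    · have : y = v := by
        rw [Sym2.eq_iff] at he
        rcases he with he | he
        · exact he.2
        · exact absurd he.1 (by simpa using h.ne)
      subst this
      have := hp.1
      rw [SimpleGraph.Walk.isPath_iff_nil, ← SimpleGraph.Walk.length_eq_zero_iff] at this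
      simp [this] at hl
    · exact hp.2 (q.fst_mem_support_of_mem_edges he)

lemma PathIn.close {n : ℕ} (hn : 3 ≤ n) {x y : Fin n} {E} (h : PathIn x y Finset.univ E) :
    ∃ p : (⊤ : SimpleGraph (Fin n)).Walk y y, p.IsHamiltonianCycle ∧
      ∀ e, e ∈ p.edges ↔ e = s(y, x) ∨ e ∈ E := by
  obtain ⟨p, h1, h2, h3⟩ := h
  have hH : p.IsHamiltonian := h1.isHamiltonian_of_mem (by simpa using h2)
  have hl := hH.length_eq
  simp only [Fintype.card_fin] at hl
  have hne : y ≠ x := by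
    rintro rfl
    rw [SimpleGraph.Walk.isPath_iff_nil, ← SimpleGraph.Walk.length_eq_zero_iff] at h1
    omega
  have adj : (⊤ : SimpleGraph (Fin n)).Adj y x := by simpa using hne
  refine ⟨SimpleGraph.Walk.cons adj p, ⟨?_, ?_⟩, ?_⟩
  · rw [SimpleGraph.Walk.cons_isCycle_iff]
    refine ⟨h1, ?_⟩
    rw [Sym2.eq_swap]
    exact not_mem_edges_of_two_le p h1 (by omega)
  · intro a
    have := hH a
    simpa using this
  · simp [h3]

def SplitAt {n : ℕ} (x y : Fin n) (A : Finset (Fin n)) (E : Finset (Sym2 (Fin n)))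
    (u v : Fin n) : Prop :=
  ∃ A1 A2 E1 E2, PathIn x u A1 E1 ∧ PathIn v y A2 E2 ∧ Disjoint A1 A2 ∧ A1 ∪ A2 = A ∧
    insert s(u, v) (E1 ∪ E2) = E

lemma walk_split {V : Type*} {G : SimpleGraph V} {x y : V} (p : G.Walk x y) (i : ℕ)
    (hi : i < p.length) : ∃ (p1 : G.Walk x (p.getVert i)) (h : G.Adj (p.getVert i) (p.getVert (i+1)))
      (p2 : G.Walk (p.getVert (i+1)) y), p = p1.append (SimpleGraph.Walk.cons h p2) := by
  induction p generalizing i with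
  | nil => simp at hi
  | @cons a b c h q ih =>
    cases i with
    | zero =>
      cases q with
      | nil => exact ⟨SimpleGraph.Walk.nil, h, SimpleGraph.Walk.nil, rfl⟩
      | cons h' q' =>
        exact ⟨SimpleGraph.Walk.nil, h, SimpleGraph.Walk.cons h' q', rfl⟩
    | succ i =>
      obtain ⟨p1, h', p2, e⟩ := ih i (by simpa using hi)
      refine ⟨SimpleGraph.Walk.cons h p1, h', p2, ?_⟩
      conv_lhs => rw [e]
      rfl

lemma split_of_walk {n : ℕ} {x y : Fin n} {A E} (p : (⊤ : SimpleGraph (Fin n)).Walk x y)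
    (h1 : p.IsPath) (h2 : ∀ v, v ∈ p.support ↔ v ∈ A) (h3 : ∀ e, e ∈ p.edges ↔ e ∈ E)
    (i : ℕ) (hi : i < p.length) : SplitAt x y A E (p.getVert i) (p.getVert (i+1)) := by
  obtain ⟨p1, h, p2, e⟩ := walk_split p i hi
  generalize p.getVert i = u at *
  generalize p.getVert (i+1) = v at *
  subst e
  rw [SimpleGraph.Walk.isPath_def, SimpleGraph.Walk.support_append] at h1
  simp only [SimpleGraph.Walk.support_cons, List.tail_cons, List.nodup_append] at h1
  refine ⟨p1.support.toFinset, p2.support.toFinset, p1.edges.toFinset, p2.edges.toFinset,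
    ⟨p1, ?_, by simp, by simp⟩, ⟨p2, ?_, by simp, by simp⟩, ?_, ?_, ?_⟩
  · exact SimpleGraph.Walk.IsPath.mk' h1.1
  · exact SimpleGraph.Walk.IsPath.mk' h1.2.1
  · rw [Finset.disjoint_left]
    intro a ha hb
    exact h1.2.2 a (by simpa using ha) a (by simpa using hb) rfl
  · ext a
    rw [← h2, SimpleGraph.Walk.support_append]
    simp
  · ext a
    rw [← h3, SimpleGraph.Walk.edges_append]
    simp
    tauto

lemma PathIn.triple {n : ℕ} {x y : Fin n} {A E} (h : PathIn x y A E) (B : Finset (Fin n))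
    (hB : 3 * B.card + 3 ≤ A.card) : ∃ u v w, u ∉ B ∧ v ∉ B ∧ w ∉ B ∧ u ≠ v ∧ v ≠ w ∧ u ≠ w ∧
      SplitAt x y A E u v ∧ SplitAt x y A E v w ∧ u ∈ A ∧ v ∈ A ∧ w ∈ A := by
  obtain ⟨p, h1, h2, h3⟩ := h
  have hinj := h1.getVert_injOn
  have hA : A.card = p.length + 1 := by
    rw [← SimpleGraph.Walk.length_support, ← List.toFinset_card_of_nodup h1.support_nodup]
    congr 1
    ext v
    simp [h2]
  have key : ∀ k, k ≤ 2 → ((Finset.range (p.length - 1)).filter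
      (fun i => p.getVert (i + k) ∈ B)).card ≤ B.card := by
    intro k hk
    apply Finset.card_le_card_of_injOn (fun i => p.getVert (i + k))
    · intro i hi
      simp at hi
      simpa using hi.2
    · intro i hi j hj hij
      simp at hi hj
      have := hinj (by simp; omega) (by simp; omega) hij
      omega
  have hex : ∃ i ∈ Finset.range (p.length - 1), p.getVert (i+0) ∉ B ∧ p.getVert (i+1) ∉ B ∧
      p.getVert (i+2) ∉ B := by
    by_contra hcon
    push Not at hcon
    have hsub : Finset.range (p.length - 1) ⊆
      ((Finset.range (p.length - 1)).filter (fun i => p.getVert (i + 0) ∈ B)) ∪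
      (((Finset.range (p.length - 1)).filter (fun i => p.getVert (i + 1) ∈ B)) ∪
      ((Finset.range (p.length - 1)).filter (fun i => p.getVert (i + 2) ∈ B))) := by
      intro i hi
      have := hcon i hi
      simp only [Finset.mem_union, Finset.mem_filter]
      tauto
    have c := Finset.card_le_card hsub
    have c1 := (Finset.card_union_le _ _).trans' c
    have c2 := Finset.card_union_le ((Finset.range (p.length - 1)).filter (fun i => p.getVert (i + 1) ∈ B))
      ((Finset.range (p.length - 1)).filter (fun i => p.getVert (i + 2) ∈ B))
    have k0 := key 0 (by omega)
    have k1 := key 1 (by omega)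
    have k2 := key 2 (by omega)
    rw [Finset.card_range] at c1
    omega
  obtain ⟨i, hi, b0, b1, b2⟩ := hex
  rw [Finset.mem_range] at hi
  have ne : ∀ j k, j ≤ p.length → k ≤ p.length → j ≠ k → p.getVert j ≠ p.getVert k := by
    intro j k hj hk hjk he
    exact hjk (hinj (by simpa using hj) (by simpa using hk) he)
  refine ⟨_, _, _, b0, b1, b2, ne _ _ (by omega) (by omega) (by omega),
    ne _ _ (by omega) (by omega) (by omega), ne _ _ (by omega) (by omega) (by omega),
    split_of_walk p h1 h2 h3 _ (by omega), split_of_walk p h1 h2 h3 _ (by omega),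
    (h2 _).1 (p.getVert_mem_support _), (h2 _).1 (p.getVert_mem_support _),
    (h2 _).1 (p.getVert_mem_support _)⟩

lemma waiter_step {n : ℕ} {win : List (Sym2 (Fin n)) → Finset (Sym2 (Fin n)) → Prop}
    {t : ℕ} {hist : List (Sym2 (Fin n))} {W : Finset (Sym2 (Fin n))} (a b c d : Fin n)
    (hab : a ≠ b) (hcd : c ≠ d) (hne : s(a, b) ≠ s(c, d))
    (h1 : s(a, b) ∉ hist.toFinset) (h2 : s(a, b) ∉ W)
    (h3 : s(c, d) ∉ hist.toFinset) (h4 : s(c, d) ∉ W)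
    (w1 : WaiterWinsHist (Kedges n) 1 win t (hist ++ [s(a, b)]) (insert s(c, d) W))
    (w2 : WaiterWinsHist (Kedges n) 1 win t (hist ++ [s(c, d)]) (insert s(a, b) W)) :
    WaiterWinsHist (Kedges n) 1 win (t + 1) hist W := by
  right
  have hsub : ({s(a, b), s(c, d)} : Finset (Sym2 (Fin n))) ⊆
      Kedges n \ (hist.toFinset ∪ W) := by
    intro e he
    simp only [Finset.mem_insert, Finset.mem_singleton] at he
    rcases he with rfl | rfl
    · simp only [Finset.mem_sdiff, Finset.mem_union, not_or]
      exact ⟨by simp [Kedges, hab], h1, h2⟩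
    · simp only [Finset.mem_sdiff, Finset.mem_union, not_or]
      exact ⟨by simp [Kedges, hcd], h3, h4⟩
  have hc : ({s(a, b), s(c, d)} : Finset (Sym2 (Fin n))).card = 2 := Finset.card_pair hne
  refine ⟨{s(a, b), s(c, d)}, by simp, hsub, ?_, ?_⟩
  · have := Finset.card_le_card hsub
    rw [hc] at this ⊢
    omega
  · intro e he
    simp only [Finset.mem_insert, Finset.mem_singleton] at he
    rcases he with rfl | rfl
    · have : W ∪ ({s(a, b), s(c, d)} : Finset (Sym2 (Fin n))).erase s(a, b) = insert s(c, d) W := by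
        ext f
        simp only [Finset.mem_union, Finset.mem_erase, Finset.mem_insert, Finset.mem_singleton]
        constructor
        · tauto
        · rintro (rfl | h)
          · exact Or.inr ⟨hne.symm, Or.inr rfl⟩
          · exact Or.inl h
      rw [this]; exact w1
    · have : W ∪ ({s(a, b), s(c, d)} : Finset (Sym2 (Fin n))).erase s(c, d) = insert s(a, b) W := by
        ext f
        simp only [Finset.mem_union, Finset.mem_erase, Finset.mem_insert, Finset.mem_singleton]
        constructor
        · tauto
        · rintro (rfl | h)
          · exact Or.inr ⟨hne, Or.inl rfl⟩
          · exact Or.inl h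
      rw [this]; exact w2

def dW {n : ℕ} (W : Finset (Sym2 (Fin n))) (v : Fin n) : ℕ := (W.filter (fun e => v ∈ e)).card

lemma dW_insert_le {n : ℕ} (W : Finset (Sym2 (Fin n))) (e : Sym2 (Fin n)) (v : Fin n) :
    dW (insert e W) v ≤ dW W v + 1 := by
  unfold dW
  rw [Finset.filter_insert]
  split_ifs
  · exact Finset.card_insert_le _ _
  · omega

lemma dW_insert_of_ne {n : ℕ} (W : Finset (Sym2 (Fin n))) (a b v : Fin n) (h : v ≠ a)
    (h' : v ≠ b) : dW (insert s(a, b) W) v = dW W v := by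
  unfold dW
  rw [Finset.filter_insert, if_neg]
  simp [h, h']

lemma dW_zero {n : ℕ} {W : Finset (Sym2 (Fin n))} {v : Fin n} (h : dW W v = 0) (u : Fin n) :
    s(v, u) ∉ W := by
  unfold dW at h
  rw [Finset.card_eq_zero, Finset.filter_eq_empty_iff] at h
  intro hh
  exact h hh (by simp)

lemma nbr_card_le {n : ℕ} (W : Finset (Sym2 (Fin n))) (v : Fin n) :
    (Finset.univ.filter (fun u => s(v, u) ∈ W)).card ≤ dW W v := by
  unfold dW
  apply Finset.card_le_card_of_injOn (fun u => s(v, u))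
  · intro u hu
    simp at hu
    simp [hu]
  · intro a _ b _ hab
    have hab' : s(v, a) = s(v, b) := hab
    rw [Sym2.eq_iff] at hab'
    rcases hab' with h | h
    · exact h.2
    · exact h.2.trans h.1

def GoodQ {n : ℕ} (hist : List (Sym2 (Fin n))) (W : Finset (Sym2 (Fin n)))
    (A : Finset (Fin n)) : Prop :=
  ∃ (a b : Fin n) (q : (⊤ : SimpleGraph (Fin n)).Walk a b),
      q.IsPath ∧ q.length = n / 5 ∧ (∀ e ∈ q.edges, e ∈ hist.toFinset) ∧
      (∀ x y : Fin n, x ∈ q.support → y ∈ q.support → s(x, y) ∉ W) ∧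
      ∀ x ∈ q.support, x ∈ A

lemma GoodQ.step {n : ℕ} {hist : List (Sym2 (Fin n))} {W : Finset (Sym2 (Fin n))}
    {A : Finset (Fin n)} (h : GoodQ hist W A) (e : Sym2 (Fin n)) (c d : Fin n)
    (hc : c ∉ A) : GoodQ (hist ++ [e]) (insert s(c, d) W) A := by
  obtain ⟨a, b, q, h1, h2, h3, h4, h5⟩ := h
  refine ⟨a, b, q, h1, h2, ?_, ?_, h5⟩
  · intro f hf
    have := h3 f hf
    simp at this ⊢
    tauto
  · intro x y hx hy hxy
    rw [Finset.mem_insert] at hxy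
    rcases hxy with hxy | hxy
    · rw [Sym2.eq_iff] at hxy
      rcases hxy with ⟨rfl, rfl⟩ | ⟨rfl, rfl⟩
      · exact hc (h5 _ hx)
      · exact hc (h5 _ hy)
    · exact h4 x y hx hy hxy

lemma GoodQ.step' {n : ℕ} {hist : List (Sym2 (Fin n))} {W : Finset (Sym2 (Fin n))}
    {A : Finset (Fin n)} (h : GoodQ hist W A) (e : Sym2 (Fin n)) (c d : Fin n)
    (hc : d ∉ A) : GoodQ (hist ++ [e]) (insert s(c, d) W) A := by
  rw [Sym2.eq_swap]; exact h.step e d c hc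

lemma GoodQ.mono {n : ℕ} {hist : List (Sym2 (Fin n))} {W : Finset (Sym2 (Fin n))}
    {A B : Finset (Fin n)} (h : GoodQ hist W A) (hAB : A ⊆ B) : GoodQ hist W B := by
  obtain ⟨a, b, q, h1, h2, h3, h4, h5⟩ := h
  exact ⟨a, b, q, h1, h2, h3, h4, fun x hx => hAB (h5 x hx)⟩

lemma win_of {n t : ℕ} (hn : 3 ≤ n) {hist : List (Sym2 (Fin n))} {W : Finset (Sym2 (Fin n))}
    {A : Finset (Fin n)} {x y : Fin n} {E : Finset (Sym2 (Fin n))} {e₀ : Sym2 (Fin n)}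
    (hP : PathIn x y Finset.univ E) (hE : E ⊆ hist.toFinset) (hxy : s(y, x) ∈ hist.toFinset)
    (hd : ∀ v, dW W v ≤ 9) (hh : hist.head? = some e₀) (he : e₀ ∈ E) (hQ : GoodQ hist W A) :
    WaiterWinsHist (Kedges n) 1 (HamWithProperties n) t hist W := by
  have hw : HamWithProperties n hist W := by
    obtain ⟨p, hp, hpe⟩ := hP.close hn
    obtain ⟨a, b, q, h1, h2, h3, h4, h5⟩ := hQ
    refine ⟨y, p, hp, ?_, ?_, ⟨e₀, hh, (hpe _).2 (Or.inr he)⟩, a, b, q, h1, h2, h3, h4⟩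
    · intro e h
      rcases (hpe e).1 h with rfl | h
      · exact hxy
      · exact hE h
    · intro v
      have := hd v
      unfold dW at this
      omega
  cases t with
  | zero => exact hw
  | succ t => exact Or.inl hw

lemma insertWin {n t : ℕ} (hn : 3 ≤ n) {hist : List (Sym2 (Fin n))} {W : Finset (Sym2 (Fin n))}
    {A A' : Finset (Fin n)} {r y z u v : Fin n} {E : Finset (Sym2 (Fin n))} {e₀ : Sym2 (Fin n)}
    (hS : SplitAt r y A' E u v) (hz : z ∉ A') (hu : insert z A' = Finset.univ)
    (hE : E ⊆ hist.toFinset) (h1 : s(r, y) ∈ hist.toFinset) (h2 : s(z, u) ∈ hist.toFinset)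
    (h3 : s(z, v) ∈ hist.toFinset)
    (hd : ∀ v, dW W v ≤ 9) (hh : hist.head? = some e₀) (he : e₀ ∈ E) (hne : e₀ ≠ s(u, v))
    (hQ : GoodQ hist W A) :
    WaiterWinsHist (Kedges n) 1 (HamWithProperties n) t hist W := by
  obtain ⟨A1, A2, E1, E2, p1, p2, hdis, hA, hE'⟩ := hS
  have P := p1.reverse.join p2.reverse hdis
  rw [hA] at P
  have P2 := P.cons hz
  rw [hu] at P2
  refine win_of hn P2 ?_ (by rw [Sym2.eq_swap]; exact h3) hd hh ?_ hQ
  · intro e h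
    simp only [Finset.mem_insert, Finset.mem_union] at h
    rcases h with rfl | rfl | h
    · rw [Sym2.eq_swap]; exact h2
    · exact h1
    · apply hE; rw [← hE']; simp only [Finset.mem_insert, Finset.mem_union]; tauto
  · rw [← hE'] at he
    simp only [Finset.mem_insert, Finset.mem_union] at he ⊢
    tauto

lemma rotWin {n t : ℕ} (hn : 3 ≤ n) {hist : List (Sym2 (Fin n))} {W : Finset (Sym2 (Fin n))}
    {A A' : Finset (Fin n)} {r y z u v : Fin n} {E : Finset (Sym2 (Fin n))} {e₀ : Sym2 (Fin n)}
    (hS : SplitAt r y A' E u v) (hz : z ∉ A') (hu : insert z A' = Finset.univ)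
    (hE : E ⊆ hist.toFinset) (h1 : s(r, v) ∈ hist.toFinset) (h2 : s(y, z) ∈ hist.toFinset)
    (h3 : s(z, u) ∈ hist.toFinset)
    (hd : ∀ v, dW W v ≤ 9) (hh : hist.head? = some e₀) (he : e₀ ∈ E) (hne : e₀ ≠ s(u, v))
    (hQ : GoodQ hist W A) :
    WaiterWinsHist (Kedges n) 1 (HamWithProperties n) t hist W := by
  obtain ⟨A1, A2, E1, E2, p1, p2, hdis, hA, hE'⟩ := hS
  have P := p1.reverse.join p2 hdis
  rw [hA] at P
  have P2 := P.reverse.cons hz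
  rw [hu] at P2
  refine win_of hn P2 ?_ (by rw [Sym2.eq_swap]; exact h3) hd hh ?_ hQ
  · intro e h
    simp only [Finset.mem_insert, Finset.mem_union] at h
    rcases h with rfl | rfl | h
    · exact h2
    · exact h1
    · apply hE; rw [← hE']; simp only [Finset.mem_insert, Finset.mem_union]; tauto
  · rw [← hE'] at he
    simp only [Finset.mem_insert, Finset.mem_union] at he ⊢
    tauto

lemma head_append {α : Type*} {l : List α} {a : α} (h : l.head? = some a) (b : α) :
    (l ++ [b]).head? = some a := by
  cases l with
  | nil => simp at h
  | cons c l => simpa using h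

lemma dW_le_step {n k : ℕ} {W : Finset (Sym2 (Fin n))} (h : ∀ v, dW W v ≤ k)
    (e : Sym2 (Fin n)) : ∀ v, dW (insert e W) v ≤ k + 1 := fun v =>
  (dW_insert_le W e v).trans (by have := h v; omega)

lemma ne_of_not_mem {n : ℕ} {c d u v : Fin n} (h1 : u ≠ c) (h2 : u ≠ d) : s(c, d) ≠ s(u, v) := by
  intro h
  rw [Sym2.eq_iff] at h
  rcases h with h | h
  · exact h1 h.1.symm
  · exact h2 h.2.symm

/-- last round, cycle plus pendant vertex -/
lemma fin_c1b {n : ℕ} (hn : 3 ≤ n) {hist : List (Sym2 (Fin n))} {W : Finset (Sym2 (Fin n))}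
    {A A' : Finset (Fin n)} {r y z u v w c d : Fin n} {E : Finset (Sym2 (Fin n))}
    (hS : SplitAt r y A' E u v) (hS' : SplitAt r y A' E v w)
    (hz : z ∉ A') (hu : insert z A' = Finset.univ)
    (huA : u ∈ A') (hwA : w ∈ A') (huw : u ≠ w)
    (hE : E ⊆ hist.toFinset) (h1 : s(r, y) ∈ hist.toFinset)
    (hzv : s(z, v) ∈ hist.toFinset)
    (f1 : s(z, u) ∉ hist.toFinset) (f2 : s(z, u) ∉ W)
    (f3 : s(z, w) ∉ hist.toFinset) (f4 : s(z, w) ∉ W)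
    (hd : ∀ v, dW W v ≤ 8) (hh : hist.head? = some s(c, d)) (he : s(c, d) ∈ E)
    (hvc : v ≠ c) (hvd : v ≠ d)
    (hQ : GoodQ hist W A) (hzA : z ∉ A) :
    WaiterWinsHist (Kedges n) 1 (HamWithProperties n) 1 hist W := by
  have hzu : z ≠ u := by rintro rfl; exact hz huA
  have hzw : z ≠ w := by rintro rfl; exact hz hwA
  refine waiter_step z u z w hzu hzw (by simp [huw, hzw]) f1 f2 f3 f4 ?_ ?_
  · refine insertWin hn (e₀ := s(c, d)) hS hz hu (hE.trans ?_) ?_ ?_ ?_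
      (dW_le_step hd _) (head_append hh _) he ?_ (hQ.step _ _ _ hzA)
    · intro e; simp; tauto
    · simp at h1 ⊢; tauto
    · simp
    · simp at hzv ⊢; tauto
    · rw [Sym2.eq_swap (a := u)]; exact ne_of_not_mem hvc hvd
  · refine insertWin hn (e₀ := s(c, d)) hS' hz hu (hE.trans ?_) ?_ ?_ ?_
      (dW_le_step hd _) (head_append hh _) he ?_ (hQ.step _ _ _ hzA)
    · intro e; simp; tauto
    · simp at h1 ⊢; tauto
    · simp at hzv ⊢; tauto
    · simp
    · exact ne_of_not_mem hvc hvd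

/-- last round, Hamilton path plus chord -/
lemma fin_c2b {n : ℕ} (hn : 3 ≤ n) {hist : List (Sym2 (Fin n))} {W : Finset (Sym2 (Fin n))}
    {A A' : Finset (Fin n)} {r y z u v c d : Fin n} {E : Finset (Sym2 (Fin n))}
    (hP : PathIn r y A' E) (hS : SplitAt r y A' E u v)
    (hz : z ∉ A') (hu : insert z A' = Finset.univ)
    (huA : u ∈ A') (hur : u ≠ r)
    (hE : E ⊆ hist.toFinset) (h1 : s(y, z) ∈ hist.toFinset)
    (hrv : s(r, v) ∈ hist.toFinset)
    (f1 : s(z, u) ∉ hist.toFinset) (f2 : s(z, u) ∉ W)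
    (f3 : s(z, r) ∉ hist.toFinset) (f4 : s(z, r) ∉ W)
    (hd : ∀ v, dW W v ≤ 8) (hh : hist.head? = some s(c, d)) (he : s(c, d) ∈ E)
    (hvc : v ≠ c) (hvd : v ≠ d)
    (hQ : GoodQ hist W A) (hzA : z ∉ A) :
    WaiterWinsHist (Kedges n) 1 (HamWithProperties n) 1 hist W := by
  have hzu : z ≠ u := by rintro rfl; exact hz huA
  have hzr : z ≠ r := by rintro rfl; exact hz hP.mem_left
  refine waiter_step z u z r hzu hzr (by simp [hur, hzr]) f1 f2 f3 f4 ?_ ?_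
  · refine rotWin hn (e₀ := s(c, d)) hS hz hu (hE.trans ?_) ?_ ?_ ?_
      (dW_le_step hd _) (head_append hh _) he ?_ (hQ.step _ _ _ hzA)
    · intro e; simp; tauto
    · simp at hrv ⊢; tauto
    · simp at h1 ⊢; tauto
    · simp
    · rw [Sym2.eq_swap (a := u)]; exact ne_of_not_mem hvc hvd
  · have P := hP.reverse.cons hz
    rw [hu] at P
    refine win_of hn (e₀ := s(c, d)) P ?_ ?_
      (dW_le_step hd _) (head_append hh _) (Finset.mem_insert_of_mem he) (hQ.step _ _ _ hzA)
    · intro e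
      have := @hE e
      rw [Finset.mem_insert]
      rintro (rfl | h)
      · simp at h1 ⊢; tauto
      · have := this h
        simp at this ⊢; tauto
    · rw [Sym2.eq_swap]; simp

lemma bad_card {n : ℕ} (W : Finset (Sym2 (Fin n))) (z r x c d y : Fin n) (hd : ∀ v, dW W v ≤ 7) :
    (Finset.univ.filter (fun u => s(z, u) ∈ W) ∪ Finset.univ.filter (fun u => s(r, u) ∈ W) ∪
      {x, c, d, y, r}).card ≤ 19 := by
  have h1 := (nbr_card_le W z).trans (hd z)
  have h2 := (nbr_card_le W r).trans (hd r)
  have h3 : ({x, c, d, y, r} : Finset (Fin n)).card ≤ 5 := Finset.card_le_five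
  refine (Finset.card_union_le _ _).trans ?_
  have := Finset.card_union_le (Finset.univ.filter (fun u => s(z, u) ∈ W))
    (Finset.univ.filter (fun u => s(r, u) ∈ W))
  omega

lemma two_triples {n : ℕ} (hn : 200 ≤ n) {W : Finset (Sym2 (Fin n))} {A' : Finset (Fin n)}
    {r y z x c d : Fin n} {E : Finset (Sym2 (Fin n))}
    (hP : PathIn r y A' E) (hu : insert z A' = Finset.univ) (hd : ∀ v, dW W v ≤ 7) :
    ∃ B : Finset (Fin n), (∀ u, u ∉ B → s(z, u) ∉ W ∧ s(r, u) ∉ W ∧ u ≠ x ∧ u ≠ c ∧ u ≠ d ∧ u ≠ y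
      ∧ u ≠ r) ∧
    (∃ u v w, u ∉ B ∧ v ∉ B ∧ w ∉ B ∧ u ≠ v ∧ v ≠ w ∧ u ≠ w ∧
      SplitAt r y A' E u v ∧ SplitAt r y A' E v w ∧ u ∈ A' ∧ v ∈ A' ∧ w ∈ A' ∧
      ∃ u' v' w', u' ∉ B ∧ v' ∉ B ∧ w' ∉ B ∧ u' ≠ v' ∧ v' ≠ w' ∧ u' ≠ w' ∧
      SplitAt r y A' E u' v' ∧ SplitAt r y A' E v' w' ∧ u' ∈ A' ∧ v' ∈ A' ∧ w' ∈ A' ∧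
      v ≠ v' ∧ v ≠ u' ∧ v ≠ w' ∧ v' ≠ u ∧ v' ≠ w) := by
  have hcard : n ≤ A'.card + 1 := by
    have := Finset.card_insert_le z A'
    rw [hu] at this
    simpa using this
  have hb := bad_card W z r x c d y hd
  generalize hB : (Finset.univ.filter (fun u => s(z, u) ∈ W) ∪ Finset.univ.filter (fun u => s(r, u) ∈ W) ∪
      {x, c, d, y, r}) = B at hb
  refine ⟨B, ?_, ?_⟩
  · intro u hu'
    rw [← hB] at hu'
    simp at hu'
    tauto
  · obtain ⟨u, v, w, h1, h2, h3, h4, h5, h6, h7, h8, h9, h10, h11⟩ := hP.triple B (by omega)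
    have hc2 : (B ∪ {u, v, w}).card ≤ 22 := by
      have := Finset.card_union_le B {u, v, w}
      have := Finset.card_le_three (a := u) (b := v) (c := w)
      omega
    obtain ⟨u', v', w', k1, k2, k3, k4, k5, k6, k7, k8, k9, k10, k11⟩ :=
      hP.triple (B ∪ {u, v, w}) (by omega)
    simp only [Finset.mem_union, Finset.mem_insert, Finset.mem_singleton, not_or] at k1 k2 k3
    refine ⟨u, v, w, h1, h2, h3, h4, h5, h6, h7, h8, h9, h10, h11, u', v', w', k1.1, k2.1, k3.1,
      k4, k5, k6, k7, k8, k9, k10, k11, ?_, ?_, ?_, ?_, ?_⟩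
    · exact fun h => k2.2.2.1 h.symm
    · exact fun h => k1.2.2.1 h.symm
    · exact fun h => k3.2.2.1 h.symm
    · exact k2.2.1
    · exact k2.2.2.2

lemma mem_app {α : Type*} [DecidableEq α] {l : List α} {a b : α} :
    a ∈ (l ++ [b]).toFinset ↔ a ∈ l.toFinset ∨ a = b := by simp; tauto

lemma fin_c1 {n : ℕ} (hn : 200 ≤ n) {hist : List (Sym2 (Fin n))} {W : Finset (Sym2 (Fin n))}
    {A A' : Finset (Fin n)} {r y z c d : Fin n} {E : Finset (Sym2 (Fin n))}
    (hP : PathIn r y A' E)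
    (hz : z ∉ A') (hu : insert z A' = Finset.univ)
    (hE : hist.toFinset = insert s(y, r) E)
    (hd : ∀ v, dW W v ≤ 7) (hh : hist.head? = some s(c, d)) (he : s(c, d) ∈ E)
    (hQ : GoodQ hist W A) (hzA : z ∉ A) :
    WaiterWinsHist (Kedges n) 1 (HamWithProperties n) 2 hist W := by
  obtain ⟨B, hB, u, v, w, h1, h2, h3, h4, h5, h6, h7, h8, h9, h10, h11,
    u', v', w', k1, k2, k3, k4, k5, k6, k7, k8, k9, k10, k11, m1, m2, m3, m4, m5⟩ :=
    two_triples (z := z) (x := z) (c := c) (d := d) hn hP hu hd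
  have hzn : ∀ a, s(z, a) ∉ hist.toFinset := by
    intro a ha
    rw [hE, Finset.mem_insert, Sym2.eq_iff] at ha
    rcases ha with (⟨rfl, _⟩ | ⟨rfl, _⟩) | ha
    · exact hz hP.mem_right
    · exact hz hP.mem_left
    · exact hz (hP.edge_mem ha).1
  have hEs : ∀ e, E ⊆ (hist ++ [e]).toFinset := by
    intro e f hf
    rw [mem_app, hE]; left; exact Finset.mem_insert_of_mem hf
  have hry : ∀ e, s(r, y) ∈ (hist ++ [e]).toFinset := by
    intro e
    rw [mem_app, hE, Sym2.eq_swap]; left; exact Finset.mem_insert_self _ _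
  have zne : ∀ a ∈ A', z ≠ a := by rintro a ha rfl; exact hz ha
  have zfree : ∀ a b, a ∈ A' → a ≠ b → s(z, a) ∉ (hist ++ [s(z, b)]).toFinset := by
    intro a b ha hab
    rw [mem_app]
    rintro (h | h)
    · exact hzn _ h
    · have := zne a ha
      simp at h; tauto
  have zfreeW : ∀ a b, a ∈ A' → a ∉ B → a ≠ b → s(z, a) ∉ insert s(z, b) W := by
    intro a b ha haB hab
    rw [Finset.mem_insert]
    rintro (h | h)
    · have := zne a ha
      simp at h; tauto
    · exact (hB a haB).1 h
  refine waiter_step z v z v' (zne _ h10) (zne _ k10) ?_ (hzn _) (hB v h2).1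
    (hzn _) (hB v' k2).1 ?_ ?_
  · have := zne _ k10
    simp; tauto
  · exact fin_c1b (by omega) h7 h8 hz hu h9 h11 h6 (hEs _) (hry _) (by simp)
      (zfree _ _ h9 h4) (zfreeW _ _ h9 h1 m4.symm) (zfree _ _ h11 h5.symm)
      (zfreeW _ _ h11 h3 m5.symm) (dW_le_step hd _) (head_append hh _) he
      (hB v h2).2.2.2.1 (hB v h2).2.2.2.2.1 (hQ.step _ _ _ hzA) hzA
  · exact fin_c1b (by omega) k7 k8 hz hu k9 k11 k6 (hEs _) (hry _) (by simp)
      (zfree _ _ k9 k4) (zfreeW _ _ k9 k1 m2.symm) (zfree _ _ k11 k5.symm)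
      (zfreeW _ _ k11 k3 m3.symm) (dW_le_step hd _) (head_append hh _) he
      (hB v' k2).2.2.2.1 (hB v' k2).2.2.2.2.1 (hQ.step _ _ _ hzA) hzA

lemma fin_c2 {n : ℕ} (hn : 200 ≤ n) {hist : List (Sym2 (Fin n))} {W : Finset (Sym2 (Fin n))}
    {A A' : Finset (Fin n)} {x r y z c d : Fin n} {E : Finset (Sym2 (Fin n))}
    (hP : PathIn r y A' E)
    (hz : z ∉ A') (hu : insert z A' = Finset.univ)
    (hE : hist.toFinset = insert s(y, z) E)
    (hr : ∀ v, s(r, v) ∈ E → v = x) (hry : r ≠ y) (hzr : s(z, r) ∉ W)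
    (hd : ∀ v, dW W v ≤ 7) (hh : hist.head? = some s(c, d)) (he : s(c, d) ∈ E)
    (hQ : GoodQ hist W A) (hzA : z ∉ A) (hrA : r ∉ A) :
    WaiterWinsHist (Kedges n) 1 (HamWithProperties n) 2 hist W := by
  obtain ⟨B, hB, u, v, w, h1, h2, h3, h4, h5, h6, h7, h8, h9, h10, h11,
    u', v', w', k1, k2, k3, k4, k5, k6, k7, k8, k9, k10, k11, m1, m2, m3, m4, m5⟩ :=
    two_triples (z := z) (x := x) (c := c) (d := d) hn hP hu hd
  have zne : ∀ a ∈ A', z ≠ a := by rintro a ha rfl; exact hz ha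
  have hzrne : z ≠ r := zne r hP.mem_left
  have hzyne : z ≠ y := zne y hP.mem_right
  have hzn : ∀ a, a ≠ y → s(z, a) ∉ hist.toFinset := by
    intro a hay ha
    rw [hE, Finset.mem_insert, Sym2.eq_iff] at ha
    rcases ha with (⟨h, _⟩ | ⟨_, h⟩) | ha
    · exact hzyne h
    · exact hay h
    · exact hz (hP.edge_mem ha).1
  have hrn : ∀ a, a ∈ A' → a ≠ x → s(r, a) ∉ hist.toFinset := by
    intro a haA hax ha
    rw [hE, Finset.mem_insert, Sym2.eq_iff] at ha
    rcases ha with (⟨h, _⟩ | ⟨h, _⟩) | ha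
    · exact hry h
    · exact hzrne h.symm
    · exact hax (hr _ ha)
  have hEs : ∀ e, E ⊆ (hist ++ [e]).toFinset := by
    intro e f hf
    rw [mem_app, hE]; left; exact Finset.mem_insert_of_mem hf
  have hyz : ∀ e, s(y, z) ∈ (hist ++ [e]).toFinset := by
    intro e
    rw [mem_app, hE]; left; exact Finset.mem_insert_self _ _
  have zfree : ∀ a b, a ≠ y → b ∈ A' → s(z, a) ∉ (hist ++ [s(r, b)]).toFinset := by
    intro a b ha hb
    rw [mem_app]
    rintro (h | h)
    · exact hzn _ ha h
    · exact ne_of_not_mem hzrne (zne b hb) h.symm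
  have zfreeW : ∀ a b, s(z, a) ∉ W → b ∈ A' → s(z, a) ∉ insert s(r, b) W := by
    intro a b ha hb
    rw [Finset.mem_insert]
    rintro (h | h)
    · exact ne_of_not_mem hzrne (zne b hb) h.symm
    · exact ha h
  refine waiter_step r v r v' (hB v h2).2.2.2.2.2.2.symm (hB v' k2).2.2.2.2.2.2.symm ?_
    (hrn _ h10 (hB v h2).2.2.1) (hB v h2).2.1
    (hrn _ k10 (hB v' k2).2.2.1) (hB v' k2).2.1 ?_ ?_
  · have := (hB v' k2).2.2.2.2.2.2
    rw [Ne, Sym2.eq_iff]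
    rintro (h | h)
    · exact m1 h.2
    · exact this h.1.symm
  · exact fin_c2b (by omega) hP h7 hz hu h9 (hB u h1).2.2.2.2.2.2 (hEs _) (hyz _) (by simp)
      (zfree _ _ (hB u h1).2.2.2.2.2.1 h10) (zfreeW _ _ (hB u h1).1 k10) (zfree _ _ hry h10)
      (zfreeW _ _ hzr k10) (dW_le_step hd _) (head_append hh _) he
      (hB v h2).2.2.2.1 (hB v h2).2.2.2.2.1 (hQ.step _ _ _ hrA) hzA
  · exact fin_c2b (by omega) hP k7 hz hu k9 (hB u' k1).2.2.2.2.2.2 (hEs _) (hyz _) (by simp)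
      (zfree _ _ (hB u' k1).2.2.2.2.2.1 k10) (zfreeW _ _ (hB u' k1).1 h10) (zfree _ _ hry k10)
      (zfreeW _ _ hzr h10) (dW_le_step hd _) (head_append hh _) he
      (hB v' k2).2.2.2.1 (hB v' k2).2.2.2.2.1 (hQ.step _ _ _ hrA) hzA

/-- three rounds left -/
lemma fin3 {n : ℕ} (hn : 200 ≤ n) {hist : List (Sym2 (Fin n))} {W : Finset (Sym2 (Fin n))}
    {A A' : Finset (Fin n)} {x r y z : Fin n}
    (hP : PathIn r y A' hist.toFinset)
    (hz : z ∉ A') (hu : insert z A' = Finset.univ)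
    (hr : ∀ v, s(r, v) ∈ hist.toFinset → v = x) (hry : r ≠ y) (hxy : x ≠ y)
    (hzr : s(z, r) ∉ W) (hyr : s(y, r) ∉ W) (hyz : s(y, z) ∉ W)
    (hd : ∀ v, dW W v ≤ 6) (hne : hist ≠ [])
    (hQ : GoodQ hist W A) (hzA : z ∉ A) (hrA : r ∉ A) :
    WaiterWinsHist (Kedges n) 1 (HamWithProperties n) 3 hist W := by
  obtain ⟨c, d, hcd⟩ : ∃ c d, hist.head? = some s(c, d) := by
    cases hist with
    | nil => exact absurd rfl hne
    | cons e l =>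
      induction e using Sym2.ind with
      | _ c d => exact ⟨c, d, rfl⟩
  have he : s(c, d) ∈ hist.toFinset := by
    rw [List.mem_toFinset]; exact List.mem_of_mem_head? (by rw [hcd]; rfl)
  have hzyne : z ≠ y := by rintro rfl; exact hz hP.mem_right
  have hzrne : z ≠ r := by rintro rfl; exact hz hP.mem_left
  refine waiter_step y r y z hry.symm hzyne.symm ?_ ?_ hyr ?_ hyz ?_ ?_
  · rw [Ne, Sym2.eq_iff]; tauto
  · intro h
    rw [Sym2.eq_swap] at h
    exact hxy (hr _ h).symm
  · intro h; exact hz (hP.edge_mem h).2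
  · refine fin_c1 hn hP hz hu ?_ (dW_le_step hd _) (head_append hcd _) he (hQ.step' _ _ _ hzA) hzA
    ext e; simp only [mem_app, Finset.mem_insert]; tauto
  · refine fin_c2 hn hP hz hu ?_ hr hry ?_ (dW_le_step hd _) (head_append hcd _) he
      (hQ.step' _ _ _ hrA) hzA hrA
    · ext e; simp only [mem_app, Finset.mem_insert]; tauto
    · rw [Finset.mem_insert, Sym2.eq_iff]
      rintro (h | h)
      · tauto
      · exact hzr h

structure S2 {n : ℕ} (hist : List (Sym2 (Fin n))) (W : Finset (Sym2 (Fin n))) (x y : Fin n)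
    (A : Finset (Fin n)) : Prop where
  hP : PathIn x y A hist.toFinset
  hxy : x ≠ y
  hne : hist ≠ []
  hQ : GoodQ hist W A
  hx : ∀ u, u ∉ A → s(x, u) ∉ W
  hy : ∀ u, u ∉ A → s(y, u) ∉ W
  hU : ∀ u v, u ∉ A → v ∉ A → s(u, v) ∉ W
  dx : dW W x ≤ 4
  dy : dW W y ≤ 3
  d5 : ∀ v, dW W v ≤ 5
  d1 : ∀ v, v ∉ A → dW W v ≤ 1

lemma hist_app {α : Type*} [DecidableEq α] (l : List α) (e : α) :
    (l ++ [e]).toFinset = insert e l.toFinset := by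
  ext a; rw [mem_app, Finset.mem_insert]; tauto

lemma dW_ins {n : ℕ} (W : Finset (Sym2 (Fin n))) (a b v : Fin n) :
    dW (insert s(a, b) W) v ≤ dW W v + (if v = a ∨ v = b then 1 else 0) := by
  split_ifs with h
  · exact dW_insert_le _ _ _
  · push Not at h
    rw [dW_insert_of_ne _ _ _ _ h.1 h.2]; simp

lemma S2.fin {n : ℕ} (hn : 200 ≤ n) {hist : List (Sym2 (Fin n))} {W : Finset (Sym2 (Fin n))}
    {x y : Fin n} {A : Finset (Fin n)} (h : S2 hist W x y A) {r z : Fin n} (hrz : r ≠ z)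
    (hr : r ∉ A) (hz : z ∉ A) (hu : insert z (insert r A) = Finset.univ) :
    WaiterWinsHist (Kedges n) 1 (HamWithProperties n) 3 (hist ++ [s(x, r)])
      (insert s(x, z) W) := by
  have hxA := h.hP.mem_left
  have hyA := h.hP.mem_right
  have hrx : r ≠ x := by rintro rfl; exact hr hxA
  have hry : r ≠ y := by rintro rfl; exact hr hyA
  have hzx : z ≠ x := by rintro rfl; exact hz hxA
  have hzy : z ≠ y := by rintro rfl; exact hz hyA
  have hxy := h.hxy
  refine fin3 hn (A := A) (x := x) (by rw [hist_app]; exact h.hP.cons hr) ?_ hu ?_ hry h.hxy ?_ ?_ ?_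
    (dW_le_step h.d5 _) (by simp) (h.hQ.step' _ _ _ hz) hz hr
  · rw [Finset.mem_insert]; rintro (e | e)
    · exact hrz e.symm
    · exact hz e
  · intro v hv
    rw [hist_app, Finset.mem_insert, Sym2.eq_iff] at hv
    rcases hv with (e | e) | e
    · exact absurd e.1 hrx
    · exact e.2
    · exact absurd (h.hP.edge_mem e).1 hr
  · rw [Finset.mem_insert, Sym2.eq_iff]
    rintro ((e | e) | e)
    · exact hzx e.1
    · exact hrx e.2
    · exact h.hU _ _ hz hr e
  · rw [Finset.mem_insert, Sym2.eq_iff]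
    rintro ((e | e) | e)
    · exact hrz e.2
    · exact hrx e.2
    · exact h.hy _ hr e
  · rw [Finset.mem_insert, Sym2.eq_iff]
    rintro ((e | e) | e)
    · exact hxy e.1.symm
    · exact hzx e.2
    · exact h.hy _ hz e

lemma S2.mac {n t : ℕ} {hist : List (Sym2 (Fin n))} {W : Finset (Sym2 (Fin n))}
    {x y : Fin n} {A : Finset (Fin n)} (h : S2 hist W x y A) {r z : Fin n} (hrz : r ≠ z)
    (hr : r ∉ A) (hz : z ∉ A)
    (ih : ∀ hist' W' x' y', S2 hist' W' x' y' (insert z (insert r A)) →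
      WaiterWinsHist (Kedges n) 1 (HamWithProperties n) t hist' W') :
    WaiterWinsHist (Kedges n) 1 (HamWithProperties n) (t + 1) (hist ++ [s(x, r)])
      (insert s(x, z) W) := by
  have hxA := h.hP.mem_left
  have hyA := h.hP.mem_right
  have hrx : r ≠ x := by rintro rfl; exact hr hxA
  have hry : r ≠ y := by rintro rfl; exact hr hyA
  have hzx : z ≠ x := by rintro rfl; exact hz hxA
  have hzy : z ≠ y := by rintro rfl; exact hz hyA
  have hxy := h.hxy
  have hzA' : z ∉ insert r A := by
    rw [Finset.mem_insert]; rintro (e | e)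
    · exact hrz e.symm
    · exact hz e
  have P1 : PathIn r y (insert r A) (hist ++ [s(x, r)]).toFinset := by
    rw [hist_app]; exact h.hP.cons hr
  have hsub : A ⊆ insert z (insert r A) := fun a ha => by simp [ha]
  have Q1 := (h.hQ.step' s(x, r) x z hz)
  have n1 : s(r, z) ∉ insert s(x, z) W := by
    rw [Finset.mem_insert, Sym2.eq_iff]
    rintro ((e | e) | e)
    · exact hrx e.1
    · exact hrz e.1
    · exact h.hU _ _ hr hz e
  have n2 : s(y, z) ∉ insert s(x, z) W := by
    rw [Finset.mem_insert, Sym2.eq_iff]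
    rintro ((e | e) | e)
    · exact hxy e.1.symm
    · exact hzy e.1.symm
    · exact h.hy _ hz e
  have hdx := h.dx
  have hdy := h.dy
  have hdr := h.d1 r hr
  have hdz := h.d1 z hz
  have hnz : ∀ a, s(a, z) ∉ (hist ++ [s(x, r)]).toFinset := fun a e => hzA' (P1.edge_mem e).2
  have outs : ∀ u, u ∉ insert z (insert r A) → u ≠ z ∧ u ≠ r ∧ u ∉ A ∧ u ≠ x ∧ u ≠ y := by
    intro u hu
    simp only [Finset.mem_insert, not_or] at hu
    refine ⟨hu.1, hu.2.1, hu.2.2, ?_, ?_⟩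
    · rintro rfl; exact hu.2.2 hxA
    · rintro rfl; exact hu.2.2 hyA
  have key : ∀ a, ∀ p q, q ≠ z → q ≠ x → q ≠ a → s(p, q) ∉ W →
      s(p, q) ∉ insert s(a, z) (insert s(x, z) W) := by
    intro a p q q1 q2 q3 hq
    simp only [Finset.mem_insert, Sym2.eq_iff]
    tauto
  have dd : ∀ a v, dW (insert s(a, z) (insert s(x, z) W)) v ≤ dW W v +
      (if v = x ∨ v = z then 1 else 0) + (if v = a ∨ v = z then 1 else 0) := by
    intro a v
    have := dW_ins W x z v
    have := dW_ins (insert s(x, z) W) a z v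
    omega
  refine waiter_step r z y z hrz hzy.symm ?_ (hnz _) n1 (hnz _) n2 ?_ ?_
  · rw [Ne, Sym2.eq_iff]; tauto
  · apply ih _ _ y z
    refine ⟨?_, hzy.symm, by simp, (Q1.step' _ _ _ hz).mono hsub, ?_, ?_, ?_, ?_, ?_, ?_, ?_⟩
    · rw [hist_app]; exact (P1.cons hzA').reverse
    · intro u hu
      obtain ⟨o1, o2, o3, o4, o5⟩ := outs u hu
      exact key _ _ _ o1 o4 o5 (h.hy _ o3)
    · intro u hu
      obtain ⟨o1, o2, o3, o4, o5⟩ := outs u hu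
      exact key _ _ _ o1 o4 o5 (h.hU _ _ hz o3)
    · intro u v hu hv
      obtain ⟨o1, o2, o3, o4, o5⟩ := outs v hv
      exact key _ _ _ o1 o4 o5 (h.hU _ _ (outs u hu).2.2.1 o3)
    · have := dd y y
      rw [if_neg (by tauto), if_pos (by tauto)] at this
      omega
    · have := dd y z
      rw [if_pos (by tauto), if_pos (by tauto)] at this
      omega
    · intro v
      have h1 := dd y v
      have h2 := h.d5 v
      by_cases e1 : v = z
      · subst e1; split_ifs at h1 <;> omega
      by_cases e2 : v = x
      · subst e2
        rw [if_pos (by tauto), if_neg (by tauto)] at h1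
        omega
      by_cases e3 : v = y
      · subst e3
        rw [if_neg (by tauto), if_pos (by tauto)] at h1
        omega
      rw [if_neg (by tauto), if_neg (by tauto)] at h1
      omega
    · intro v hv
      obtain ⟨o1, o2, o3, o4, o5⟩ := outs v hv
      have h1 := dd y v
      rw [if_neg (by tauto), if_neg (by tauto)] at h1
      have := h.d1 v o3
      omega
  · apply ih _ _ z r
    refine ⟨?_, hrz.symm, by simp, (Q1.step' _ _ _ hz).mono hsub, ?_, ?_, ?_, ?_, ?_, ?_, ?_⟩
    · rw [hist_app]; exact (P1.reverse.cons hzA')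
    · intro u hu
      obtain ⟨o1, o2, o3, o4, o5⟩ := outs u hu
      exact key _ _ _ o1 o4 o2 (h.hU _ _ hz o3)
    · intro u hu
      obtain ⟨o1, o2, o3, o4, o5⟩ := outs u hu
      exact key _ _ _ o1 o4 o2 (h.hU _ _ hr o3)
    · intro u v hu hv
      obtain ⟨o1, o2, o3, o4, o5⟩ := outs v hv
      exact key _ _ _ o1 o4 o2 (h.hU _ _ (outs u hu).2.2.1 o3)
    · have := dd r z
      rw [if_pos (by tauto), if_pos (by tauto)] at this
      omega
    · have := dd r r
      rw [if_neg (by tauto), if_pos (by tauto)] at this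
      omega
    · intro v
      have h1 := dd r v
      have h2 := h.d5 v
      by_cases e1 : v = z
      · subst e1; split_ifs at h1 <;> omega
      by_cases e2 : v = x
      · subst e2
        rw [if_pos (by tauto), if_neg (by tauto)] at h1
        omega
      by_cases e3 : v = r
      · subst e3
        rw [if_neg (by tauto), if_pos (by tauto)] at h1
        omega
      rw [if_neg (by tauto), if_neg (by tauto)] at h1
      omega
    · intro v hv
      obtain ⟨o1, o2, o3, o4, o5⟩ := outs v hv
      have h1 := dd r v
      rw [if_neg (by tauto), if_neg (by tauto)] at h1
      have := h.d1 v o3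
      omega

lemma S2.first {n t : ℕ} {hist : List (Sym2 (Fin n))} {W : Finset (Sym2 (Fin n))}
    {x y : Fin n} {A : Finset (Fin n)} (h : S2 hist W x y A) {r z : Fin n} (hrz : r ≠ z)
    (hr : r ∉ A) (hz : z ∉ A)
    (w1 : WaiterWinsHist (Kedges n) 1 (HamWithProperties n) t (hist ++ [s(x, r)])
      (insert s(x, z) W))
    (w2 : WaiterWinsHist (Kedges n) 1 (HamWithProperties n) t (hist ++ [s(x, z)])
      (insert s(x, r) W)) :
    WaiterWinsHist (Kedges n) 1 (HamWithProperties n) (t + 1) hist W := by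
  have hxA := h.hP.mem_left
  have hrx : x ≠ r := by rintro rfl; exact hr hxA
  have hzx : x ≠ z := by rintro rfl; exact hz hxA
  refine waiter_step x r x z hrx hzx ?_ (fun e => hr (h.hP.edge_mem e).2) (h.hx _ hr)
    (fun e => hz (h.hP.edge_mem e).2) (h.hx _ hz) w1 w2
  rw [Ne, Sym2.eq_iff]; tauto

lemma phase2 {n : ℕ} (hn : 200 ≤ n) (k : ℕ) : ∀ (hist : List (Sym2 (Fin n)))
    (W : Finset (Sym2 (Fin n))) (x y : Fin n) (A : Finset (Fin n)), S2 hist W x y A →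
    A.card + (2 * k + 2) = n →
    WaiterWinsHist (Kedges n) 1 (HamWithProperties n) (2 * k + 4) hist W := by
  induction k with
  | zero =>
    intro hist W x y A h hA
    have hc : Aᶜ.card = 2 := by rw [Finset.card_compl]; simp; omega
    obtain ⟨r, z, hrz, he⟩ := Finset.card_eq_two.1 hc
    have hr : r ∉ A := by rw [← Finset.mem_compl, he]; simp
    have hz : z ∉ A := by rw [← Finset.mem_compl, he]; simp
    have hu : ∀ v, v = z ∨ v = r ∨ v ∈ A := by
      intro v
      by_cases hv : v ∈ A
      · tauto
      · rw [← Finset.mem_compl, he] at hv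
        simp at hv; tauto
    refine h.first hrz hr hz (h.fin hn hrz hr hz ?_) (h.fin hn hrz.symm hz hr ?_)
    · ext v; simp; exact hu v
    · ext v; simp; have := hu v; tauto
  | succ k ih =>
    intro hist W x y A h hA
    have hc : 1 < Aᶜ.card := by rw [Finset.card_compl]; simp; omega
    obtain ⟨r, hr, z, hz, hrz⟩ := Finset.one_lt_card.1 hc
    rw [Finset.mem_compl] at hr hz
    have c1 : (insert z (insert r A)).card = A.card + 2 := by
      rw [Finset.card_insert_of_notMem, Finset.card_insert_of_notMem hr]
      simp; exact ⟨hrz.symm, hz⟩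
    refine h.first (t := 2 * k + 4 + 1) hrz hr hz
      (h.mac hrz hr hz ?_) (h.mac hrz.symm hz hr ?_)
    · intro hist' W' x' y' h'
      exact ih _ _ _ _ _ h' (by omega)
    · intro hist' W' x' y' h'
      rw [Finset.insert_comm] at h'
      exact ih _ _ _ _ _ h' (by omega)

structure S1 {n : ℕ} (hist : List (Sym2 (Fin n))) (W : Finset (Sym2 (Fin n))) (x y : Fin n)
    (A F : Finset (Fin n)) : Prop where
  hP : PathIn x y A hist.toFinset
  hF : ∀ v ∈ F, v ∉ A ∧ dW W v = 0
  hA : ∀ u v, u ∈ A → v ∈ A → s(u, v) ∉ W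
  hU : ∀ u v, u ∉ A → v ∉ A → s(u, v) ∉ W
  d2 : ∀ v, dW W v ≤ 2
  d1 : ∀ v, v ∉ A → dW W v ≤ 1

lemma S1.reverse {n : ℕ} {hist : List (Sym2 (Fin n))} {W : Finset (Sym2 (Fin n))} {x y : Fin n}
    {A F : Finset (Fin n)} (h : S1 hist W x y A F) : S1 hist W y x A F :=
  ⟨h.hP.reverse, h.hF, h.hA, h.hU, h.d2, h.d1⟩

lemma S1.step {n : ℕ} {hist : List (Sym2 (Fin n))} {W : Finset (Sym2 (Fin n))} {x y : Fin n}
    {A F : Finset (Fin n)} (h : S1 hist W x y A F) (hx : dW W x ≤ 1) {r z : Fin n} (hrz : r ≠ z)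
    (hr : r ∈ F) (hz : z ∈ F) :
    S1 (hist ++ [s(x, r)]) (insert s(x, z) W) r y (insert r A) (F \ {r, z}) := by
  have hxA := h.hP.mem_left
  obtain ⟨hrA, hr0⟩ := h.hF r hr
  obtain ⟨hzA, hz0⟩ := h.hF z hz
  have hrx : r ≠ x := by rintro rfl; exact hrA hxA
  have hzx : z ≠ x := by rintro rfl; exact hzA hxA
  refine ⟨by rw [hist_app]; exact h.hP.cons hrA, ?_, ?_, ?_, ?_, ?_⟩
  · intro v hv
    simp only [Finset.mem_sdiff, Finset.mem_insert, Finset.mem_singleton, not_or] at hv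
    obtain ⟨a, b⟩ := h.hF v hv.1
    refine ⟨by simp; tauto, ?_⟩
    rw [dW_insert_of_ne _ _ _ _ _ hv.2.2]
    · exact b
    · rintro rfl; exact a hxA
  · intro u v hu hv
    have key : ∀ u, u ∈ insert r A → u ≠ z := by
      rintro u hu rfl
      rw [Finset.mem_insert] at hu
      rcases hu with e | e
      · exact hrz e.symm
      · exact hzA e
    rw [Finset.mem_insert, Sym2.eq_iff]
    rintro ((e | e) | e)
    · exact key v hv e.2
    · exact key u hu e.1
    · rw [Finset.mem_insert] at hu hv
      rcases hu with rfl | hu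
      · exact dW_zero hr0 _ e
      rcases hv with rfl | hv
      · rw [Sym2.eq_swap] at e; exact dW_zero hr0 _ e
      exact h.hA _ _ hu hv e
  · intro u v hu hv
    rw [Finset.mem_insert, not_or] at hu hv
    rw [Finset.mem_insert, Sym2.eq_iff]
    rintro ((e | e) | e)
    · exact hu.2 (e.1 ▸ hxA)
    · exact hv.2 (e.2 ▸ hxA)
    · exact h.hU _ _ hu.2 hv.2 e
  · intro v
    have h1 := dW_ins W x z v
    have h2 := h.d2 v
    split_ifs at h1 with e
    · rcases e with rfl | rfl <;> omega
    · omega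
  · intro v hv
    rw [Finset.mem_insert, not_or] at hv
    have h1 := dW_ins W x z v
    have h2 := h.d1 v hv.2
    split_ifs at h1 with e
    · rcases e with rfl | rfl
      · exact absurd hxA hv.2
      · omega
    · omega

lemma S1.play {n t : ℕ} {hist : List (Sym2 (Fin n))} {W : Finset (Sym2 (Fin n))} {x y : Fin n}
    {A F : Finset (Fin n)} (h : S1 hist W x y A F) (hx : dW W x ≤ 1) (hF : 2 ≤ F.card)
    (ih : ∀ hist' W' r A' F', S1 hist' W' r y A' F' → hist' ≠ [] → r ≠ y → dW W' r = 0 →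
      (∀ v ∈ A, v ≠ x → dW W' v = dW W v) → dW W' x ≤ dW W x + 1 → A'.card = A.card + 1 →
      F.card ≤ F'.card + 2 →
      WaiterWinsHist (Kedges n) 1 (HamWithProperties n) t hist' W') :
    WaiterWinsHist (Kedges n) 1 (HamWithProperties n) (t + 1) hist W := by
  obtain ⟨r, hr, z, hz, hrz⟩ := Finset.one_lt_card.1 (show 1 < F.card by omega)
  have hxA := h.hP.mem_left
  have hyA := h.hP.mem_right
  have gen : ∀ r z, r ∈ F → z ∈ F → r ≠ z →
      WaiterWinsHist (Kedges n) 1 (HamWithProperties n) t (hist ++ [s(x, r)])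
        (insert s(x, z) W) := by
    intro r z hr hz hrz
    obtain ⟨hrA, hr0⟩ := h.hF r hr
    obtain ⟨hzA, hz0⟩ := h.hF z hz
    refine ih _ _ _ _ _ (h.step hx hrz hr hz) (by simp) ?_ ?_ ?_ (dW_insert_le _ _ _)
      (Finset.card_insert_of_notMem hrA) ?_
    · rintro rfl; exact hrA hyA
    · rw [dW_insert_of_ne _ _ _ _ _ hrz]
      · exact hr0
      · rintro rfl; exact hrA hxA
    · intro v hv hvx
      apply dW_insert_of_ne _ _ _ _ hvx
      rintro rfl; exact hzA hv
    · have h1 := Finset.le_card_sdiff {r, z} F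
      have h2 := Finset.card_pair hrz
      omega
  obtain ⟨hrA, hr0⟩ := h.hF r hr
  obtain ⟨hzA, hz0⟩ := h.hF z hz
  refine waiter_step x r x z ?_ ?_ ?_ (fun e => hrA (h.hP.edge_mem e).2) ?_
    (fun e => hzA (h.hP.edge_mem e).2) ?_ (gen r z hr hz hrz) (gen z r hz hr hrz.symm)
  · rintro rfl; exact hrA hxA
  · rintro rfl; exact hzA hxA
  · rw [Ne, Sym2.eq_iff]
    rintro (e | e)
    · exact hrz e.2
    · exact hrz (e.2.trans e.1)
  · rw [Sym2.eq_swap]; exact dW_zero hr0 _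
  · rw [Sym2.eq_swap]; exact dW_zero hz0 _

lemma S1.goodQ {n : ℕ} {hist : List (Sym2 (Fin n))} {W : Finset (Sym2 (Fin n))} {x y : Fin n}
    {A F : Finset (Fin n)} (h : S1 hist W x y A F) (hA : n / 5 + 1 ≤ A.card) :
    GoodQ hist W A := by
  obtain ⟨p, h1, h2, h3⟩ := h.hP
  have hAc : A.card = p.length + 1 := by
    rw [← SimpleGraph.Walk.length_support, ← List.toFinset_card_of_nodup h1.support_nodup]
    congr 1
    ext v
    simp [h2]
  have hs : ∀ v ∈ (p.take (n / 5)).support, v ∈ A := fun v hv =>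
    (h2 v).1 ((p.isSubwalk_take _).support_subset hv)
  refine ⟨_, _, p.take (n / 5), h1.take _, ?_, ?_, ?_, hs⟩
  · rw [SimpleGraph.Walk.take_length]; omega
  · intro e he
    exact (h3 e).1 ((p.isSubwalk_take _).edges_subset he)
  · intro a b ha hb
    exact h.hA _ _ (hs _ ha) (hs _ hb)

lemma phase1 {n : ℕ} (hn : 200 ≤ n) (k K : ℕ) (hK : n / 5 + 1 ≤ K) (hk : K + (2 * k + 2) = n)
    (j : ℕ) : ∀ (hist : List (Sym2 (Fin n)))
    (W : Finset (Sym2 (Fin n))) (x y : Fin n) (A F : Finset (Fin n)), S1 hist W x y A F →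
    dW W x = 0 → dW W y ≤ 1 → 2 * j + 2 ≤ F.card → (x ≠ y ∨ 1 ≤ j) → A.card + j + 1 = K →
    WaiterWinsHist (Kedges n) 1 (HamWithProperties n) (2 * k + 4 + j + 1) hist W := by
  induction j with
  | zero =>
    intro hist W x y A F h hx hy hF hxy hA
    have hxy : x ≠ y := by rcases hxy with h | h; exact h; omega
    refine h.reverse.play (t := 2 * k + 4) hy (by omega) ?_
    intro hist' W' r A' F' h' hne hrx hr0 hv _ hcard _
    have hx0 : dW W' x = 0 := by rw [hv x h.hP.mem_left hxy]; exact hx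
    refine phase2 hn k hist' W' r x A' ⟨h'.hP, hrx, hne, h'.goodQ (by omega), ?_, ?_, h'.hU,
      by omega, by omega, ?_, h'.d1⟩ (by omega)
    · intro u _; exact dW_zero hr0 u
    · intro u _; exact dW_zero hx0 u
    · intro v; have := h'.d2 v; omega
  | succ j ih =>
    intro hist W x y A F h hx hy hF hxy hA
    refine h.play (t := 2 * k + 4 + j + 1) (by omega) (by omega) ?_
    intro hist' W' r A' F' h' hne hrx hr0 hv hx' hcard hF'
    refine ih hist' W' r y A' F' h' hr0 ?_ (by omega) (Or.inl hrx) (by omega)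
    by_cases e : y = x
    · subst e; omega
    · rw [hv y h.hP.mem_right e]; exact hy

lemma phase0 {n : ℕ} (hn : 200 ≤ n) (K : ℕ) (hK : n / 5 + 1 ≤ K) (hK' : K ≤ n / 5 + 2)
    (hp : K % 2 = n % 2) :
    WaiterWinsHist (Kedges n) 1 (HamWithProperties n) (n + 1) [] ∅ := by
  obtain ⟨k, hk⟩ : ∃ k, K + (2 * k + 2) = n := ⟨(n - K) / 2 - 1, by omega⟩
  have h0 : 0 < n := by omega
  have d0 : ∀ v : Fin n, dW ∅ v = 0 := by intro v; simp [dW]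
  have := phase1 hn k K hK hk (K - 2) [] ∅ ⟨0, h0⟩ ⟨0, h0⟩ {⟨0, h0⟩} {⟨0, h0⟩}ᶜ
    ⟨PathIn.nil _, fun v hv => ⟨by simpa using hv, d0 v⟩, by simp, by simp, by simp [d0],
      by simp [d0]⟩ (d0 _) (by simp [d0]) (by rw [Finset.card_compl]; simp; omega)
    (Or.inr (by omega)) (by simp; omega)
  have e : 2 * k + 4 + (K - 2) + 1 = n + 1 := by omega
  rwa [e] at this

/-- For every large enough `n`, in the unbiased Waiter-Client game on the edge set of `K_n`,
Waiter can force, within `n+1` rounds, Client's graph to contain a Hamilton cycle satisfying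
the additional properties (1)–(3) above at the moment it is completed. -/
theorem WC_hamiltonicity_with_properties :
    ∃ n₀ : ℕ, ∀ n : ℕ, n₀ ≤ n →
      WaiterWinsHist (Kedges n) 1 (HamWithProperties n) (n + 1) [] ∅ := by
  refine ⟨200, fun n hn => ?_⟩
  by_cases h : (n / 5 + 1) % 2 = n % 2
  · exact phase0 hn (n / 5 + 1) le_rfl (by omega) h
  · exact phase0 hn (n / 5 + 2) (by omega) le_rfl (by omega)
end
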